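/- There exists an absolute constant c > 0 and an absolute constant C > 0 such that for all sufficiently large integers N the following holds: if A is a subset of {1, ..., N} containing no solutions to a - b = n^2 with a, b in A and n a positive integer, then |A| ≤ C · N / (log N)^{c · log log log N}. -/

import Mathlib

/-- `A` has no non-zero square differences: no `a, b ∈ A` and `n ≥ 1` with `a - b = n ^ 2`. -/
def NoSquareDiff (A : Finset ℕ) : Prop :=
  ∀ a ∈ A, ∀ b ∈ A, ∀ n : ℕ, 0 < n → a ≠ b + n ^ 2

/-!
Let `A` have density `α` in an interval of length `N` and no square differences. As the squares up
to `N` have no solution with two elements of `A`, the Fourier transform of the balanced function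
of `A`, weighted by the exponential sum over squares, has large mass in `L²`; by Weyl's
inequality this mass lies on the major arcs around rationals `a / q` with `q` at most a power of
`1 / α`. If `A` has no increased density on progressions of difference `q ^ 2`, the `L²` mass of
the major arcs of each single denominator `q` is small. The gain comes from the moments of order
`2m`, following Bloom and Maynard: they only see tuples of rationals with
`a₁ / q₁ + ⋯ - a₂ₘ / q₂ₘ` an integer, so that each denominator divides the least common multiple
of the others, and this leaves few tuples of denominators. Hence `α` is at most the `m`-th power of
a small quantity, or the density of `A` increases by a factor `1 + ν` on some progression of
difference `q ^ 2`, which rescales to a set without square differences again. Iterating with `m`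
of order `log log log N` and `ν = (log N) ^ (-1 / 2)` gives the bound.
-/

open Finset ComplexConjugate

/-! ### Characters and Parseval identities -/

/-- The complex-valued additive character `x ↦ exp (2πix)` of `ℝ`. -/
noncomputable def expi (x : ℝ) : ℂ := Real.fourierChar x

theorem expi_eq_exp (x : ℝ) : expi x = Complex.exp ((2 * Real.pi * x : ℝ) * Complex.I) :=
  Real.fourierChar_apply x

theorem norm_expi (x : ℝ) : ‖expi x‖ = 1 := Circle.norm_coe _

theorem expi_zero : expi 0 = 1 := by simp [expi]

theorem expi_add (x y : ℝ) : expi (x + y) = expi x * expi y := by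
  simp [expi, AddChar.map_add_eq_mul]

theorem expi_neg (x : ℝ) : expi (-x) = conj (expi x) := by
  simp [expi, AddChar.map_neg_eq_inv]

theorem expi_nat_mul (n : ℕ) (x : ℝ) : expi (n * x) = expi x ^ n := by
  simp [expi, ← nsmul_eq_mul, AddChar.map_nsmul_eq_pow]

theorem expi_sum {ι : Type*} (s : Finset ι) (f : ι → ℝ) :
    expi (∑ i ∈ s, f i) = ∏ i ∈ s, expi (f i) := by
  classical
  induction s using Finset.induction_on with
  | empty => simp [expi_zero]
  | insert a s ha ih => rw [sum_insert ha, prod_insert ha, expi_add, ih]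

theorem expi_eq_one_iff (x : ℝ) : expi x = 1 ↔ ∃ n : ℤ, x = n := by
  rw [expi_eq_exp, Complex.exp_eq_one_iff]
  refine exists_congr fun n => ?_
  have hfactor : ((2 * Real.pi * x : ℝ) : ℂ) * Complex.I = x * (2 * Real.pi * Complex.I) := by
    push_cast
    ring
  rw [hfactor, mul_left_inj' Complex.two_pi_I_ne_zero]
  norm_cast

theorem expi_intCast (n : ℤ) : expi n = 1 := (expi_eq_one_iff n).2 ⟨n, rfl⟩

section Parseval

variable {κ : Type*} (K : Finset κ)

theorem sum_expi_int_mul_div {M : ℕ} (hM : 0 < M) (k : ℤ) :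
    ∑ x ∈ range M, expi (k * x / M) = if (M : ℤ) ∣ k then (M : ℂ) else 0 := by
  have hpow (x : ℕ) : expi (k * x / M) = expi (k / M) ^ x := by
    rw [← expi_nat_mul, mul_div_right_comm, mul_comm]
  have hone : expi (k / M) = 1 ↔ (M : ℤ) ∣ k := by
    refine (expi_eq_one_iff _).trans (exists_congr fun n => ?_)
    rw [div_eq_iff (by positivity), mul_comm]
    norm_cast
  simp_rw [hpow]
  split_ifs with hdvd
  · simp [hone.2 hdvd]
  · have hend : expi (k / M) ^ M = 1 := by
      rw [← expi_nat_mul, mul_div_cancel₀ _ (by positivity), expi_intCast]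
    rw [geom_sum_eq (mt hone.1 hdvd), hend, sub_self, zero_div]

theorem sum_norm_sq_eq_of_orthogonal {X : Type*} (S : Finset X) (χ : κ → X → ℂ) (V : ℝ)
    (hnorm : ∀ k ∈ K, ∑ x ∈ S, ‖χ k x‖ ^ 2 = V)
    (horth : (K : Set κ).Pairwise fun k l => ∑ x ∈ S, χ k x * conj (χ l x) = 0) (c : κ → ℂ) :
    ∑ x ∈ S, ‖∑ k ∈ K, c k * χ k x‖ ^ 2 = V * ∑ k ∈ K, ‖c k‖ ^ 2 := by
  have hexpand (x : X) : (‖∑ k ∈ K, c k * χ k x‖ : ℂ) ^ 2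
      = ∑ k ∈ K, ∑ l ∈ K, c k * conj (c l) * (χ k x * conj (χ l x)) := by
    rw [← Complex.mul_conj', map_sum, sum_mul_sum]
    refine sum_congr rfl fun k _ => sum_congr rfl fun l _ => ?_
    rw [map_mul]
    ring
  suffices h : ∑ x ∈ S, (‖∑ k ∈ K, c k * χ k x‖ : ℂ) ^ 2 = V * ∑ k ∈ K, (‖c k‖ : ℂ) ^ 2 by
    exact_mod_cast h
  simp_rw [hexpand]
  rw [sum_comm, mul_sum]
  refine sum_congr rfl fun k hk => ?_
  rw [sum_comm]
  simp_rw [← mul_sum]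
  rw [sum_eq_single_of_mem k hk fun l hl hlk => by rw [horth hk hl hlk.symm, mul_zero]]
  simp_rw [Complex.mul_conj', ← hnorm k hk]
  push_cast
  ring

theorem sum_norm_sq_fourier {M : ℕ} (hM : 0 < M) (φ : κ → ℤ)
    (hφ : ∀ k ∈ K, ∀ l ∈ K, (M : ℤ) ∣ φ k - φ l → k = l) (c : κ → ℂ) :
    ∑ x ∈ range M, ‖∑ k ∈ K, c k * expi (φ k * x / M)‖ ^ 2 = M * ∑ k ∈ K, ‖c k‖ ^ 2 := by
  refine sum_norm_sq_eq_of_orthogonal K (range M) (fun k x => expi (φ k * x / M)) M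
    (by simp [norm_expi]) (fun k hk l hl hkl => ?_) c
  have hmul (x : ℕ) : expi (φ k * x / M) * conj (expi (φ l * x / M))
      = expi ((φ k - φ l : ℤ) * x / M) := by
    rw [← expi_neg, ← expi_add]
    push_cast
    ring_nf
  simp_rw [hmul]
  rw [sum_expi_int_mul_div hM, if_neg (mt (hφ k hk l hl) hkl)]

theorem sum_norm_sq_fourier_prod {q T : ℕ} (hq : 0 < q) (hT : 0 < T) (a j : κ → ℤ)
    (hinj : ∀ k ∈ K, ∀ l ∈ K, (q : ℤ) ∣ a k - a l → (T : ℤ) ∣ j k - j l → k = l) (c : κ → ℂ) :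
    ∑ t ∈ range T, ∑ x ∈ range q, ‖∑ k ∈ K, c k * (expi (a k * x / q) * expi (j k * t / T))‖ ^ 2
      = q * T * ∑ k ∈ K, ‖c k‖ ^ 2 := by
  rw [← sum_product']
  refine sum_norm_sq_eq_of_orthogonal K (range T ×ˢ range q)
    (fun k x => expi (a k * x.2 / q) * expi (j k * x.1 / T)) (q * T)
    (by simp [norm_expi, mul_comm]) (fun k hk l hl hkl => ?_) c
  have hmul (t x : ℕ) : expi (a k * x / q) * expi (j k * t / T) *
        conj (expi (a l * x / q) * expi (j l * t / T))
      = expi ((j k - j l : ℤ) * t / T) * expi ((a k - a l : ℤ) * x / q) := by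
    simp only [← expi_neg, ← expi_add]
    push_cast
    ring_nf
  simp_rw [sum_product, hmul, ← mul_sum]
  rw [← sum_mul, sum_expi_int_mul_div hT, sum_expi_int_mul_div hq, ite_mul, zero_mul, mul_ite,
    mul_zero, ← ite_and, if_neg]
  exact fun h => hkl (hinj k hk l hl h.2 h.1)

end Parseval

/-! ### Products of periodic functions -/

section PeriodicProducts

theorem dvd_of_gcd_dvd_of_gcd_dvd {q a b d : ℕ} (ha : a ≠ 0) (hb : b ≠ 0)
    (h : q ∣ Nat.lcm a b) (hqa : Nat.gcd q a ∣ d) (hqb : Nat.gcd q b ∣ d) : q ∣ d := by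
  rw [Nat.dvd_iff_prime_pow_dvd_dvd]
  intro p k hp hk
  have hpow : p ^ k ∣ a ∨ p ^ k ∣ b := by
    have hlcm := hk.trans h
    rw [hp.pow_dvd_iff_le_factorization (Nat.lcm_ne_zero ha hb), Nat.factorization_lcm ha hb]
      at hlcm
    rw [hp.pow_dvd_iff_le_factorization ha, hp.pow_dvd_iff_le_factorization hb]
    simpa using hlcm
  rcases hpow with hpa | hpb
  · exact (Nat.dvd_gcd hk hpa).trans hqa
  · exact (Nat.dvd_gcd hk hpb).trans hqb

theorem dvd_lcm_gcd_of_dvd_lcm {q l M E : ℕ} (hl : l ≠ 0) (hE : E ≠ 0) (h : q ∣ Nat.lcm l E)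
    (hqM : q ∣ M) : q ∣ Nat.lcm (Nat.gcd l M) E :=
  dvd_of_gcd_dvd_of_gcd_dvd hl hE h
    ((Nat.dvd_gcd (Nat.gcd_dvd_right _ _) ((Nat.gcd_dvd_left _ _).trans hqM)).trans
      (Nat.dvd_lcm_left _ _))
    ((Nat.gcd_dvd_right _ _).trans (Nat.dvd_lcm_right _ _))

theorem lcm_eq_lcm_lcm_of_dvd {d q M : ℕ} (h : d ∣ Nat.lcm q M) :
    Nat.lcm q M = Nat.lcm (Nat.lcm d q) M := by
  rw [Nat.lcm_assoc, Nat.lcm_eq_right h]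

theorem modEq_of_modEq_gcd_lcm {d q M x x' y y' : ℕ} (hd : 0 < d) (hM : 0 < M)
    (hqd : q ∣ Nat.lcm d M) (hxy : x ≡ y [MOD d]) (hxy' : x' ≡ y' [MOD q])
    (hx : x ≡ x' [MOD Nat.gcd (Nat.lcm d q) M])
    (hy : y ≡ y' [MOD Nat.gcd (Nat.lcm d q) M]) : x ≡ y [MOD q] := by
  have hdvd : Nat.gcd q M ∣ Nat.gcd (Nat.lcm d q) M :=
    Nat.gcd_dvd_gcd_of_dvd_left _ (Nat.dvd_lcm_right d q)
  have hmodM : x ≡ y [MOD Nat.gcd q M] :=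
    (hx.of_dvd hdvd).trans ((hxy'.of_dvd (Nat.gcd_dvd_left q M)).trans (hy.of_dvd hdvd).symm)
  have hmodd : x ≡ y [MOD Nat.gcd q d] := hxy.of_dvd (Nat.gcd_dvd_right q d)
  rw [Nat.modEq_iff_dvd, Int.natCast_dvd] at *
  exact dvd_of_gcd_dvd_of_gcd_dvd hd.ne' hM.ne' hqd hmodd hmodM

theorem periodic_of_dvd {E : Type*} {f : ℕ → E} {d l : ℕ} (hf : Function.Periodic f d)
    (h : d ∣ l) : Function.Periodic f l := by
  obtain ⟨c, rfl⟩ := h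
  simpa [mul_comm] using hf.nat_mul c

theorem finset_lcm_pos {ι : Type*} {s : Finset ι} {q : ι → ℕ} (hq : ∀ i ∈ s, 0 < q i) :
    0 < s.lcm q :=
  Nat.pos_of_ne_zero (Finset.lcm_ne_zero_iff.2 fun i hi => (hq i hi).ne')

/-- The push-forward of `u : ℤ / l → ℝ` along the projection `ℤ / l → ℤ / e`, where functions on
`ℤ / l` are encoded as `l`-periodic functions on `ℕ`. -/
noncomputable def residueSum (u : ℕ → ℝ) (l e y : ℕ) : ℝ :=
  ∑ x ∈ range l with x ≡ y [MOD e], u x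

theorem periodic_residueSum (u : ℕ → ℝ) (l e : ℕ) : Function.Periodic (residueSum u l e) e := by
  intro y
  refine sum_congr (filter_congr fun x _ => ?_) fun _ _ => rfl
  rw [Nat.ModEq, Nat.add_mod_right, ← Nat.ModEq]

theorem sum_range_lcm_eq_sum_residueSum {l M : ℕ} (hl : 0 < l) (hM : 0 < M) {u v : ℕ → ℝ}
    (hu : Function.Periodic u l) (hv : Function.Periodic v M) :
    ∑ z ∈ range (Nat.lcm l M), u z * v z
      = ∑ y ∈ range M, residueSum u l (Nat.gcd l M) y * v y := by
  simp_rw [residueSum, sum_mul, sum_filter]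
  rw [← sum_product', ← sum_filter]
  refine sum_bij (fun z _ => (z % M, z % l)) ?_ ?_ ?_ ?_
  · intro z _
    simp only [mem_filter, mem_product, mem_range]
    exact ⟨⟨Nat.mod_lt _ hM, Nat.mod_lt _ hl⟩,
      ((Nat.mod_modEq z l).of_dvd (Nat.gcd_dvd_left l M)).trans
        ((Nat.mod_modEq z M).of_dvd (Nat.gcd_dvd_right l M)).symm⟩
  · intro z hz w hw h
    obtain ⟨hzM, hzl⟩ := Prod.mk.inj h
    exact (Nat.mod_lcm hzl hzM).eq_of_lt_of_lt (mem_range.1 hz) (mem_range.1 hw)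
  · rintro ⟨y, x⟩ hyx
    simp only [mem_filter, mem_product, mem_range] at hyx
    obtain ⟨⟨hy, hx⟩, hmod⟩ := hyx
    have hcrt := (Nat.chineseRemainder' hmod).2
    exact ⟨Nat.chineseRemainder' hmod,
      mem_range.2 (Nat.chineseRemainder'_lt_lcm hmod hl.ne' hM.ne'),
      Prod.ext (Eq.trans hcrt.2 (Nat.mod_eq_of_lt hy)) (Eq.trans hcrt.1 (Nat.mod_eq_of_lt hx))⟩
  · intro z _
    simp only [hu.map_mod_nat, hv.map_mod_nat]

theorem sum_residueSum_sq_le_sum_pairs (h f : ℕ → ℝ) (l : ℕ) {e : ℕ} (he : 0 < e) :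
    ∑ y ∈ range e, residueSum (fun x => h x * f x) l e y ^ 2
      ≤ ∑ p ∈ range l ×ˢ range l with p.2 ≡ p.1 [MOD e], h p.1 ^ 2 * f p.2 ^ 2 := by
  have hfiber {y x : ℕ} (hy : y ∈ range e) : x ≡ y [MOD e] ↔ x % e = y := by
    rw [Nat.ModEq, Nat.mod_eq_of_lt (mem_range.1 hy)]
  calc ∑ y ∈ range e, residueSum (fun x => h x * f x) l e y ^ 2
      ≤ ∑ y ∈ range e, ∑ x ∈ range l with x ≡ y [MOD e], ∑ x' ∈ range l with x' ≡ y [MOD e],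
          h x ^ 2 * f x' ^ 2 := by
        refine sum_le_sum fun y _ => ?_
        rw [← sum_mul_sum]
        exact sum_mul_sq_le_sq_mul_sq _ _ _
    _ = ∑ y ∈ range e, ∑ x ∈ range l with x % e = y, ∑ x' ∈ range l with x' ≡ x [MOD e],
          h x ^ 2 * f x' ^ 2 := by
        refine sum_congr rfl fun y hy => ?_
        refine sum_congr (filter_congr fun x _ => hfiber hy) fun x hx => ?_
        have hxy : x ≡ y [MOD e] := (hfiber hy).2 (mem_filter.1 hx).2
        exact sum_congr (filter_congr fun x' _ =>
          ⟨fun h => h.trans hxy.symm, fun h => h.trans hxy⟩) fun _ _ => rfl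
    _ = ∑ x ∈ range l, ∑ x' ∈ range l with x' ≡ x [MOD e], h x ^ 2 * f x' ^ 2 :=
        sum_fiberwise_of_maps_to (fun x _ => mem_range.2 (Nat.mod_lt x he)) _
    _ = ∑ p ∈ range l ×ˢ range l with p.2 ≡ p.1 [MOD e], h p.1 ^ 2 * f p.2 ^ 2 := by
        simp_rw [sum_filter, sum_product]

theorem injOn_mod_of_dvd_lcm {d q M : ℕ} (hd : 0 < d) (hq : 0 < q) (hM : 0 < M)
    (hdq : d ∣ Nat.lcm q M) (hqd : q ∣ Nat.lcm d M) :
    Set.InjOn (fun p : ℕ × ℕ => (p.1 % d, p.2 % q))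
      {p | p.1 < Nat.lcm d q ∧ p.2 < Nat.lcm d q ∧ p.2 ≡ p.1 [MOD Nat.gcd (Nat.lcm d q) M]} := by
  rintro ⟨x, x'⟩ ⟨hx, hx', hmod⟩ ⟨w, w'⟩ ⟨hw, hw', hmod'⟩ heq
  obtain ⟨hxd, hxq⟩ : x ≡ w [MOD d] ∧ x' ≡ w' [MOD q] := Prod.mk.inj heq
  have hxq' : x ≡ w [MOD q] := modEq_of_modEq_gcd_lcm hd hM hqd hxd hxq hmod.symm hmod'.symm
  have hxd' : x' ≡ w' [MOD d] := by
    rw [Nat.lcm_comm d q] at hmod hmod'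
    exact modEq_of_modEq_gcd_lcm hq hM hdq hxq hxd hmod hmod'
  exact Prod.ext ((Nat.mod_lcm hxd hxq').eq_of_lt_of_lt hx hw)
    ((Nat.mod_lcm hxd' hxq).eq_of_lt_of_lt hx' hw')

theorem sum_residueSum_sq_le {d q M : ℕ} (hd : 0 < d) (hq : 0 < q) (hM : 0 < M)
    (hdq : d ∣ Nat.lcm q M) (hqd : q ∣ Nat.lcm d M) {h f : ℕ → ℝ}
    (hh : Function.Periodic h d) (hf : Function.Periodic f q) :
    ∑ y ∈ range (Nat.gcd (Nat.lcm d q) M),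
        residueSum (fun x => h x * f x) (Nat.lcm d q) (Nat.gcd (Nat.lcm d q) M) y ^ 2
      ≤ (∑ x ∈ range d, h x ^ 2) * ∑ x ∈ range q, f x ^ 2 := by
  set l := Nat.lcm d q
  set e := Nat.gcd l M
  set P := {p ∈ range l ×ˢ range l | p.2 ≡ p.1 [MOD e]} with hP
  set π := fun p : ℕ × ℕ => (p.1 % d, p.2 % q) with hπ
  have hinj : Set.InjOn π P := (injOn_mod_of_dvd_lcm hd hq hM hdq hqd).mono fun p hp => by
    simpa [hP, and_assoc] using hp
  calc ∑ y ∈ range e, residueSum (fun x => h x * f x) l e y ^ 2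
      ≤ ∑ p ∈ P, h p.1 ^ 2 * f p.2 ^ 2 :=
        sum_residueSum_sq_le_sum_pairs h f l (Nat.gcd_pos_of_pos_right _ hM)
    _ = ∑ r ∈ P.image π, h r.1 ^ 2 * f r.2 ^ 2 := by
        rw [sum_image hinj]
        simp only [hπ, hh.map_mod_nat, hf.map_mod_nat]
    _ ≤ ∑ r ∈ range d ×ˢ range q, h r.1 ^ 2 * f r.2 ^ 2 := by
        refine sum_le_sum_of_subset_of_nonneg (image_subset_iff.2 fun p _ => ?_)
          fun _ _ _ => by positivity
        simp [hπ, Nat.mod_lt _ hd, Nat.mod_lt _ hq]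
    _ = (∑ x ∈ range d, h x ^ 2) * ∑ x ∈ range q, f x ^ 2 := by
        rw [sum_mul_sum, sum_product]

theorem sum_prod_le_prod_sqrt_sum_sq {ι τ : Type*} [Fintype ι] [Nontrivial ι]
    (S : Finset τ) {g : ι → τ → ℝ}
    (hg : ∀ i t, 0 ≤ g i t) : ∑ t ∈ S, ∏ i, g i t ≤ ∏ i, √(∑ t ∈ S, g i t ^ 2) := by
  classical
  obtain ⟨a, b, hab⟩ := exists_pair_ne ι
  have hb : b ∈ univ.erase a := mem_erase.2 ⟨hab.symm, mem_univ b⟩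
  have hsplit (u : ι → ℝ) : ∏ i, u i = u a * u b * ∏ i ∈ (univ.erase a).erase b, u i := by
    rw [← mul_prod_erase univ u (mem_univ a), ← mul_prod_erase _ u hb, mul_assoc]
  have hrest (t : τ) (ht : t ∈ S) : ∏ i ∈ (univ.erase a).erase b, g i t
      ≤ ∏ i ∈ (univ.erase a).erase b, √(∑ t ∈ S, g i t ^ 2) :=
    prod_le_prod (fun i _ => hg i t) fun i _ => Real.le_sqrt_of_sq_le
      (single_le_sum (f := fun t => g i t ^ 2) (fun _ _ => sq_nonneg _) ht)
  simp_rw [hsplit]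
  calc ∑ t ∈ S, g a t * g b t * ∏ i ∈ (univ.erase a).erase b, g i t
      ≤ ∑ t ∈ S, g a t * g b t * ∏ i ∈ (univ.erase a).erase b, √(∑ t ∈ S, g i t ^ 2) :=
        sum_le_sum fun t ht =>
          mul_le_mul_of_nonneg_left (hrest t ht) (mul_nonneg (hg a t) (hg b t))
    _ ≤ _ := by
        rw [← sum_mul]
        gcongr
        exact Real.sum_mul_le_sqrt_mul_sqrt _ _ _

variable {ι : Type*} [DecidableEq ι]

-- The factor `h` is what makes the induction work: it absorbs the factors already treated.
theorem sq_sum_mul_prod_le (s : Finset ι) (q : ι → ℕ) (f : ι → ℕ → ℝ) (hq : ∀ i ∈ s, 0 < q i)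
    (hf : ∀ i ∈ s, Function.Periodic (f i) (q i)) {d : ℕ} {h : ℕ → ℝ} (hd : 0 < d)
    (hh : Function.Periodic h d) (hdvd : d ∣ s.lcm q)
    (hadm : ∀ i ∈ s, q i ∣ Nat.lcm d ((s.erase i).lcm q)) :
    (∑ x ∈ range (s.lcm q), h x * ∏ i ∈ s, f i x) ^ 2
      ≤ (∑ x ∈ range d, h x ^ 2) * ∏ i ∈ s, ∑ x ∈ range (q i), f i x ^ 2 := by
  induction s using Finset.induction_on generalizing d h with
  | empty =>
    obtain rfl : d = 1 := by simpa using hdvd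
    simp
  | insert i s hi ih =>
    rw [forall_mem_insert] at hq hf hadm
    obtain ⟨hqi, hqs⟩ := hq
    obtain ⟨hfi, hfs⟩ := hf
    obtain ⟨hadmi, hadms⟩ := hadm
    rw [erase_insert hi] at hadmi
    have hM : 0 < s.lcm q := finset_lcm_pos hqs
    have hl : 0 < Nat.lcm d (q i) := Nat.lcm_pos hd hqi
    rw [lcm_insert] at hdvd ⊢
    set M := s.lcm q
    set l := Nat.lcm d (q i) with hldef
    set g := residueSum (fun x => h x * f i x) l (Nat.gcd l M)
    have hmerge : ∑ x ∈ range (Nat.lcm (q i) M), h x * ∏ j ∈ insert i s, f j x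
        = ∑ y ∈ range M, g y * ∏ j ∈ s, f j y := by
      simp_rw [lcm_eq_lcm_lcm_of_dvd hdvd, prod_insert hi, ← mul_assoc]
      refine sum_range_lcm_eq_sum_residueSum hl hM
        ((periodic_of_dvd hh (Nat.dvd_lcm_left _ _)).mul
          (periodic_of_dvd hfi (Nat.dvd_lcm_right _ _))) fun x => prod_congr rfl fun j hj => ?_
      exact periodic_of_dvd (hfs j hj) (Finset.dvd_lcm hj) x
    have hadm' : ∀ j ∈ s, q j ∣ Nat.lcm (Nat.gcd l M) ((s.erase j).lcm q) := by
      intro j hj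
      have hji : i ≠ j := fun hij => hi (hij ▸ hj)
      have hj' := hadms j hj
      rw [erase_insert_of_ne hji, lcm_insert] at hj'
      refine dvd_lcm_gcd_of_dvd_lcm hl.ne'
        (finset_lcm_pos fun k hk => hqs k (mem_of_mem_erase hk)).ne' ?_ (Finset.dvd_lcm hj)
      rwa [hldef, Nat.lcm_assoc]
    change (∑ x ∈ range (Nat.lcm (q i) M), _) ^ 2 ≤ _
    rw [hmerge, prod_insert hi, ← mul_assoc]
    refine (ih hqs hfs (Nat.gcd_pos_of_pos_left _ hl) (periodic_residueSum _ _ _)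
      (Nat.gcd_dvd_right _ _) hadm').trans ?_
    gcongr
    exact sum_residueSum_sq_le hd hqi hM hdvd hadmi hh hfi

variable [Fintype ι]

theorem sum_prod_le_prod_sqrt_of_dvd_lcm {q : ι → ℕ} (hq : ∀ i, 0 < q i)
    (hadm : ∀ i, q i ∣ (univ.erase i).lcm q) {f : ι → ℕ → ℝ}
    (hf : ∀ i, Function.Periodic (f i) (q i)) :
    ∑ x ∈ range (univ.lcm q), ∏ i, f i x ≤ ∏ i, √(∑ x ∈ range (q i), f i x ^ 2) := by
  have hsq := sq_sum_mul_prod_le univ q f (fun i _ => hq i) (fun i _ => hf i) one_pos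
    (h := fun _ => 1) (fun _ => rfl) (one_dvd _) (fun i _ => by simpa using hadm i)
  rw [← Real.sqrt_prod _ fun i _ => sum_nonneg fun _ _ => sq_nonneg _]
  exact Real.le_sqrt_of_sq_le (by simpa using hsq)

theorem sum_sum_prod_le_prod_sqrt [Nontrivial ι] {q : ι → ℕ} (hq : ∀ i, 0 < q i)
    (hadm : ∀ i, q i ∣ (univ.erase i).lcm q) {τ : Type*} (S : Finset τ) {F : ι → τ → ℕ → ℝ}
    (hF : ∀ i t, Function.Periodic (F i t) (q i)) :
    ∑ t ∈ S, ∑ x ∈ range (univ.lcm q), ∏ i, F i t x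
      ≤ ∏ i, √(∑ t ∈ S, ∑ x ∈ range (q i), F i t x ^ 2) := by
  calc ∑ t ∈ S, ∑ x ∈ range (univ.lcm q), ∏ i, F i t x
      ≤ ∑ t ∈ S, ∏ i, √(∑ x ∈ range (q i), F i t x ^ 2) :=
        sum_le_sum fun t _ => sum_prod_le_prod_sqrt_of_dvd_lcm hq hadm fun i => hF i t
    _ ≤ ∏ i, √(∑ t ∈ S, √(∑ x ∈ range (q i), F i t x ^ 2) ^ 2) :=
        sum_prod_le_prod_sqrt_sum_sq S fun _ _ => Real.sqrt_nonneg _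
    _ = _ := by simp_rw [Real.sq_sqrt (sum_nonneg fun _ _ => sq_nonneg _)]

end PeriodicProducts

/-! ### Weighted counts of solutions of linear congruences -/

/-- The weighted sum of the characters `(t, x) ↦ e(a k * x / q) e(j k * t / T)` of `ℤ/T × ℤ/q` over
`k ∈ K`; products of such sums over `k` detect the solutions of a pair of linear congruences. -/
noncomputable def weightedCharSum {κ : Type*} (K : Finset κ) (q T : ℕ) (a j : κ → ℤ) (w : κ → ℝ)
    (t x : ℕ) : ℂ :=
  ∑ k ∈ K, (w k : ℂ) * (expi (a k * x / q) * expi (j k * t / T))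

section WeightedCount

variable {κ : Type*} {T : ℕ}

theorem sum_norm_sq_weightedCharSum (K : Finset κ) {q : ℕ} (hq : 0 < q) (hT : 0 < T)
    (a j : κ → ℤ) (w : κ → ℝ)
    (hinj : ∀ k ∈ K, ∀ l ∈ K, (q : ℤ) ∣ a k - a l → (T : ℤ) ∣ j k - j l → k = l) :
    ∑ t ∈ range T, ∑ x ∈ range q, ‖weightedCharSum K q T a j w t x‖ ^ 2
      = q * T * ∑ k ∈ K, w k ^ 2 := by
  simpa [weightedCharSum] using sum_norm_sq_fourier_prod K hq hT a j hinj fun k => (w k : ℂ)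

theorem periodic_weightedCharSum (K : Finset κ) {q : ℕ} (hq : 0 < q) (a j : κ → ℤ) (w : κ → ℝ)
    (t : ℕ) : Function.Periodic (weightedCharSum K q T a j w t) q := by
  intro x
  refine sum_congr rfl fun k _ => ?_
  have hq0 : (q : ℝ) ≠ 0 := by positivity
  have hshift : (a k : ℝ) * (x + q : ℕ) / q = a k * x / q + a k := by
    push_cast
    field_simp
  rw [hshift, expi_add, expi_intCast, mul_one]

variable {ι : Type*} [Fintype ι] {q : ι → ℕ}

theorem sum_div_eq_sum_mul_div_lcm (hq : ∀ i, 0 < q i) (b : ι → ℤ) :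
    ∑ i, (b i : ℝ) / q i = (∑ i, b i * (univ.lcm q / q i : ℕ) : ℤ) / (univ.lcm q : ℕ) := by
  have hL : ((univ.lcm q : ℕ) : ℝ) ≠ 0 := by
    exact_mod_cast (finset_lcm_pos fun i _ => hq i).ne'
  rw [Int.cast_sum, sum_div]
  refine sum_congr rfl fun i _ => ?_
  have hq0 : (q i : ℝ) ≠ 0 := by exact_mod_cast (hq i).ne'
  rw [Int.cast_mul, Int.cast_natCast, Nat.cast_div (dvd_lcm (mem_univ i)) hq0]
  field_simp

theorem prod_weightedCharSum [DecidableEq ι] (hq : ∀ i, 0 < q i) (Γ : ι → Finset κ)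
    (a j : ι → κ → ℤ) (w : κ → ℝ) (s : ℤ) (t x : ℕ) :
    expi (-(s * t / T)) * ∏ i, weightedCharSum (Γ i) (q i) T (a i) (j i) w t x
      = ∑ p ∈ Fintype.piFinset Γ, (∏ i, (w (p i) : ℂ)) *
          (expi ((∑ i, j i (p i) - s : ℤ) * t / T) *
            expi ((∑ i, a i (p i) * (univ.lcm q / q i : ℕ) : ℤ) * x / (univ.lcm q : ℕ))) := by
  simp only [weightedCharSum]
  rw [prod_univ_sum, mul_sum]
  refine sum_congr rfl fun p _ => ?_
  have hj : -((s : ℝ) * t / T) + ∑ i, (j i (p i) : ℝ) * t / T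
      = (∑ i, j i (p i) - s : ℤ) * t / T := by
    push_cast
    rw [sub_mul, sub_div, sum_mul, sum_div]
    ring
  have ha : ∑ i, (a i (p i) : ℝ) * x / q i
      = (∑ i, a i (p i) * (univ.lcm q / q i : ℕ) : ℤ) * x / (univ.lcm q : ℕ) := by
    rw [mul_div_right_comm, ← sum_div_eq_sum_mul_div_lcm hq fun i => a i (p i), sum_mul]
    exact sum_congr rfl fun i _ => mul_div_right_comm _ _ _
  rw [prod_mul_distrib, prod_mul_distrib, ← expi_sum, ← expi_sum, ← hj, ← ha, expi_add]
  ring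

theorem sum_sum_prod_weightedCharSum [DecidableEq ι] (hT : 0 < T) (hq : ∀ i, 0 < q i)
    (Γ : ι → Finset κ) (a j : ι → κ → ℤ) (w : κ → ℝ) (s : ℤ) :
    ∑ t ∈ range T, ∑ x ∈ range (univ.lcm q),
        expi (-(s * t / T)) * ∏ i, weightedCharSum (Γ i) (q i) T (a i) (j i) w t x
      = ((univ.lcm q : ℕ) * T * ∑ p ∈ Fintype.piFinset Γ with
          (T : ℤ) ∣ ∑ i, j i (p i) - s ∧
            ((univ.lcm q : ℕ) : ℤ) ∣ ∑ i, a i (p i) * (univ.lcm q / q i : ℕ),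
          ∏ i, w (p i) : ℝ) := by
  simp_rw [prod_weightedCharSum hq, sum_comm (t := Fintype.piFinset Γ), ← mul_sum, ← sum_mul,
    sum_expi_int_mul_div hT, sum_expi_int_mul_div (finset_lcm_pos fun i _ => hq i)]
  push_cast
  rw [mul_sum, sum_filter]
  refine sum_congr rfl fun p _ => ?_
  rw [ite_and]
  split_ifs
  · ring
  all_goals simp

theorem lcm_mul_sum_prod_weight_le [Nontrivial ι] [DecidableEq ι] (hT : 0 < T) (hq : ∀ i, 0 < q i)
    (hadm : ∀ i, q i ∣ (univ.erase i).lcm q) (Γ : ι → Finset κ) (a j : ι → κ → ℤ) {w : κ → ℝ}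
    (hw : ∀ k, 0 ≤ w k) (s : ℤ)
    (hinj : ∀ i, ∀ k ∈ Γ i, ∀ l ∈ Γ i,
      (q i : ℤ) ∣ a i k - a i l → (T : ℤ) ∣ j i k - j i l → k = l)
    {P : Finset (ι → κ)} (hPsub : P ⊆ Fintype.piFinset Γ)
    (hPint : ∀ p ∈ P, ∃ n : ℤ, ∑ i, (a i (p i) : ℝ) / q i = n)
    (hPmod : ∀ p ∈ P, (T : ℤ) ∣ ∑ i, j i (p i) - s) :
    ((univ.lcm q : ℕ) : ℝ) * T * ∑ p ∈ P, ∏ i, w (p i)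
      ≤ ∏ i, √(q i * T * ∑ k ∈ Γ i, w k ^ 2) := by
  have hL : ((univ.lcm q : ℕ) : ℝ) ≠ 0 := by
    exact_mod_cast (finset_lcm_pos fun i _ => hq i).ne'
  have hdvd (p) (hp : p ∈ P) :
      ((univ.lcm q : ℕ) : ℤ) ∣ ∑ i, a i (p i) * (univ.lcm q / q i : ℕ) := by
    obtain ⟨n, hn⟩ := hPint p hp
    rw [sum_div_eq_sum_mul_div_lcm hq fun i => a i (p i), div_eq_iff hL, mul_comm] at hn
    exact ⟨n, by exact_mod_cast hn⟩
  have hprod (p : ι → κ) : 0 ≤ ∏ i, w (p i) := prod_nonneg fun i _ => hw _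
  let F (i : ι) := weightedCharSum (Γ i) (q i) T (a i) (j i) w
  calc ((univ.lcm q : ℕ) : ℝ) * T * ∑ p ∈ P, ∏ i, w (p i)
      ≤ ((univ.lcm q : ℕ) : ℝ) * T * ∑ p ∈ Fintype.piFinset Γ with
          (T : ℤ) ∣ ∑ i, j i (p i) - s ∧
            ((univ.lcm q : ℕ) : ℤ) ∣ ∑ i, a i (p i) * (univ.lcm q / q i : ℕ),
          ∏ i, w (p i) := by
        gcongr with p hp
        · exact fun p _ _ => hprod p
        · exact fun p hp => mem_filter.2 ⟨hPsub hp, hPmod p hp, hdvd p hp⟩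
    _ = ‖∑ t ∈ range T, ∑ x ∈ range (univ.lcm q), expi (-(s * t / T)) * ∏ i, F i t x‖ := by
        rw [sum_sum_prod_weightedCharSum hT hq, Complex.norm_real, Real.norm_of_nonneg]
        exact mul_nonneg (by positivity) (sum_nonneg fun p _ => hprod p)
    _ ≤ ∑ t ∈ range T, ∑ x ∈ range (univ.lcm q), ∏ i, ‖F i t x‖ := by
        refine norm_sum_le_of_le _ fun t _ => norm_sum_le_of_le _ fun x _ => ?_
        rw [norm_mul, norm_expi, one_mul, norm_prod]
    _ ≤ ∏ i, √(∑ t ∈ range T, ∑ x ∈ range (q i), ‖F i t x‖ ^ 2) :=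
        sum_sum_prod_le_prod_sqrt hq hadm (range T) fun i t =>
          (periodic_weightedCharSum (Γ i) (hq i) (a i) (j i) w t).comp norm
    _ = ∏ i, √(q i * T * ∑ k ∈ Γ i, w k ^ 2) := by
        simp only [F, sum_norm_sq_weightedCharSum _ (hq _) hT _ _ _ (hinj _)]

end WeightedCount

theorem card_divisors_mul_le (u v : ℕ) :
    (u * v).divisors.card ≤ u.divisors.card * v.divisors.card := by
  rw [Nat.divisors_mul, ← card_product]
  exact card_mul_le.trans (card_product _ _).ge

theorem card_divisors_pow_succ_div (r n : ℕ) :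
    (n.divisors.card : ℝ) ^ (r + 1) / n
      = ∑ p ∈ n.divisorsAntidiagonal, ((p.1 * p.2).divisors.card : ℝ) ^ r / (p.1 * p.2 : ℕ) := by
  have hterm : ∀ p ∈ n.divisorsAntidiagonal,
      ((p.1 * p.2).divisors.card : ℝ) ^ r / (p.1 * p.2 : ℕ) = (n.divisors.card : ℝ) ^ r / n :=
    fun p hp => by rw [(Nat.mem_divisorsAntidiagonal.1 hp).1]
  have hcard : n.divisorsAntidiagonal.card = n.divisors.card := by
    rw [← Nat.map_div_right_divisors, card_map]
  rw [sum_congr rfl hterm, sum_const, nsmul_eq_mul, hcard]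
  ring

theorem sum_divisorsAntidiagonal_le_sum_product (X : ℕ) {f : ℕ × ℕ → ℝ} (hf : ∀ p, 0 ≤ f p) :
    ∑ n ∈ Icc 1 X, ∑ p ∈ n.divisorsAntidiagonal, f p ≤ ∑ p ∈ Icc 1 X ×ˢ Icc 1 X, f p := by
  have hdisj : ((Icc 1 X : Finset ℕ) : Set ℕ).PairwiseDisjoint Nat.divisorsAntidiagonal :=
    fun m _ n _ hmn => disjoint_left.2 fun p hp hp' => hmn
      ((Nat.mem_divisorsAntidiagonal.1 hp).1.symm.trans (Nat.mem_divisorsAntidiagonal.1 hp').1)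
  rw [← sum_biUnion hdisj]
  refine sum_le_sum_of_subset_of_nonneg (fun p hp => ?_) fun p _ _ => hf p
  simp only [mem_biUnion, mem_Icc, Nat.mem_divisorsAntidiagonal] at hp
  obtain ⟨n, ⟨hn, hnX⟩, rfl, -⟩ := hp
  have h1 : 0 < p.1 := Nat.pos_of_mul_pos_right hn
  have h2 : 0 < p.2 := Nat.pos_of_mul_pos_left hn
  exact mem_product.2 ⟨mem_Icc.2 ⟨h1, (Nat.le_mul_of_pos_right _ h2).trans hnX⟩,
    mem_Icc.2 ⟨h2, (Nat.le_mul_of_pos_left _ h1).trans hnX⟩⟩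

theorem sum_card_divisors_pow_div_le (r X : ℕ) :
    ∑ n ∈ Icc 1 X, (n.divisors.card : ℝ) ^ r / n ≤ (∑ n ∈ Icc 1 X, (1 : ℝ) / n) ^ 2 ^ r := by
  induction r with
  | zero => simp
  | succ r ih =>
    calc ∑ n ∈ Icc 1 X, (n.divisors.card : ℝ) ^ (r + 1) / n
        ≤ ∑ p ∈ Icc 1 X ×ˢ Icc 1 X, ((p.1 * p.2).divisors.card : ℝ) ^ r / (p.1 * p.2 : ℕ) := by
          simp_rw [card_divisors_pow_succ_div]
          exact sum_divisorsAntidiagonal_le_sum_product X fun p => by positivity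
      _ ≤ ∑ p ∈ Icc 1 X ×ˢ Icc 1 X, (p.1.divisors.card : ℝ) ^ r / p.1 *
            ((p.2.divisors.card : ℝ) ^ r / p.2) := by
          refine sum_le_sum fun p _ => ?_
          rw [div_mul_div_comm, ← mul_pow]
          push_cast
          gcongr
          exact_mod_cast card_divisors_mul_le p.1 p.2
      _ = (∑ n ∈ Icc 1 X, (n.divisors.card : ℝ) ^ r / n) ^ 2 := by
          rw [sum_product, pow_two, sum_mul_sum]
      _ ≤ ((∑ n ∈ Icc 1 X, (1 : ℝ) / n) ^ 2 ^ r) ^ 2 := by gcongr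
      _ = (∑ n ∈ Icc 1 X, (1 : ℝ) / n) ^ 2 ^ (r + 1) := by rw [← pow_mul, pow_succ]

theorem sum_one_div_le_one_add_log (n : ℕ) : ∑ k ∈ Icc 1 n, (1 : ℝ) / k ≤ 1 + Real.log n := by
  have h := harmonic_le_one_add_log n
  rw [harmonic_eq_sum_Icc] at h
  simpa using h

section LcmTuples

variable {ι : Type*} [Fintype ι]

theorem lcm_mem_Icc_of_mem_piFinset [DecidableEq ι] {Q : ℕ} {q : ι → ℕ}
    (hq : q ∈ Fintype.piFinset fun _ => Icc 1 Q) : univ.lcm q ∈ Icc 1 (Q ^ Fintype.card ι) := by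
  rw [Fintype.mem_piFinset] at hq
  have hpos (i : ι) : 0 < q i := (mem_Icc.1 (hq i)).1
  refine mem_Icc.2 ⟨finset_lcm_pos fun i _ => hpos i, ?_⟩
  calc univ.lcm q ≤ ∏ i, q i :=
        Nat.le_of_dvd (prod_pos fun i _ => hpos i) (lcm_dvd_prod univ q)
    _ ≤ ∏ _i : ι, Q := prod_le_prod' fun i _ => (mem_Icc.1 (hq i)).2
    _ = Q ^ Fintype.card ι := by simp

theorem card_filter_lcm_eq_le (U : Finset (ι → ℕ)) {n : ℕ} (hn : 0 < n) :
    (U.filter fun q => univ.lcm q = n).card ≤ n.divisors.card ^ Fintype.card ι := by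
  classical
  have hsub : (U.filter fun q => univ.lcm q = n) ⊆ Fintype.piFinset fun _ : ι => n.divisors := by
    intro q hq
    obtain ⟨-, rfl⟩ := mem_filter.1 hq
    exact Fintype.mem_piFinset.2 fun i =>
      Nat.mem_divisors.2 ⟨dvd_lcm (mem_univ i), hn.ne'⟩
  simpa using card_le_card hsub

variable (ι) in
theorem sum_one_div_lcm_le [DecidableEq ι] (Q : ℕ) :
    ∑ q ∈ Fintype.piFinset (fun _ : ι => Icc 1 Q), (1 : ℝ) / (univ.lcm q : ℕ)
      ≤ (1 + Fintype.card ι * Real.log Q) ^ 2 ^ Fintype.card ι := by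
  set r := Fintype.card ι
  calc ∑ q ∈ Fintype.piFinset (fun _ : ι => Icc 1 Q), (1 : ℝ) / (univ.lcm q : ℕ)
      ≤ ∑ n ∈ Icc 1 (Q ^ r), (n.divisors.card : ℝ) ^ r / n := by
        rw [← sum_fiberwise_of_maps_to fun q hq => lcm_mem_Icc_of_mem_piFinset hq]
        refine sum_le_sum fun n hn => ?_
        rw [sum_congr rfl fun q hq => by rw [(mem_filter.1 hq).2], sum_const, nsmul_eq_mul,
          mul_one_div]
        gcongr
        exact_mod_cast card_filter_lcm_eq_le _ (mem_Icc.1 hn).1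
    _ ≤ (∑ n ∈ Icc 1 (Q ^ r), (1 : ℝ) / n) ^ 2 ^ r := sum_card_divisors_pow_div_le r (Q ^ r)
    _ ≤ (1 + r * Real.log Q) ^ 2 ^ r := by
        gcongr
        simpa using sum_one_div_le_one_add_log (Q ^ r)

end LcmTuples

/-! ### Moments of exponential sums near rational frequencies -/

theorem den_dvd_lcm_erase_of_sum_eq_int {ι : Type*} [DecidableEq ι] {s : Finset ι} {α : ι → ℚ}
    {n : ℤ} (hn : ∑ i ∈ s, α i = n) {i : ι} (hi : i ∈ s) :
    (α i).den ∣ (s.erase i).lcm fun j => (α j).den := by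
  have hα : α i = n - ∑ j ∈ s.erase i, α j := by rw [← hn, ← add_sum_erase s α hi]; ring
  rw [hα, Rat.intCast_sub_den]
  exact Rat.den_sum_dvd_lcm_den _ _

theorem eq_zero_of_abs_mul_den_lt_one {x : ℚ} (hx : |x| * x.den < 1) : x = 0 := by
  have hnum : |(x.num : ℚ)| < 1 := by
    rwa [← Rat.mul_den_eq_num, abs_mul, Nat.abs_cast]
  exact Rat.num_eq_zero.1 (Int.abs_lt_one_iff.1 (by exact_mod_cast hnum))

theorem exists_int_eq_sum_of_approx {ι : Type*} [Fintype ι] {M K Q : ℕ}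
    (hM : Fintype.card ι * K * Q ^ Fintype.card ι < M) {b : ι → ℤ} {α : ι → ℚ}
    (hden : ∀ i, (α i).den ≤ Q) (hα : ∀ i, |(b i : ℚ) - M * α i| ≤ K)
    (hb : (M : ℤ) ∣ ∑ i, b i) :
    ∃ n : ℤ, ∑ i, α i = n ∧ ∑ i, b i = M * n := by
  obtain ⟨n, hn⟩ := hb
  refine ⟨n, ?_, hn⟩
  have hMpos : (0 : ℚ) < M := by exact_mod_cast (Nat.zero_le _).trans_lt hM
  have hdiff : M * ((n : ℚ) - ∑ i, α i) = ∑ i, ((b i : ℚ) - M * α i) := by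
    rw [sum_sub_distrib, ← Int.cast_sum, hn, ← mul_sum]
    push_cast
    ring
  have hclose : M * |(n : ℚ) - ∑ i, α i| ≤ Fintype.card ι * K := by
    rw [← abs_of_pos hMpos, ← abs_mul, hdiff]
    exact (abs_sum_le_sum_abs _ _).trans ((sum_le_sum fun i _ => hα i).trans (by simp))
  have hdenQ : ((n : ℚ) - ∑ i, α i).den ≤ Q ^ Fintype.card ι := by
    rw [Rat.intCast_sub_den]
    calc (∑ i, α i).den ≤ ∏ i, (α i).den :=
          Nat.le_of_dvd (prod_pos fun i _ => (α i).den_pos) (Rat.den_sum_dvd_prod_den univ α)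
      _ ≤ ∏ _i : ι, Q := prod_le_prod' fun i _ => hden i
      _ = Q ^ Fintype.card ι := by simp
  refine (sub_eq_zero.1 (eq_zero_of_abs_mul_den_lt_one (lt_of_mul_lt_mul_left ?_ hMpos.le))).symm
  rw [← mul_assoc, mul_one]
  calc M * |(n : ℚ) - ∑ i, α i| * ((n : ℚ) - ∑ i, α i).den
      ≤ Fintype.card ι * K * (Q ^ Fintype.card ι : ℕ) := by gcongr
    _ < M := by exact_mod_cast hM

theorem floor_eq_of_dvd_sub_floor {K T : ℕ} (hT : 2 * K + 2 < T) {x y : ℝ} (hx : |x| ≤ K)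
    (hy : |y| ≤ K) (hdvd : (T : ℤ) ∣ ⌊x⌋ - ⌊y⌋) : ⌊x⌋ = ⌊y⌋ := by
  rw [abs_le] at hx hy
  have hTR : (2 * K + 2 : ℝ) < T := by exact_mod_cast hT
  have hlt : |(⌊x⌋ : ℝ) - ⌊y⌋| < T := by
    rw [abs_lt]
    constructor <;> linarith [Int.floor_le x, Int.lt_floor_add_one x, Int.floor_le y,
      Int.lt_floor_add_one y]
  exact sub_eq_zero.1 (Int.eq_zero_of_abs_lt_dvd hdvd (by exact_mod_cast hlt))

theorem eq_of_floor_sub_mul_eq {M k l : ℕ} (hk : k < M) (hl : l < M) {ρ ρ' : ℚ}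
    (hden : ρ.den = ρ'.den) (hnum : (ρ.den : ℤ) ∣ ρ.num - ρ'.num)
    (hfloor : ⌊(k : ℝ) - M * ρ⌋ = ⌊(l : ℝ) - M * ρ'⌋) : k = l := by
  obtain ⟨c, hc⟩ := hnum
  have hρ : (ρ : ℝ) - ρ' = c := by
    have hd : (ρ.den : ℝ) ≠ 0 := by exact_mod_cast ρ.den_nz
    rw [Rat.cast_def ρ, Rat.cast_def ρ', ← hden, ← sub_div, div_eq_iff hd, mul_comm]
    exact_mod_cast hc
  have hzero : (k : ℤ) - l - M * c = 0 := by
    have hlt := Int.abs_sub_lt_one_of_floor_eq_floor hfloor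
    have hcast : ((k : ℝ) - M * ρ) - (l - M * ρ') = ((k : ℤ) - l - M * c : ℤ) := by
      push_cast
      rw [← hρ]
      ring
    rw [hcast] at hlt
    exact Int.abs_lt_one_iff.1 (by exact_mod_cast hlt)
  have hdvd : (M : ℤ) ∣ (k : ℤ) - l := ⟨c, by linarith⟩
  have hlt : |(k : ℤ) - l| < M := by
    rw [abs_lt]
    constructor <;> omega
  have := Int.eq_zero_of_abs_lt_dvd hdvd hlt
  omega

/-- The sign pattern `+1` on the left summand and `-1` on the right one, under which the `2m`-th
moment of an exponential sum counts the solutions of a linear equation in `2m` variables. -/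
def sumSign (m : ℕ) : Fin m ⊕ Fin m → ℤ := Sum.elim (fun _ => 1) (fun _ => -1)

section SumSign

variable {m : ℕ} (i : Fin m ⊕ Fin m)

theorem sumSign_eq : sumSign m i = 1 ∨ sumSign m i = -1 := by
  rcases i with i | i <;> simp [sumSign]

theorem abs_sumSign_mul {R : Type*} [Ring R] [LinearOrder R] [IsStrictOrderedRing R] (x : R) :
    |sumSign m i * x| = |x| := by
  rcases sumSign_eq i with h | h <;> simp [h]

theorem den_sumSign_mul (x : ℚ) : (sumSign m i * x).den = x.den := by
  rcases sumSign_eq i with h | h <;> simp [h]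

theorem dvd_sumSign_mul {d x : ℤ} : d ∣ sumSign m i * x ↔ d ∣ x := by
  rcases sumSign_eq i with h | h <;> simp [h]

end SumSign

/-- The `2m`-tuples `p` in `Γ` with `p₁ + ⋯ + pₘ ≡ pₘ₊₁ + ⋯ + p₂ₘ` modulo `M`. -/
def momentSolutions (Γ : Finset ℕ) (M m : ℕ) : Finset (Fin m ⊕ Fin m → ℕ) :=
  {p ∈ Fintype.piFinset fun _ => Γ | (M : ℤ) ∣ ∑ i, sumSign m i * p i}

theorem norm_pow_two_mul_eq_sum (Γ : Finset ℕ) (c : ℕ → ℂ) (m : ℕ) (y : ℝ) :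
    ((‖∑ k ∈ Γ, c k * expi (k * y)‖ ^ (2 * m) : ℝ) : ℂ)
      = ∑ p ∈ Fintype.piFinset fun _ : Fin m ⊕ Fin m => Γ,
          (∏ i, Sum.elim (fun _ => c) (fun _ => conj c) i (p i)) *
            expi ((∑ i, sumSign m i * p i : ℤ) * y) := by
  have hfactor : ((‖∑ k ∈ Γ, c k * expi (k * y)‖ ^ (2 * m) : ℝ) : ℂ)
      = ∏ i : Fin m ⊕ Fin m, ∑ k ∈ Γ,
          Sum.elim (fun _ => c) (fun _ => conj c) i k * expi (sumSign m i * (k * y)) := by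
    have hconj : ∑ k ∈ Γ, conj c k * conj (expi (k * y)) = conj (∑ k ∈ Γ, c k * expi (k * y)) := by
      simp [map_sum]
    rw [Fintype.prod_sum_type]
    simp only [sumSign, Sum.elim_inl, Sum.elim_inr, Int.cast_one, one_mul, Int.cast_neg,
      neg_mul, expi_neg, prod_const, card_univ, Fintype.card_fin]
    rw [← mul_pow, hconj, Complex.mul_conj', ← pow_mul, Complex.ofReal_pow]
  rw [hfactor, prod_univ_sum]
  refine sum_congr rfl fun p _ => ?_
  rw [prod_mul_distrib, ← expi_sum]
  push_cast
  simp_rw [sum_mul, mul_assoc]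

theorem sum_norm_pow_le_sum_momentSolutions (Γ : Finset ℕ) {M : ℕ} (hM : 0 < M) (c : ℕ → ℂ)
    (m : ℕ) :
    ∑ x ∈ range M, ‖∑ k ∈ Γ, c k * expi (k * x / M)‖ ^ (2 * m)
      ≤ M * ∑ p ∈ momentSolutions Γ M m, ∏ i, ‖c (p i)‖ := by
  let d : Fin m ⊕ Fin m → ℕ → ℂ := Sum.elim (fun _ => c) (fun _ => conj c)
  have hd (i k) : ‖d i k‖ = ‖c k‖ := by rcases i with _ | _ <;> simp [d]
  have hsum : ((∑ x ∈ range M, ‖∑ k ∈ Γ, c k * expi (k * x / M)‖ ^ (2 * m) : ℝ) : ℂ)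
      = ∑ p ∈ momentSolutions Γ M m, (∏ i, d i (p i)) * M := by
    simp_rw [mul_div_assoc]
    rw [Complex.ofReal_sum]
    simp_rw [norm_pow_two_mul_eq_sum, ← mul_div_assoc]
    rw [sum_comm, momentSolutions, sum_filter]
    refine sum_congr rfl fun p _ => ?_
    rw [← mul_sum, sum_expi_int_mul_div hM, mul_ite, mul_zero]
  have hnonneg : 0 ≤ ∑ x ∈ range M, ‖∑ k ∈ Γ, c k * expi (k * x / M)‖ ^ (2 * m) := by positivity
  rw [← Real.norm_of_nonneg hnonneg, ← Complex.norm_real, hsum, mul_sum]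
  refine norm_sum_le_of_le _ fun p _ => ?_
  rw [norm_mul, norm_prod, Complex.norm_natCast, mul_comm, prod_congr rfl fun i _ => hd i (p i)]

/-- `Γ ⊆ [0, M)`, and for `k ∈ Γ` the fraction `k / M` is within `K / M` of the rational `ρ k`,
whose denominator is at most `Q`: the frequencies `k / M` with `k ∈ Γ` lie on major arcs. -/
structure IsRationalApprox (Γ : Finset ℕ) (M K Q : ℕ) (ρ : ℕ → ℚ) : Prop where
  lt : ∀ k ∈ Γ, k < M
  den_le : ∀ k ∈ Γ, (ρ k).den ≤ Q
  abs_sub_le : ∀ k ∈ Γ, |(k : ℝ) - M * ρ k| ≤ K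

/-- The solutions whose approximating fractions have denominators `q i` and whose approximation
errors have integer parts with alternating sum `s`. -/
noncomputable def solutionFibre (Γ : Finset ℕ) (M m : ℕ) (ρ : ℕ → ℚ) (q : Fin m ⊕ Fin m → ℕ)
    (s : ℤ) : Finset (Fin m ⊕ Fin m → ℕ) :=
  {p ∈ momentSolutions Γ M m | (fun i => (ρ (p i)).den) = q ∧
    ∑ i, sumSign m i * ⌊(p i : ℝ) - M * ρ (p i)⌋ = s}

namespace IsRationalApprox

variable {Γ : Finset ℕ} {M K Q m : ℕ} {ρ : ℕ → ℚ} (h : IsRationalApprox Γ M K Q ρ)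
include h

theorem eq_of_dvd {T : ℕ} (hT : 2 * K + 2 < T) {k l : ℕ} (hk : k ∈ Γ) (hl : l ∈ Γ)
    (hden : (ρ k).den = (ρ l).den) (hnum : ((ρ k).den : ℤ) ∣ (ρ k).num - (ρ l).num)
    (hfloor : (T : ℤ) ∣ ⌊(k : ℝ) - M * ρ k⌋ - ⌊(l : ℝ) - M * ρ l⌋) : k = l :=
  eq_of_floor_sub_mul_eq (h.lt k hk) (h.lt l hl) hden hnum
    (floor_eq_of_dvd_sub_floor hT (h.abs_sub_le k hk) (h.abs_sub_le l hl) hfloor)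

theorem exists_int_of_mem_momentSolutions (hM : 2 * m * K * Q ^ (2 * m) < M)
    {p : Fin m ⊕ Fin m → ℕ} (hp : p ∈ momentSolutions Γ M m) :
    ∃ n : ℤ, ∑ i, sumSign m i * ρ (p i) = n ∧ ∑ i, sumSign m i * (p i : ℤ) = M * n := by
  obtain ⟨hpΓ, hdvd⟩ := mem_filter.1 hp
  rw [Fintype.mem_piFinset] at hpΓ
  have hcard : Fintype.card (Fin m ⊕ Fin m) = 2 * m := by simp [two_mul]
  refine exists_int_eq_sum_of_approx (K := K) (Q := Q) (hcard ▸ hM)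
    (fun i => (den_sumSign_mul i _).trans_le (h.den_le _ (hpΓ i))) (fun i => ?_) hdvd
  have hfactor : ((sumSign m i * p i : ℤ) : ℚ) - M * (sumSign m i * ρ (p i))
      = sumSign m i * (p i - M * ρ (p i)) := by
    push_cast
    ring
  rw [hfactor, abs_sumSign_mul]
  exact_mod_cast h.abs_sub_le _ (hpΓ i)

theorem sum_floor_mem_Icc (hM : 2 * m * K * Q ^ (2 * m) < M) {p : Fin m ⊕ Fin m → ℕ}
    (hp : p ∈ momentSolutions Γ M m) :
    ∑ i, sumSign m i * ⌊(p i : ℝ) - M * ρ (p i)⌋ ∈ Icc (-(2 * m : ℤ)) (2 * m) := by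
  obtain ⟨n, hρ, hp⟩ := h.exists_int_of_mem_momentSolutions hM hp
  have hρR : ∑ i, (sumSign m i : ℝ) * ρ (p i) = n := by exact_mod_cast hρ
  have hpR : ∑ i, (sumSign m i : ℝ) * p i = M * n := by exact_mod_cast hp
  have hfract : ((∑ i, sumSign m i * ⌊(p i : ℝ) - M * ρ (p i)⌋ : ℤ) : ℝ)
      = -∑ i, sumSign m i * Int.fract ((p i : ℝ) - M * ρ (p i)) := by
    push_cast
    simp_rw [Int.fract, mul_sub, sum_sub_distrib, mul_left_comm _ (M : ℝ), ← mul_sum, hρR, hpR]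
    ring
  have habs : |∑ i, sumSign m i * ⌊(p i : ℝ) - M * ρ (p i)⌋| ≤ 2 * m := by
    rw [← Int.cast_le (R := ℝ), Int.cast_abs, hfract, abs_neg]
    push_cast
    calc |∑ i, (sumSign m i : ℝ) * Int.fract ((p i : ℝ) - M * ρ (p i))|
        ≤ ∑ _i : Fin m ⊕ Fin m, (1 : ℝ) := by
          refine (abs_sum_le_sum_abs _ _).trans (sum_le_sum fun i _ => ?_)
          rw [abs_sumSign_mul, Int.abs_fract]
          exact (Int.fract_lt_one _).le
      _ = 2 * m := by simp [two_mul]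
  exact mem_Icc.2 (abs_le.1 habs)

theorem lcm_mul_sum_solutionFibre_le (hm : 1 ≤ m) {T : ℕ}
    (hM : 2 * m * K * Q ^ (2 * m) < M) (hT : 2 * K + 2 < T) (c : ℕ → ℂ)
    {q : Fin m ⊕ Fin m → ℕ} (s : ℤ) (hne : (solutionFibre Γ M m ρ q s).Nonempty) :
    ((univ.lcm q : ℕ) : ℝ) * T * ∑ p ∈ solutionFibre Γ M m ρ q s, ∏ i, ‖c (p i)‖
      ≤ ∏ i, √(q i * T * ∑ k ∈ Γ with (ρ k).den = q i, ‖c k‖ ^ 2) := by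
  have hspec {p} (hp : p ∈ solutionFibre Γ M m ρ q s) :
      (∀ i, p i ∈ Γ) ∧ (∃ n : ℤ, ∑ i, sumSign m i * ρ (p i) = n) ∧ (∀ i, (ρ (p i)).den = q i) ∧
        ∑ i, sumSign m i * ⌊(p i : ℝ) - M * ρ (p i)⌋ = s := by
    obtain ⟨hp, hpq, hps⟩ := mem_filter.1 hp
    obtain ⟨n, hn, -⟩ := h.exists_int_of_mem_momentSolutions hM hp
    exact ⟨Fintype.mem_piFinset.1 (mem_filter.1 hp).1, ⟨n, hn⟩, congrFun hpq, hps⟩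
  have : Nontrivial (Fin m ⊕ Fin m) := ⟨.inl ⟨0, hm⟩, .inr ⟨0, hm⟩, Sum.inl_ne_inr⟩
  obtain ⟨p₀, hp₀⟩ := hne
  obtain ⟨-, ⟨n, hn⟩, hq₀, -⟩ := hspec hp₀
  refine lcm_mul_sum_prod_weight_le (by omega) (fun i => hq₀ i ▸ (ρ (p₀ i)).den_pos)
    (fun i => ?_) (fun i => {k ∈ Γ | (ρ k).den = q i}) (fun i k => sumSign m i * (ρ k).num)
    (fun i k => sumSign m i * ⌊(k : ℝ) - M * ρ k⌋) (fun k => norm_nonneg (c k)) s ?_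
    (fun p hp => ?_) (fun p hp => ?_) (fun p hp => ?_)
  · simpa only [den_sumSign_mul, hq₀] using den_dvd_lcm_erase_of_sum_eq_int hn (mem_univ i)
  · intro i k hk l hl hnum hfloor
    obtain ⟨hk, hkq⟩ := mem_filter.1 hk
    obtain ⟨hl, hlq⟩ := mem_filter.1 hl
    rw [← mul_sub, dvd_sumSign_mul] at hnum hfloor
    exact h.eq_of_dvd hT hk hl (hkq.trans hlq.symm) (hkq ▸ hnum) hfloor
  · obtain ⟨hΓ, -, hq, -⟩ := hspec hp
    exact Fintype.mem_piFinset.2 fun i => mem_filter.2 ⟨hΓ i, hq i⟩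
  · obtain ⟨-, ⟨n, hn⟩, hq, -⟩ := hspec hp
    have hnR : ∑ i, (sumSign m i : ℝ) * (ρ (p i) : ℝ) = n := by exact_mod_cast hn
    refine ⟨n, hnR ▸ sum_congr rfl fun i _ => ?_⟩
    rw [← hq i, Rat.cast_def (ρ (p i)), Int.cast_mul, mul_div_assoc]
  · rw [(hspec hp).2.2.2, sub_self]
    exact dvd_zero _

theorem sum_solutionFibre_le (hm : 1 ≤ m) {T : ℕ}
    (hM : 2 * m * K * Q ^ (2 * m) < M) (hT : 2 * K + 2 < T) (c : ℕ → ℂ) {B : ℝ} (hB₀ : 0 ≤ B)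
    (hB : ∀ q ∈ Icc 1 Q, q * T * ∑ k ∈ Γ with (ρ k).den = q, ‖c k‖ ^ 2 ≤ B)
    {q : Fin m ⊕ Fin m → ℕ} (hq : ∀ i, q i ∈ Icc 1 Q) (s : ℤ) :
    ∑ p ∈ solutionFibre Γ M m ρ q s, ∏ i, ‖c (p i)‖ ≤ B ^ m * (1 / (univ.lcm q : ℕ)) := by
  rcases (solutionFibre Γ M m ρ q s).eq_empty_or_nonempty with hempty | hne
  · rw [hempty, sum_empty]
    positivity
  have hlcm : (0 : ℝ) < (univ.lcm q : ℕ) := by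
    exact_mod_cast finset_lcm_pos fun i _ => (mem_Icc.1 (hq i)).1
  have hT1 : (1 : ℝ) ≤ T := by exact_mod_cast (by omega : 1 ≤ T)
  rw [mul_one_div, le_div_iff₀ hlcm, mul_comm]
  calc ((univ.lcm q : ℕ) : ℝ) * ∑ p ∈ solutionFibre Γ M m ρ q s, ∏ i, ‖c (p i)‖
      ≤ (univ.lcm q : ℕ) * T * ∑ p ∈ solutionFibre Γ M m ρ q s, ∏ i, ‖c (p i)‖ := by
        gcongr
        exact le_mul_of_one_le_right hlcm.le hT1
    _ ≤ ∏ i, √(q i * T * ∑ k ∈ Γ with (ρ k).den = q i, ‖c k‖ ^ 2) :=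
        h.lcm_mul_sum_solutionFibre_le hm hM hT c s hne
    _ ≤ ∏ _i : Fin m ⊕ Fin m, √B :=
        prod_le_prod (fun i _ => Real.sqrt_nonneg _) fun i _ => Real.sqrt_le_sqrt (hB _ (hq i))
    _ = B ^ m := by
        rw [prod_const, card_univ, Fintype.card_sum, Fintype.card_fin, ← two_mul, pow_mul,
          Real.sq_sqrt hB₀]

theorem sum_momentSolutions_eq (hM : 2 * m * K * Q ^ (2 * m) < M)
    (f : (Fin m ⊕ Fin m → ℕ) → ℝ) :
    ∑ p ∈ momentSolutions Γ M m, f p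
      = ∑ q ∈ Fintype.piFinset fun _ : Fin m ⊕ Fin m => Icc 1 Q,
          ∑ s ∈ Icc (-(2 * m : ℤ)) (2 * m), ∑ p ∈ solutionFibre Γ M m ρ q s, f p := by
  have hden : ∀ p ∈ momentSolutions Γ M m,
      (fun i => (ρ (p i)).den) ∈ Fintype.piFinset fun _ : Fin m ⊕ Fin m => Icc 1 Q :=
    fun p hp => Fintype.mem_piFinset.2 fun i => mem_Icc.2
      ⟨(ρ (p i)).den_pos, h.den_le _ (Fintype.mem_piFinset.1 (mem_filter.1 hp).1 i)⟩
  rw [← sum_fiberwise_of_maps_to hden]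
  refine sum_congr rfl fun q _ => ?_
  rw [← sum_fiberwise_of_maps_to fun p hp => h.sum_floor_mem_Icc hM (mem_filter.1 hp).1]
  exact sum_congr rfl fun s _ => by rw [filter_filter, solutionFibre]

theorem sum_norm_pow_le (hm : 1 ≤ m) (hQ : 1 ≤ Q) {T : ℕ} (hM : 2 * m * K * Q ^ (2 * m) < M)
    (hT : 2 * K + 2 < T) (c : ℕ → ℂ) {B : ℝ}
    (hB : ∀ q ∈ Icc 1 Q, q * T * ∑ k ∈ Γ with (ρ k).den = q, ‖c k‖ ^ 2 ≤ B) :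
    ∑ x ∈ range M, ‖∑ k ∈ Γ, c k * expi (k * x / M)‖ ^ (2 * m)
      ≤ M * ((4 * m + 1) * B ^ m * (1 + 2 * m * Real.log Q) ^ 2 ^ (2 * m)) := by
  have hB₀ : 0 ≤ B := le_trans (by positivity) (hB 1 (mem_Icc.2 ⟨le_rfl, hQ⟩))
  refine (sum_norm_pow_le_sum_momentSolutions Γ ((Nat.zero_le _).trans_lt hM) c m).trans ?_
  refine mul_le_mul_of_nonneg_left ?_ (Nat.cast_nonneg M)
  calc ∑ p ∈ momentSolutions Γ M m, ∏ i, ‖c (p i)‖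
      ≤ ∑ q ∈ Fintype.piFinset fun _ : Fin m ⊕ Fin m => Icc 1 Q,
          ∑ s ∈ Icc (-(2 * m : ℤ)) (2 * m), B ^ m * (1 / (univ.lcm q : ℕ)) := by
        rw [h.sum_momentSolutions_eq hM]
        exact sum_le_sum fun q hq => sum_le_sum fun s _ =>
          h.sum_solutionFibre_le hm hM hT c hB₀ hB (Fintype.mem_piFinset.1 hq) s
    _ = (4 * m + 1) * B ^ m *
          ∑ q ∈ Fintype.piFinset fun _ : Fin m ⊕ Fin m => Icc 1 Q, (1 : ℝ) / (univ.lcm q : ℕ) := by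
        have hcard : (2 * (m : ℤ) + 1 - -(2 * m)).toNat = 4 * m + 1 := by omega
        simp_rw [sum_const, Int.card_Icc, hcard, nsmul_eq_mul, mul_sum]
        push_cast
        simp_rw [mul_assoc]
    _ ≤ (4 * m + 1) * B ^ m * (1 + 2 * m * Real.log Q) ^ 2 ^ (2 * m) := by
        gcongr
        simpa [← two_mul] using sum_one_div_lcm_le (Fin m ⊕ Fin m) Q

end IsRationalApprox

/-! ### Weyl's inequality for squares -/

theorem expi_sub_intCast (x : ℝ) (n : ℤ) : expi (x - n) = expi x := by
  rw [sub_eq_add_neg, ← Int.cast_neg, expi_add, expi_intCast, mul_one]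

theorem norm_expi_sub_one (x : ℝ) : ‖expi x - 1‖ = 2 * |Real.sin (Real.pi * x)| := by
  rw [expi_eq_exp, mul_comm _ Complex.I, Complex.norm_exp_I_mul_ofReal_sub_one, Real.norm_eq_abs,
    abs_mul, abs_two]
  ring_nf

theorem four_mul_abs_sub_round_le (x : ℝ) : 4 * |x - round x| ≤ ‖expi x - 1‖ := by
  set t := x - round x
  have hexpi : expi x = expi t := (expi_sub_intCast x (round x)).symm
  have ht : |t| ≤ 1 / 2 := abs_sub_round x
  have hsin : |Real.sin (Real.pi * t)| = Real.sin (Real.pi * |t|) := by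
    rw [Real.abs_sin_eq_sin_abs_of_abs_le_pi, abs_mul, abs_of_pos Real.pi_pos]
    rw [abs_mul, abs_of_pos Real.pi_pos]
    nlinarith [Real.pi_pos]
  have hjordan := Real.mul_le_sin (x := Real.pi * |t|) (by positivity) (by nlinarith [Real.pi_pos])
  rw [← mul_assoc, div_mul_cancel₀ _ Real.pi_ne_zero] at hjordan
  rw [hexpi, norm_expi_sub_one, hsin]
  linarith

theorem norm_sum_expi_mul_le_card (L : ℕ) (x : ℝ) : ‖∑ n ∈ range L, expi (n * x)‖ ≤ L :=
  (norm_sum_le _ _).trans (by simp [norm_expi])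

theorem norm_sum_expi_mul_abs_sub_round_le (L : ℕ) (x : ℝ) :
    ‖∑ n ∈ range L, expi (n * x)‖ * |x - round x| ≤ 1 / 2 := by
  have hgeom : ‖∑ n ∈ range L, expi (n * x)‖ * ‖expi x - 1‖ ≤ 2 := by
    simp_rw [expi_nat_mul]
    rw [← norm_mul, geom_sum_mul]
    refine (norm_sub_le _ _).trans ?_
    rw [norm_pow, norm_expi]
    norm_num
  nlinarith [norm_nonneg (∑ n ∈ range L, expi (n * x)), four_mul_abs_sub_round_le x]

theorem norm_sum_sq_le_two_mul_re (e : ℕ → ℂ) (H : ℕ) :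
    ‖∑ n ∈ range H, e n‖ ^ 2
      ≤ 2 * (∑ m ∈ range H, ∑ n ∈ range (m + 1), conj (e n) * e m).re := by
  induction H with
  | zero => simp
  | succ H ih =>
    rw [sum_range_succ (fun n => e n), sum_range_succ (fun m => ∑ n ∈ range (m + 1), _),
      sum_range_succ (fun n => conj (e n) * e H), ← sum_mul, ← map_sum]
    set S := ∑ n ∈ range H, e n
    rw [← Complex.normSq_eq_norm_sq] at ih ⊢
    have hcross : (S * conj (e H)).re = (conj S * e H).re := by simp [Complex.mul_re]
    have hdiag : (conj (e H) * e H).re = Complex.normSq (e H) := by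
      simp [Complex.mul_re, Complex.normSq_apply]
    rw [Complex.normSq_add, Complex.add_re, Complex.add_re, hcross, hdiag]
    nlinarith [Complex.normSq_nonneg (e H)]

theorem norm_sum_sq_le_differences (e : ℕ → ℂ) (H : ℕ) :
    ‖∑ n ∈ range H, e n‖ ^ 2
      ≤ 2 * ∑ h ∈ range H, ‖∑ n ∈ range (H - h), conj (e n) * e (n + h)‖ := by
  have hflip : ∑ m ∈ range H, ∑ n ∈ range (m + 1), conj (e n) * e m
      = ∑ h ∈ range H, ∑ n ∈ range (H - h), conj (e n) * e (n + h) := by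
    rw [← sum_range_diag_flip H fun h n => conj (e n) * e (n + h)]
    refine sum_congr rfl fun m _ => ?_
    rw [← sum_range_reflect]
    refine sum_congr rfl fun k hk => ?_
    have := mem_range.1 hk
    rw [show m + 1 - 1 - k = m - k by omega, show m - k + k = m by omega]
  refine (norm_sum_sq_le_two_mul_re e H).trans ?_
  rw [hflip]
  gcongr
  exact (Complex.re_le_norm _).trans (norm_sum_le _ _)

/-- The exponential sum over the squares `1, 4, …, H ^ 2` at the frequency `θ`. -/
noncomputable def squareSum (H : ℕ) (θ : ℝ) : ℂ := ∑ n ∈ range H, expi (θ * (n + 1) ^ 2)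

theorem norm_squareSum_sq_le_sum_linear (θ : ℝ) (H : ℕ) :
    ‖squareSum H θ‖ ^ 2
      ≤ 2 * ∑ h ∈ range H, ‖∑ n ∈ range (H - h), expi (n * ((2 * h : ℕ) * θ))‖ := by
  refine (norm_sum_sq_le_differences (fun n => expi (θ * (n + 1) ^ 2)) H).trans (le_of_eq ?_)
  congr 1
  refine sum_congr rfl fun h _ => ?_
  have hdiff (n : ℕ) : conj (expi (θ * ((n : ℝ) + 1) ^ 2)) * expi (θ * (((n + h : ℕ) : ℝ) + 1) ^ 2)
      = expi (θ * (2 * h + h ^ 2)) * expi (n * ((2 * h : ℕ) * θ)) := by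
    rw [← expi_neg, ← expi_add, ← expi_add]
    push_cast
    ring_nf
  simp_rw [hdiff]
  rw [← mul_sum, norm_mul, norm_expi, one_mul]

theorem sum_range_div_add_div_sub_le (q : ℕ) :
    ∑ r ∈ range q, ((q : ℝ) / r + q / (q - r)) ≤ 2 * q * (1 + Real.log q) := by
  have hIcc (f : ℕ → ℝ) : ∑ r ∈ range q, f (r + 1) = ∑ r ∈ Icc 1 q, f r := by
    rw [range_eq_Ico, sum_Ico_add' f 0 q 1]
    rfl
  have hharm : ∑ r ∈ Icc 1 q, (q : ℝ) / r ≤ q * (1 + Real.log q) := by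
    simp_rw [div_eq_mul_one_div (q : ℝ), ← mul_sum]
    gcongr
    exact sum_one_div_le_one_add_log q
  have hleft : ∑ r ∈ range q, (q : ℝ) / r ≤ ∑ r ∈ Icc 1 q, (q : ℝ) / r := by
    have hshift := (sum_range_succ' (fun r : ℕ => (q : ℝ) / r) q).symm.trans (sum_range_succ _ q)
    rw [Nat.cast_zero, div_zero, add_zero] at hshift
    rw [← hIcc fun r => (q : ℝ) / r, hshift]
    exact le_add_of_nonneg_right (by positivity)
  have hright : ∑ r ∈ range q, (q : ℝ) / (q - r) = ∑ r ∈ Icc 1 q, (q : ℝ) / r := by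
    rw [← hIcc fun r => (q : ℝ) / r, ← sum_range_reflect]
    refine sum_congr rfl fun r hr => ?_
    have hr := mem_range.1 hr
    rw [show r + 1 = q - (q - 1 - r) by omega, Nat.cast_sub (by omega : q - 1 - r ≤ q)]
  rw [sum_add_distrib, hright]
  linarith

theorem sum_range_mul_emod {q : ℕ} {a : ℤ} (ha : IsCoprime a q) (F : ℤ → ℝ) :
    ∑ l ∈ range q, F (l * a % q) = ∑ r ∈ range q, F r := by
  rcases q.eq_zero_or_pos with rfl | hq
  · simp
  have hq0 : (q : ℤ) ≠ 0 := by exact_mod_cast hq.ne'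
  have hcast (l : ℕ) : (((l * a % q).toNat : ℕ) : ℤ) = l * a % q :=
    Int.toNat_of_nonneg (Int.emod_nonneg _ hq0)
  have hinj : Set.InjOn (fun l : ℕ => (l * a % q).toNat) (range q : Set ℕ) := by
    intro l hl l' hl' hll'
    have hdvdmul : (q : ℤ) ∣ (l - l') * a := by
      rw [sub_mul]
      have hmod : l' * a ≡ l * a [ZMOD q] := by
        rw [Int.ModEq, ← hcast l, ← hcast l']
        exact congrArg (Nat.cast (R := ℤ)) hll'.symm
      exact hmod.dvd
    have hdvd : (q : ℤ) ∣ l - l' := ha.symm.dvd_of_dvd_mul_right hdvdmul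
    have := Int.eq_zero_of_abs_lt_dvd hdvd (by
      rw [abs_lt]
      have := mem_range.1 hl
      have := mem_range.1 hl'
      constructor <;> omega)
    omega
  have himage : (range q).image (fun l : ℕ => (l * a % q).toNat) = range q := by
    refine eq_of_subset_of_card_le (image_subset_iff.2 fun l _ => mem_range.2 ?_)
      (card_image_of_injOn hinj).ge
    have := Int.emod_lt_of_pos (l * a) (by exact_mod_cast hq : (0 : ℤ) < q)
    have := hcast l
    omega
  conv_rhs => rw [← himage, sum_image hinj]
  simp only [hcast]

theorem sum_range_mul_mul_emod {q : ℕ} {a : ℤ} (ha : IsCoprime a q) (F : ℤ → ℝ) (W : ℕ) :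
    ∑ l ∈ range (q * W), F (l * a % q) = W * ∑ r ∈ range q, F r := by
  induction W with
  | zero => simp
  | succ W ih =>
    have hshift (l : ℕ) : ((q * W + l : ℕ) : ℤ) * a % q = l * a % q := by
      push_cast
      rw [add_mul, mul_assoc, Int.mul_add_emod_self_left]
    rw [Nat.mul_succ, sum_range_add, ih]
    simp_rw [hshift]
    rw [sum_range_mul_emod ha]
    push_cast
    ring

theorem sub_quarter_le_abs_or {q r e : ℝ} (hr : 0 ≤ r) (hrq : r ≤ q) (he : |e| ≤ 1 / 4) (j : ℤ) :
    r - 1 / 4 ≤ |r + j * q + e| ∨ q - r - 1 / 4 ≤ |r + j * q + e| := by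
  rw [abs_le] at he
  rcases le_or_gt 0 j with hj | hj
  · have hjR : (0 : ℝ) ≤ j := by exact_mod_cast hj
    exact .inl (le_trans (by nlinarith) (le_abs_self _))
  · have hjR : (j : ℝ) ≤ -1 := by exact_mod_cast (by omega : j ≤ -1)
    exact .inr (le_trans (by nlinarith) (neg_le_abs _))

theorem le_of_mul_abs_sub_int_le {g θ : ℝ} (hg : 0 ≤ g) {l q : ℕ} (hq : 0 < q) {a n : ℤ}
    (hl : ¬ (q : ℤ) ∣ l * a) (hθ : |l * (θ - a / q)| ≤ 1 / (4 * q))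
    (hgn : g * |l * θ - n| ≤ 1 / 2) :
    g ≤ 2 / 3 * ((q : ℝ) / (l * a % q : ℤ) + q / (q - (l * a % q : ℤ))) := by
  have hqR : (0 : ℝ) < q := by exact_mod_cast hq
  have hqZ : (0 : ℤ) < q := by exact_mod_cast hq
  set r := l * a % q
  have hr1 : (1 : ℝ) ≤ r := by
    have := Int.emod_nonneg (l * a) hqZ.ne'
    have := mt Int.dvd_of_emod_eq_zero hl
    exact_mod_cast (by omega : 1 ≤ r)
  have hr2 : (1 : ℝ) ≤ q - r := by
    have := Int.emod_lt_of_pos (l * a) hqZ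
    exact_mod_cast (by omega : 1 ≤ q - r)
  have he : |(q : ℝ) * (l * (θ - a / q))| ≤ 1 / 4 := by
    rw [abs_mul, abs_of_pos hqR]
    calc (q : ℝ) * |l * (θ - a / q)| ≤ q * (1 / (4 * q)) := by gcongr
      _ = 1 / 4 := by field_simp
  have hsplit : q * (l * θ - n) = r + (l * a / q - n : ℤ) * q + q * (l * (θ - a / q)) := by
    have hla : (l * a : ℝ) = r + q * (l * a / q : ℤ) := by
      exact_mod_cast (Int.emod_add_mul_ediv (l * a) q).symm
    push_cast
    field_simp
    linear_combination hla
  have hbound {μ : ℝ} (hμ : 1 ≤ μ) (hle : μ - 1 / 4 ≤ |q * (l * θ - n)|) : g ≤ 2 / 3 * (q / μ) := by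
    rw [abs_mul, abs_of_pos hqR] at hle
    rw [← mul_div_assoc, le_div_iff₀ (by linarith)]
    nlinarith [mul_le_mul_of_nonneg_left hle hg]
  have h1 : (0 : ℝ) ≤ q / r := by positivity
  have h2 : (0 : ℝ) ≤ q / (q - r) := by positivity
  have hcases := sub_quarter_le_abs_or (q := q) (r := r)
    (by linarith) (by linarith) he (l * a / q - n)
  rw [← hsplit] at hcases
  rcases hcases with h | h
  · linarith [hbound hr1 h]
  · linarith [hbound hr2 h]

theorem sum_div_one_add_mul_le_log {z : ℝ} (hz : 0 ≤ z) (V : ℕ) :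
    ∑ i ∈ range V, z / (1 + (i + 1) * z) ≤ Real.log (1 + V * z) := by
  induction V with
  | zero => simp
  | succ V ih =>
    have h1 : 0 < 1 + (V : ℝ) * z := by positivity
    have h2 : 0 < 1 + ((V : ℝ) + 1) * z := by positivity
    have hstep : z / (1 + (V + 1) * z) ≤ Real.log (1 + (V + 1) * z) - Real.log (1 + V * z) := by
      rw [← Real.log_div h2.ne' h1.ne']
      refine le_trans (le_of_eq ?_) (Real.one_sub_inv_le_log_of_pos (div_pos h2 h1))
      field_simp
      ring
    rw [sum_range_succ]
    push_cast
    linarith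

theorem sum_one_div_one_add_mul_le {z W : ℝ} (hz : 0 ≤ z) {V : ℕ} (hVW : (V : ℝ) ≤ W) :
    ∑ i ∈ range V, 1 / (1 + (i + 1) * z) ≤ W * (1 + Real.log (1 + W * z)) / (1 + W * z) := by
  have hW : 0 ≤ W := (Nat.cast_nonneg V).trans hVW
  have hterm (i : ℕ) : 1 / (1 + ((i : ℝ) + 1) * z) * (1 + W * z)
      ≤ 1 + W * (z / (1 + ((i : ℝ) + 1) * z)) := by
    have h1 : 1 / (1 + ((i : ℝ) + 1) * z) ≤ 1 :=
      div_le_one_of_le₀ (by nlinarith [mul_nonneg (Nat.cast_nonneg (α := ℝ) i) hz]) (by positivity)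
    have h2 : 1 / (1 + ((i : ℝ) + 1) * z) * (1 + W * z)
        = 1 / (1 + ((i : ℝ) + 1) * z) + W * (z / (1 + ((i : ℝ) + 1) * z)) := by ring
    linarith
  rw [le_div_iff₀ (by positivity), sum_mul]
  calc ∑ i ∈ range V, 1 / (1 + ((i : ℝ) + 1) * z) * (1 + W * z)
      ≤ V + W * ∑ i ∈ range V, z / (1 + ((i : ℝ) + 1) * z) := by
        refine (sum_le_sum fun i _ => hterm i).trans_eq ?_
        rw [sum_add_distrib, mul_sum]
        simp
    _ ≤ W + W * Real.log (1 + W * z) := by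
        have hlog : Real.log (1 + V * z) ≤ Real.log (1 + W * z) := by gcongr
        gcongr
        exact (sum_div_one_add_mul_le_log hz V).trans hlog
    _ = W * (1 + Real.log (1 + W * z)) := by ring

/-- The rescaled distance `1 + 4 H² |θ - ρ|` from a frequency `θ` to a rational `ρ`: the factor by
which `‖squareSum H θ‖ ^ 2` decays away from the centre `ρ` of its major arc. -/
noncomputable def arcScale (H : ℕ) (θ : ℝ) (ρ : ℚ) : ℝ := 1 + 4 * H ^ 2 * |θ - ρ|

/-- The size, up to a constant factor, of `‖squareSum H θ‖ ^ 2` on the major arc around `ρ`. -/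
noncomputable def arcBound (H : ℕ) (θ : ℝ) (ρ : ℚ) : ℝ :=
  H ^ 2 / ρ.den * (1 + Real.log (arcScale H θ ρ)) / arcScale H θ ρ

theorem one_le_arcScale (H : ℕ) (θ : ℝ) (ρ : ℚ) : 1 ≤ arcScale H θ ρ :=
  le_add_of_nonneg_right (by positivity)

theorem two_mul_abs_sub_le_of_lt {H h : ℕ} {θ : ℝ} {ρ : ℚ} (hβ : 8 * H * ρ.den * |θ - ρ| ≤ 1)
    (hh : h < H) : |((2 * h : ℕ) : ℝ) * (θ - ρ)| ≤ 1 / (4 * ρ.den) := by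
  have hhH : (h : ℝ) ≤ H := by exact_mod_cast hh.le
  rw [abs_mul, Nat.abs_cast, le_div_iff₀ (by exact_mod_cast mul_pos four_pos ρ.den_pos)]
  push_cast
  nlinarith [mul_le_mul_of_nonneg_right hhH
    (mul_nonneg (abs_nonneg (θ - ρ)) (Nat.cast_nonneg (α := ℝ) ρ.den))]

theorem sum_not_dvd_le_sum_emod {H : ℕ} {θ : ℝ} {ρ : ℚ} {g : ℕ → ℝ} (hg : ∀ h, 0 ≤ g h)
    (hgr : ∀ h, g h * |(2 * h : ℕ) * θ - round ((2 * h : ℕ) * θ)| ≤ 1 / 2)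
    (hβ : 8 * H * ρ.den * |θ - ρ| ≤ 1) :
    ∑ h ∈ range H with ¬ ρ.den ∣ 2 * h, g h
      ≤ 2 / 3 * ((2 * H / ρ.den + 1 : ℕ) * (2 * ρ.den * (1 + Real.log ρ.den))) := by
  set q := ρ.den
  have hq : 0 < q := ρ.den_pos
  have hcop : IsCoprime ρ.num (q : ℤ) := Int.isCoprime_iff_gcd_eq_one.2 ρ.reduced
  let F : ℤ → ℝ := fun r => q / r + q / (q - r)
  have hF (l : ℕ) : 0 ≤ F (l * ρ.num % q) := by
    have h1 : (0 : ℝ) ≤ (l * ρ.num % q : ℤ) := by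
      exact_mod_cast Int.emod_nonneg _ (by exact_mod_cast hq.ne')
    have h2 : ((l * ρ.num % q : ℤ) : ℝ) ≤ q := by
      exact_mod_cast (Int.emod_lt_of_pos _ (by exact_mod_cast hq)).le
    exact add_nonneg (div_nonneg q.cast_nonneg h1) (div_nonneg q.cast_nonneg (sub_nonneg.2 h2))
  have hterm : ∀ h ∈ {h ∈ range H | ¬ q ∣ 2 * h}, g h ≤ 2 / 3 * F ((2 * h : ℕ) * ρ.num % q) := by
    intro h hh
    obtain ⟨hh, hdvd⟩ := mem_filter.1 hh
    refine le_of_mul_abs_sub_int_le (hg h) hq (fun hdiv => hdvd ?_) ?_ (hgr h)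
    · exact_mod_cast hcop.symm.dvd_of_dvd_mul_right hdiv
    · rw [← Rat.cast_def]
      exact two_mul_abs_sub_le_of_lt hβ (mem_range.1 hh)
  have hextend : ∑ h ∈ range H with ¬ q ∣ 2 * h, F ((2 * h : ℕ) * ρ.num % q)
      ≤ ∑ l ∈ range (q * (2 * H / q + 1)), F (l * ρ.num % q) := by
    rw [← sum_image (g := fun h => 2 * h) (f := fun l : ℕ => F (l * ρ.num % q))
      (fun x _ y _ h => by simpa using h)]
    refine sum_le_sum_of_subset_of_nonneg (fun l hl => ?_) fun _ _ _ => hF _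
    obtain ⟨h, hh, rfl⟩ := mem_image.1 hl
    have hhH := mem_range.1 (mem_filter.1 hh).1
    have := Nat.lt_mul_div_succ (2 * H) hq
    exact mem_range.2 (by omega)
  refine (sum_le_sum hterm).trans ?_
  rw [← mul_sum]
  gcongr
  rw [sum_range_mul_mul_emod hcop] at hextend
  refine hextend.trans ?_
  gcongr
  simpa only [F, Int.cast_natCast] using sum_range_div_add_div_sub_le q

theorem sum_not_dvd_le {H : ℕ} {θ : ℝ} {ρ : ℚ} {g : ℕ → ℝ} (hg : ∀ h, 0 ≤ g h)
    (hgr : ∀ h, g h * |(2 * h : ℕ) * θ - round ((2 * h : ℕ) * θ)| ≤ 1 / 2)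
    (hden : ρ.den ≤ 8 * H) (hβ : 8 * H * ρ.den * |θ - ρ| ≤ 1) :
    ∑ h ∈ range H with ¬ ρ.den ∣ 2 * h, g h ≤ 54 * H * (1 + Real.log H) := by
  refine (sum_not_dvd_le_sum_emod hg hgr hβ).trans ?_
  set q := ρ.den
  have hq : 0 < q := ρ.den_pos
  have hH : 0 < H := by omega
  have hcover : ((2 * H / q + 1 : ℕ) : ℝ) * q ≤ 10 * H := by
    have := Nat.div_mul_le_self (2 * H) q
    exact_mod_cast (by rw [add_mul, one_mul]; omega : (2 * H / q + 1) * q ≤ 10 * H)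
  have hlogq : Real.log q ≤ 3 + Real.log H := by
    have hlog : Real.log q ≤ Real.log (2 ^ 3 * H) :=
      Real.log_le_log (by exact_mod_cast hq) (by norm_num; exact_mod_cast hden)
    rw [Real.log_mul (by norm_num) (by positivity), Real.log_pow] at hlog
    push_cast at hlog
    linarith [Real.log_two_lt_d9]
  have hlogH : 0 ≤ Real.log H := Real.log_natCast_nonneg H
  calc 2 / 3 * (((2 * H / q + 1 : ℕ) : ℝ) * (2 * q * (1 + Real.log q)))
      = 4 / 3 * ((((2 * H / q + 1 : ℕ) : ℝ) * q) * (1 + Real.log q)) := by ring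
    _ ≤ 4 / 3 * ((10 * H) * (4 * (1 + Real.log H))) := by
        have := Real.log_natCast_nonneg q
        gcongr
        linarith
    _ ≤ 54 * H * (1 + Real.log H) := by nlinarith [mul_nonneg (Nat.cast_nonneg (α := ℝ) H) hlogH]

theorem le_div_one_add_mul_of_den_mul_eq {H h i : ℕ} {θ g : ℝ} {ρ : ℚ} (hgH : g ≤ H)
    (hgr : g * |(2 * h : ℕ) * θ - round ((2 * h : ℕ) * θ)| ≤ 1 / 2)
    (hh : h < H) (hβ : 8 * H * ρ.den * |θ - ρ| ≤ 1) (hi : 2 * h = ρ.den * i) :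
    g ≤ 2 * H * (1 / (1 + i * (2 * ρ.den * H * |θ - ρ|))) := by
  have hmul : ((2 * h : ℕ) : ℝ) * θ = (i * ρ.num : ℤ) + (2 * h : ℕ) * (θ - ρ) := by
    have hnum : (ρ.den : ℝ) * ρ = ρ.num := by
      rw [mul_comm]
      exact_mod_cast Rat.mul_den_eq_num ρ
    rw [hi]
    push_cast
    rw [← hnum]
    ring
  have hround : round (((2 * h : ℕ) : ℝ) * θ) = i * ρ.num := by
    have hden : (1 : ℝ) ≤ ρ.den := by exact_mod_cast ρ.den_pos
    have hsmall : |((2 * h : ℕ) : ℝ) * (θ - ρ)| ≤ 1 / 4 := (two_mul_abs_sub_le_of_lt hβ hh).trans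
      (one_div_le_one_div_of_le four_pos (by linarith))
    rw [abs_le] at hsmall
    rw [hmul, round_intCast_add, add_eq_left, round_eq_zero_iff]
    constructor <;> linarith
  rw [hround, hmul, add_sub_cancel_left, abs_mul, Nat.abs_cast, hi] at hgr
  push_cast at hgr
  rw [mul_one_div, le_div_iff₀ (by positivity)]
  nlinarith [mul_le_mul_of_nonneg_left hgr (Nat.cast_nonneg (α := ℝ) H)]

theorem sum_dvd_le {H : ℕ} {θ : ℝ} {ρ : ℚ} {g : ℕ → ℝ} (hgH : ∀ h, g h ≤ H)
    (hgr : ∀ h, g h * |(2 * h : ℕ) * θ - round ((2 * h : ℕ) * θ)| ≤ 1 / 2)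
    (hβ : 8 * H * ρ.den * |θ - ρ| ≤ 1) :
    ∑ h ∈ range H with ρ.den ∣ 2 * h, g h ≤ 2 * H + 4 * arcBound H θ ρ := by
  set V := 2 * H / ρ.den
  set z := 2 * ρ.den * H * |θ - ρ|
  have hz : 0 ≤ z := by positivity
  have hterm : ∀ h ∈ {h ∈ range H | ρ.den ∣ 2 * h},
      g h ≤ 2 * H * (1 / (1 + (2 * h / ρ.den : ℕ) * z)) := fun h hh =>
    le_div_one_add_mul_of_den_mul_eq (hgH h) (hgr h) (mem_range.1 (mem_filter.1 hh).1) hβ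
      (Nat.mul_div_cancel' (mem_filter.1 hh).2).symm
  have hreindex : ∑ h ∈ range H with ρ.den ∣ 2 * h, 1 / (1 + (2 * h / ρ.den : ℕ) * z)
      ≤ ∑ i ∈ range (V + 1), 1 / (1 + i * z) := by
    rw [← sum_image (g := fun h => 2 * h / ρ.den) (f := fun i : ℕ => 1 / (1 + i * z))]
    · refine sum_le_sum_of_subset_of_nonneg (fun l hl => ?_) fun _ _ _ => by positivity
      obtain ⟨h, hh, rfl⟩ := mem_image.1 hl
      have := mem_range.1 (mem_filter.1 hh).1
      exact mem_range.2 (Nat.lt_succ_of_le (Nat.div_le_div_right (by omega)))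
    · intro x hx y hy hxy
      have := Nat.div_left_inj (mem_filter.1 hx).2 (mem_filter.1 hy).2 |>.1 hxy
      omega
  have hdecay := sum_one_div_one_add_mul_le (W := 2 * H / ρ.den) hz (V := V)
    (by exact_mod_cast Nat.cast_div_le (α := ℝ) (m := 2 * H) (n := ρ.den))
  have hscale : 1 + 2 * (H : ℝ) / ρ.den * z = arcScale H θ ρ := by
    have : (ρ.den : ℝ) ≠ 0 := by exact_mod_cast ρ.den_ne_zero
    simp only [arcScale, z]
    field_simp
    ring
  rw [hscale] at hdecay
  rw [sum_range_succ'] at hreindex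
  push_cast at hreindex
  rw [zero_mul, add_zero, div_one] at hreindex
  calc ∑ h ∈ range H with ρ.den ∣ 2 * h, g h
      ≤ 2 * H * ∑ h ∈ range H with ρ.den ∣ 2 * h, 1 / (1 + (2 * h / ρ.den : ℕ) * z) := by
        rw [mul_sum]
        exact sum_le_sum hterm
    _ ≤ 2 * H * (2 * H / ρ.den * (1 + Real.log (arcScale H θ ρ)) / arcScale H θ ρ + 1) := by
        gcongr
        linarith
    _ = 2 * H + 4 * arcBound H θ ρ := by rw [arcBound]; ring

theorem exists_rat_norm_squareSum_sq_le (θ : ℝ) {H : ℕ} (hH : 0 < H) :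
    ∃ ρ : ℚ, ‖squareSum H θ‖ ^ 2
      ≤ 128 * H * (1 + Real.log H) + 8 * arcBound H θ ρ := by
  obtain ⟨ρ, hρ, hden⟩ := Real.exists_rat_abs_sub_le_and_den_le θ (n := 8 * H) (by omega)
  have hβ : 8 * H * ρ.den * |θ - ρ| ≤ 1 := by
    have hq : (0 : ℝ) < ρ.den := by exact_mod_cast ρ.den_pos
    rw [le_div_iff₀ (by positivity)] at hρ
    push_cast at hρ
    nlinarith [mul_nonneg (abs_nonneg (θ - ρ)) hq.le]
  let g : ℕ → ℝ := fun h => ‖∑ n ∈ range (H - h), expi (n * ((2 * h : ℕ) * θ))‖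
  have hgr (h) : g h * |(2 * h : ℕ) * θ - round ((2 * h : ℕ) * θ)| ≤ 1 / 2 :=
    norm_sum_expi_mul_abs_sub_round_le _ _
  have hgH (h) : g h ≤ H :=
    (norm_sum_expi_mul_le_card _ _).trans (by exact_mod_cast Nat.sub_le _ _)
  have hmajor := sum_dvd_le hgH hgr hβ
  have hminor := sum_not_dvd_le (fun h => norm_nonneg _) hgr hden hβ
  have hweyl : _ ≤ 2 * ∑ h ∈ range H, g h := norm_squareSum_sq_le_sum_linear θ H
  rw [← sum_filter_add_sum_filter_not (range H) (ρ.den ∣ 2 * ·) g] at hweyl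
  refine ⟨ρ, hweyl.trans ?_⟩
  nlinarith [mul_nonneg (Nat.cast_nonneg (α := ℝ) H) (Real.log_natCast_nonneg H)]

/-! ### Density increments and Fourier mass -/

/-- The number of elements of `A` on the progression `y, y + d, …, y + (ℓ - 1) * d`. -/
def progressionCount (A : Finset ℤ) (d ℓ : ℕ) (y : ℤ) : ℕ := #{t ∈ range ℓ | y + d * (t : ℕ) ∈ A}

/-- No translate of the progression `0, d, …, (ℓ - 1) * d` meets `A ⊆ [0, N)` in relative density
more than `1 + ν` times the density of `A`. -/
def HasNoIncrement (A : Finset ℤ) (N : ℕ) (ν : ℝ) (d ℓ : ℕ) : Prop :=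
  ∀ y, (progressionCount A d ℓ y : ℝ) ≤ (1 + ν) * (#A / N) * ℓ

/-- The balanced function of `A ⊆ [0, N)`: its indicator minus its density. -/
noncomputable def balanced (A : Finset ℤ) (N : ℕ) (x : ℤ) : ℝ :=
  (if x ∈ A then 1 else 0) - (#A / N : ℝ) * (if x ∈ Ico (0 : ℤ) N then 1 else 0)

/-- The discrete Fourier transform of the balanced function modulo `2 * N`. The modulus leaves
enough room for the shifts of `[0, N)` by at most `N` not to wrap around. -/
noncomputable def balancedFourier (A : Finset ℤ) (N : ℕ) (k : ℕ) : ℂ :=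
  ∑ x ∈ Ico (0 : ℤ) N, (balanced A N x : ℂ) * expi (x * k / (2 * N : ℕ))

section ProgressionCount

variable {A : Finset ℤ} {N d ℓ : ℕ}

theorem cast_progressionCount (A : Finset ℤ) (d ℓ : ℕ) (y : ℤ) :
    (progressionCount A d ℓ y : ℝ) = ∑ t ∈ range ℓ, if y + d * (t : ℕ) ∈ A then 1 else 0 := by
  simp [progressionCount]

theorem progressionCount_le (A : Finset ℤ) (d ℓ : ℕ) (y : ℤ) : progressionCount A d ℓ y ≤ ℓ :=
  (card_filter_le _ _).trans (card_range ℓ).le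

theorem sum_Ico_neg_add_eq {E : Type*} [AddCommMonoid E] (F : ℤ → E)
    (hF : ∀ x ∉ Ico (0 : ℤ) N, F x = 0) {s : ℤ} (hs : 0 ≤ s) (hsN : s ≤ N) :
    ∑ y ∈ Ico (-(N : ℤ)) N, F (y + s) = ∑ x ∈ Ico (0 : ℤ) N, F x := by
  rw [← sum_image (f := F) (g := (· + s)) fun x _ y _ h => by simpa using h, image_add_right_Ico]
  refine (sum_subset (fun x hx => ?_) fun x _ hx => hF x hx).symm
  rw [mem_Ico] at hx ⊢
  omega

theorem mul_le_of_mem_range (hd : d * ℓ ≤ N) {t : ℕ} (ht : t ∈ range ℓ) : (d * t : ℤ) ≤ N := by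
  exact_mod_cast (Nat.mul_le_mul_left d (mem_range.1 ht).le).trans hd

theorem sum_Ico_mem (hA : A ⊆ Ico (0 : ℤ) N) :
    ∑ x ∈ Ico (0 : ℤ) N, (if x ∈ A then (1 : ℝ) else 0) = #A := by
  rw [← sum_filter, filter_mem_eq_inter, inter_eq_right.2 hA, sum_const, nsmul_one]

theorem sum_progressionCount (hA : A ⊆ Ico (0 : ℤ) N) (hd : d * ℓ ≤ N) :
    ∑ y ∈ Ico (-(N : ℤ)) N, (progressionCount A d ℓ y : ℝ) = ℓ * #A := by
  have hterm : ∀ t ∈ range ℓ,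
      ∑ y ∈ Ico (-(N : ℤ)) N, (if y + d * (t : ℕ) ∈ A then (1 : ℝ) else 0) = #A := fun t ht => by
    rw [← sum_Ico_mem hA]
    exact sum_Ico_neg_add_eq (fun x : ℤ => if x ∈ A then (1 : ℝ) else 0)
      (fun x hx => if_neg fun h => hx (hA h)) (by positivity) (mul_le_of_mem_range hd ht)
  simp_rw [cast_progressionCount]
  rw [sum_comm, sum_congr rfl hterm, sum_const, card_range, nsmul_eq_mul]

theorem progressionCount_mul_sub_eq_zero (hA : A ⊆ Ico (0 : ℤ) N) {y : ℤ}
    (hy : y ∉ Ico (-(d * ℓ : ℤ)) 0 ∪ Ico (N - d * ℓ : ℤ) N) (hyN : y ∈ Ico (-(N : ℤ)) N) :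
    (progressionCount A d ℓ y : ℝ) * (ℓ - progressionCount (Ico (0 : ℤ) N) d ℓ y) = 0 := by
  have hdt {t : ℕ} (ht : t ∈ range ℓ) : (d * t : ℤ) ≤ d * ℓ := by
    exact_mod_cast Nat.mul_le_mul_left d (mem_range.1 ht).le
  rw [mem_union, mem_Ico, mem_Ico, not_or] at hy
  rw [mem_Ico] at hyN
  rcases lt_or_ge y 0 with hy0 | hy0
  · have hempty : progressionCount A d ℓ y = 0 := by
      refine card_eq_zero.2 (filter_eq_empty_iff.2 fun t ht hyA => ?_)
      have := mem_Ico.1 (hA hyA)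
      have := hdt ht
      omega
    rw [hempty, Nat.cast_zero, zero_mul]
  · have hfull : progressionCount (Ico (0 : ℤ) N) d ℓ y = ℓ := by
      rw [progressionCount, filter_true_of_mem, card_range]
      intro t ht
      have := hdt ht
      have : (0 : ℤ) ≤ d * t := by positivity
      exact mem_Ico.2 (by omega)
    rw [hfull, sub_self, mul_zero]

theorem sum_progressionCount_mul_sub_le (hA : A ⊆ Ico (0 : ℤ) N) :
    ∑ y ∈ Ico (-(N : ℤ)) N,
        (progressionCount A d ℓ y : ℝ) * (ℓ - progressionCount (Ico (0 : ℤ) N) d ℓ y)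
      ≤ 2 * (d * ℓ) * ℓ ^ 2 := by
  set E := Ico (-(d * ℓ : ℤ)) 0 ∪ Ico (N - d * ℓ : ℤ) N
  have hterm : ∀ y ∈ Ico (-(N : ℤ)) N,
      (progressionCount A d ℓ y : ℝ) * (ℓ - progressionCount (Ico (0 : ℤ) N) d ℓ y)
        ≤ if y ∈ E then (ℓ ^ 2 : ℝ) else 0 := by
    intro y hy
    split_ifs with hyE
    · rw [sq]
      exact mul_le_mul (by exact_mod_cast progressionCount_le A d ℓ y)
        (sub_le_self _ (Nat.cast_nonneg _))
        (sub_nonneg.2 (by exact_mod_cast progressionCount_le _ d ℓ y)) (Nat.cast_nonneg _)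
    · exact (progressionCount_mul_sub_eq_zero hA hyE hy).le
  have hcard : #E ≤ 2 * (d * ℓ) := by
    refine (card_union_le _ _).trans ?_
    rw [Int.card_Ico, Int.card_Ico]
    have : ((d * ℓ : ℕ) : ℤ) = d * ℓ := by push_cast; ring
    omega
  calc ∑ y ∈ Ico (-(N : ℤ)) N,
        (progressionCount A d ℓ y : ℝ) * (ℓ - progressionCount (Ico (0 : ℤ) N) d ℓ y)
      ≤ ∑ y ∈ Ico (-(N : ℤ)) N, if y ∈ E then (ℓ ^ 2 : ℝ) else 0 := sum_le_sum hterm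
    _ ≤ ∑ y ∈ E, (ℓ ^ 2 : ℝ) := by
        rw [← sum_filter, filter_mem_eq_inter]
        exact sum_le_sum_of_subset_of_nonneg inter_subset_right fun _ _ _ => by positivity
    _ ≤ 2 * (d * ℓ) * ℓ ^ 2 := by
        rw [sum_const, nsmul_eq_mul]
        gcongr
        exact_mod_cast hcard

end ProgressionCount

section Balanced

variable {A : Finset ℤ} {N : ℕ}

theorem balanced_eq_zero (hA : A ⊆ Ico (0 : ℤ) N) {x : ℤ} (hx : x ∉ Ico (0 : ℤ) N) :
    balanced A N x = 0 := by
  rw [balanced, if_neg hx, if_neg fun h => hx (hA h), mul_zero, sub_zero]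

theorem sum_balanced_progression (A : Finset ℤ) (N d ℓ : ℕ) (y : ℤ) :
    ∑ t ∈ range ℓ, balanced A N (y + d * t)
      = progressionCount A d ℓ y - #A / N * progressionCount (Ico (0 : ℤ) N) d ℓ y := by
  simp only [balanced, cast_progressionCount, mul_sum, sum_sub_distrib]

theorem sum_sq_sum_balanced_progression_le (hN : 0 < N) (hA : A ⊆ Ico (0 : ℤ) N) {ν : ℝ}
    {d ℓ : ℕ} (hd : d * ℓ ≤ N) (hdν : 4 * (d * ℓ : ℝ) ≤ ν * #A)
    (hinc : HasNoIncrement A N ν d ℓ) :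
    ∑ y ∈ Ico (-(N : ℤ)) N, (∑ t ∈ range ℓ, balanced A N (y + d * t)) ^ 2
      ≤ 2 * ν * (#A / N) * #A * ℓ ^ 2 := by
  set α : ℝ := #A / N
  have hα : 0 ≤ α := by positivity
  have hαN : α * N = #A := div_mul_cancel₀ _ (by exact_mod_cast hN.ne')
  let a (y : ℤ) : ℝ := progressionCount A d ℓ y
  let p (y : ℤ) : ℝ := progressionCount (Ico (0 : ℤ) N) d ℓ y
  have hterm (y : ℤ) : (∑ t ∈ range ℓ, balanced A N (y + d * t)) ^ 2
      ≤ (1 + ν) * α * ℓ * a y - 2 * α * ℓ * a y + 2 * α * (a y * (ℓ - p y)) + α ^ 2 * ℓ * p y := by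
    have ha : a y * a y ≤ (1 + ν) * α * ℓ * a y :=
      mul_le_mul_of_nonneg_right (hinc y) (Nat.cast_nonneg _)
    have hp : α ^ 2 * (p y * p y) ≤ α ^ 2 * (ℓ * p y) := by
      gcongr
      exact Nat.cast_le.2 (progressionCount_le _ d ℓ y)
    rw [sum_balanced_progression]
    change (a y - α * p y) ^ 2 ≤ _
    linarith
  have hsuma : ∑ y ∈ Ico (-(N : ℤ)) N, a y = ℓ * #A := sum_progressionCount hA hd
  have hsump : ∑ y ∈ Ico (-(N : ℤ)) N, p y = ℓ * N := by
    simpa using sum_progressionCount (Subset.refl (Ico (0 : ℤ) N)) hd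
  calc ∑ y ∈ Ico (-(N : ℤ)) N, (∑ t ∈ range ℓ, balanced A N (y + d * t)) ^ 2
      ≤ ∑ y ∈ Ico (-(N : ℤ)) N, ((1 + ν) * α * ℓ * a y - 2 * α * ℓ * a y
          + 2 * α * (a y * (ℓ - p y)) + α ^ 2 * ℓ * p y) := sum_le_sum fun y _ => hterm y
    _ = (1 + ν) * α * ℓ * (ℓ * #A) - 2 * α * ℓ * (ℓ * #A)
          + 2 * α * (∑ y ∈ Ico (-(N : ℤ)) N, a y * (ℓ - p y)) + α ^ 2 * ℓ * (ℓ * N) := by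
        simp only [sum_add_distrib, sum_sub_distrib, ← mul_sum, hsuma, hsump]
    _ ≤ (1 + ν) * α * ℓ * (ℓ * #A) - 2 * α * ℓ * (ℓ * #A)
          + 2 * α * (2 * (d * ℓ) * ℓ ^ 2) + α ^ 2 * ℓ * (ℓ * N) := by
        gcongr
        exact sum_progressionCount_mul_sub_le hA
    _ = ν * α * #A * ℓ ^ 2 + α * ℓ ^ 2 * (4 * (d * ℓ)) := by
        rw [← hαN]
        ring
    _ ≤ ν * α * #A * ℓ ^ 2 + α * ℓ ^ 2 * (ν * #A) := by gcongr
    _ = 2 * ν * α * #A * ℓ ^ 2 := by ring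

theorem sum_progression_fourier (hA : A ⊆ Ico (0 : ℤ) N) {d ℓ : ℕ} (hd : d * ℓ ≤ N) (k : ℕ) :
    ∑ y ∈ Ico (-(N : ℤ)) N, (∑ t ∈ range ℓ, balanced A N (y + d * t) : ℝ) *
        expi (y * k / (2 * N : ℕ))
      = conj (∑ t ∈ range ℓ, expi (k * d * t / (2 * N : ℕ))) * balancedFourier A N k := by
  simp_rw [Complex.ofReal_sum, sum_mul]
  rw [sum_comm, map_sum, sum_mul]
  refine sum_congr rfl fun t ht => ?_
  rw [balancedFourier, mul_sum, ← expi_neg]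
  rw [← sum_Ico_neg_add_eq
    (fun x : ℤ => expi (-(k * d * t / (2 * N : ℕ))) * ((balanced A N x : ℂ) *
      expi (x * k / (2 * N : ℕ)))) (fun x hx => by simp [balanced_eq_zero hA hx])
    (by positivity : (0 : ℤ) ≤ d * t) (mul_le_of_mem_range hd ht)]
  refine sum_congr rfl fun y _ => ?_
  rw [mul_left_comm, ← expi_add]
  push_cast
  ring_nf

theorem sum_norm_sq_mul_balancedFourier_sq (hA : A ⊆ Ico (0 : ℤ) N) {d ℓ : ℕ} (hd : d * ℓ ≤ N)
    (hN : 0 < N) :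
    ∑ k ∈ range (2 * N),
        (‖∑ t ∈ range ℓ, expi (k * d * t / (2 * N : ℕ))‖ * ‖balancedFourier A N k‖) ^ 2
      = (2 * N : ℕ) *
        ∑ y ∈ Ico (-(N : ℤ)) N, (∑ t ∈ range ℓ, balanced A N (y + d * t)) ^ 2 := by
  have hsep : ∀ x ∈ Ico (-(N : ℤ)) N, ∀ y ∈ Ico (-(N : ℤ)) N,
      ((2 * N : ℕ) : ℤ) ∣ x - y → x = y := by
    intro x hx y hy hxy
    rw [mem_Ico] at hx hy
    have := Int.eq_zero_of_abs_lt_dvd hxy (by rw [abs_lt]; push_cast; omega)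
    omega
  have hparseval := sum_norm_sq_fourier (Ico (-(N : ℤ)) N) (M := 2 * N) (by omega) (fun y => y)
    hsep fun y => ((∑ t ∈ range ℓ, balanced A N (y + d * t) : ℝ) : ℂ)
  simp_rw [Complex.norm_real, Real.norm_eq_abs, sq_abs] at hparseval
  rw [← hparseval]
  refine sum_congr rfl fun k _ => ?_
  rw [sum_progression_fourier hA hd, norm_mul, RCLike.norm_conj]

theorem sum_balancedFourier_sq_le_of_hasNoIncrement (hN : 0 < N) (hA : A ⊆ Ico (0 : ℤ) N)
    {ν : ℝ} {d ℓ : ℕ} (hℓ : 0 < ℓ) (hd : d * ℓ ≤ N) (hdν : 4 * (d * ℓ : ℝ) ≤ ν * #A)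
    (hinc : HasNoIncrement A N ν d ℓ) {Γ : Finset ℕ} (hΓ : Γ ⊆ range (2 * N))
    (hgeo : ∀ k ∈ Γ, (ℓ : ℝ) / 2 ≤ ‖∑ t ∈ range ℓ, expi (k * d * t / (2 * N : ℕ))‖) :
    ∑ k ∈ Γ, ‖balancedFourier A N k‖ ^ 2 ≤ 16 * ν * #A ^ 2 := by
  have hscaled : (ℓ : ℝ) ^ 2 / 4 * ∑ k ∈ Γ, ‖balancedFourier A N k‖ ^ 2
      ≤ (2 * N : ℕ) * (2 * ν * (#A / N) * #A * ℓ ^ 2) :=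
    calc (ℓ : ℝ) ^ 2 / 4 * ∑ k ∈ Γ, ‖balancedFourier A N k‖ ^ 2
        = ∑ k ∈ Γ, ((ℓ : ℝ) / 2 * ‖balancedFourier A N k‖) ^ 2 := by
          rw [mul_sum]
          exact sum_congr rfl fun k _ => by ring
      _ ≤ ∑ k ∈ Γ,
            (‖∑ t ∈ range ℓ, expi (k * d * t / (2 * N : ℕ))‖ * ‖balancedFourier A N k‖) ^ 2 := by
          gcongr with k hk
          exact hgeo k hk
      _ ≤ _ := sum_le_sum_of_subset_of_nonneg hΓ fun _ _ _ => by positivity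
      _ ≤ _ := by
          rw [sum_norm_sq_mul_balancedFourier_sq hA hd hN]
          gcongr
          exact sum_sq_sum_balanced_progression_le hN hA hd hdν hinc
  have hℓ2 : (0 : ℝ) < ℓ ^ 2 / 4 := by positivity
  refine le_of_mul_le_mul_left (hscaled.trans_eq ?_) hℓ2
  push_cast
  field_simp
  ring

end Balanced

theorem half_le_norm_sum_expi_mul {x : ℝ} {ℓ : ℕ} (hx : |x| * ℓ ≤ 1 / 8) :
    (ℓ : ℝ) / 2 ≤ ‖∑ t ∈ range ℓ, expi (x * t)‖ := by
  have hre : ∀ t ∈ range ℓ, (1 / 2 : ℝ) ≤ (expi (x * t)).re := by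
    intro t ht
    have hxt : |x| * t ≤ 1 / 8 :=
      (mul_le_mul_of_nonneg_left (by exact_mod_cast (mem_range.1 ht).le) (abs_nonneg x)).trans hx
    have hangle : |2 * Real.pi * (x * t)| ≤ 1 := by
      rw [abs_mul, abs_of_pos Real.two_pi_pos, abs_mul x, Nat.abs_cast]
      nlinarith [Real.pi_le_four, Real.pi_pos, mul_nonneg (abs_nonneg x) (Nat.cast_nonneg t)]
    rw [expi_eq_exp, Complex.exp_ofReal_mul_I_re]
    linarith [Real.one_sub_sq_div_two_le_cos (x := 2 * Real.pi * (x * t)),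
      (sq_le_one_iff_abs_le_one _).2 hangle]
  calc (ℓ : ℝ) / 2 = ∑ _t ∈ range ℓ, (1 / 2 : ℝ) := by simp; ring
    _ ≤ ∑ t ∈ range ℓ, (expi (x * t)).re := sum_le_sum hre
    _ ≤ _ := by
      rw [← Complex.re_sum]
      exact Complex.re_le_norm _

theorem half_le_norm_sum_expi_of_approx {k M ℓ : ℕ} (ρ : ℚ)
    (h : |(k : ℝ) / M - ρ| * ρ.den ^ 2 * ℓ ≤ 1 / 8) :
    (ℓ : ℝ) / 2 ≤ ‖∑ t ∈ range ℓ, expi (k * (ρ.den ^ 2 : ℕ) * t / M)‖ := by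
  have hshift (t : ℕ) : expi (k * (ρ.den ^ 2 : ℕ) * t / M)
      = expi ((((k : ℝ) / M - ρ) * ρ.den ^ 2) * t) := by
    have hnum : (ρ : ℝ) * ρ.den = ρ.num := by exact_mod_cast Rat.mul_den_eq_num ρ
    have hsplit : (k : ℝ) * (ρ.den ^ 2 : ℕ) * t / M
        = (((k : ℝ) / M - ρ) * ρ.den ^ 2) * t + ((ρ.num * ρ.den * t : ℤ) : ℝ) := by
      push_cast
      rw [← hnum]
      ring
    rw [hsplit, expi_add, expi_intCast, mul_one]
  simp_rw [hshift]
  refine half_le_norm_sum_expi_mul ?_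
  rwa [abs_mul, abs_of_nonneg (by positivity : (0 : ℝ) ≤ (ρ.den : ℝ) ^ 2)]

/-! ### Correlation with the squares -/

/-- `A` is free of non-zero square differences; the analogue of `NoSquareDiff` for integer sets,
which may be translated and rescaled by squares. -/
def SquareDifferenceFree (A : Finset ℤ) : Prop := ∀ x ∈ A, ∀ n : ℕ, 0 < n → x + n ^ 2 ∉ A

/-- No interval of length at most `N / 8` contains more than a quarter of `A ⊆ [0, N)`. -/
def IsSpread (A : Finset ℤ) (N : ℕ) : Prop :=
  ∀ (u : ℤ) (L : ℕ), 8 * L ≤ N → (#(A ∩ Ico u (u + L)) : ℝ) ≤ #A / 4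

/-- The correlation of the balanced function of `A ⊆ [0, N)` with its shift by `s`. -/
noncomputable def autocorrelation (A : Finset ℤ) (N s : ℕ) : ℝ :=
  ∑ x ∈ Ico (0 : ℤ) N, balanced A N x * balanced A N (x + s)

section Spread

variable {A : Finset ℤ} {N : ℕ}

theorem card_inter_Ico_add_mul_le {ℓ : ℕ} {b : ℝ}
    (hb : ∀ y : ℤ, (progressionCount A 1 ℓ y : ℝ) ≤ b) (u : ℤ) (w : ℕ) :
    (#(A ∩ Ico u (u + w * ℓ)) : ℝ) ≤ w * b := by
  induction w with
  | zero => simp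
  | succ w ih =>
    set v := u + w * ℓ
    have hcover : A ∩ Ico u (u + (w + 1 : ℕ) * ℓ) ⊆ (A ∩ Ico u v) ∪
        ({t ∈ range ℓ | v + (1 : ℕ) * (t : ℕ) ∈ A}).image fun t : ℕ => v + (1 : ℕ) * (t : ℤ) := by
      intro x hx
      rw [mem_inter, mem_Ico, Nat.cast_add_one, add_mul, one_mul, ← add_assoc] at hx
      obtain ⟨hxA, hux, hxu⟩ := hx
      rw [mem_union, mem_inter, mem_Ico, mem_image]
      rcases lt_or_ge x v with hxv | hvx
      · exact .inl ⟨hxA, hux, hxv⟩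
      · have hx : v + (1 : ℕ) * ((x - v).toNat : ℤ) = x := by
          rw [Int.toNat_of_nonneg (by omega), Nat.cast_one, one_mul, add_sub_cancel]
        refine .inr ⟨(x - v).toNat, mem_filter.2 ⟨mem_range.2 (by omega), ?_⟩, hx⟩
        rwa [hx]
    have hcard : (#(A ∩ Ico u (u + (w + 1 : ℕ) * ℓ)) : ℝ)
        ≤ #(A ∩ Ico u v) + progressionCount A 1 ℓ v := by
      exact_mod_cast (card_le_card hcover).trans ((card_union_le _ _).trans
        (Nat.add_le_add_left card_image_le _))
    have hsucc : ((w + 1 : ℕ) : ℝ) * b = w * b + b := by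
      push_cast
      ring
    linarith [hb v]

theorem HasNoIncrement.isSpread {ν : ℝ} {ℓ : ℕ} (h : HasNoIncrement A N ν 1 ℓ) (hν : ν ≤ 1 / 2)
    (hℓ : 0 < ℓ) (hℓN : 100 * ℓ ≤ N) : IsSpread A N := by
  intro u L hL
  have hN : (N : ℝ) ≠ 0 := by exact_mod_cast (by omega : N ≠ 0)
  set w := L / ℓ + 1
  have hLw : L ≤ w * ℓ := by
    rw [mul_comm]
    exact (Nat.lt_mul_div_succ L hℓ).le
  have hwN : (w : ℝ) * ℓ ≤ N * (27 / 200) := by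
    have hnat : 200 * (w * ℓ) ≤ 27 * N := by
      have := Nat.div_mul_le_self L ℓ
      rw [add_mul, one_mul]
      omega
    have : (200 : ℝ) * (w * ℓ) ≤ 27 * N := by exact_mod_cast hnat
    linarith
  calc (#(A ∩ Ico u (u + L)) : ℝ)
      ≤ #(A ∩ Ico u (u + w * ℓ)) := by
        have : (L : ℤ) ≤ w * ℓ := by exact_mod_cast hLw
        exact_mod_cast card_le_card (inter_subset_inter_left (Ico_subset_Ico_right (by omega)))
    _ ≤ w * ((1 + ν) * (#A / N) * ℓ) := card_inter_Ico_add_mul_le h u w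
    _ = (1 + ν) * (#A / N) * (w * ℓ) := by ring
    _ ≤ (1 + 1 / 2) * (#A / N) * (N * (27 / 200)) := by gcongr
    _ = #A * (81 / 400) := by field_simp; ring
    _ ≤ #A / 4 := by linarith [Nat.cast_nonneg (α := ℝ) #A]

theorem IsSpread.le_card_filter_notMem (h : IsSpread A N) (u : ℤ) {L : ℕ} (hL : 8 * L ≤ N) :
    3 / 4 * (#A : ℝ) ≤ #{x ∈ A | x ∉ Ico u (u + L)} := by
  have hsplit : (#A : ℝ) = #(A ∩ Ico u (u + L)) + #{x ∈ A | x ∉ Ico u (u + L)} := by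
    rw [← filter_mem_eq_inter]
    exact_mod_cast (card_filter_add_card_filter_not _).symm
  linarith [h u L hL]

theorem balanced_mul_balanced_add_le {s : ℕ} (hs : ∀ x ∈ A, x + s ∉ A) {x : ℤ}
    (hx : x ∈ Ico (0 : ℤ) N) :
    balanced A N x * balanced A N (x + s) ≤ (#A / N) ^ 2
      - #A / N * (if x ∈ A ∧ x + s ∈ Ico (0 : ℤ) N then 1 else 0)
      - #A / N * (if x + s ∈ A then 1 else 0) := by
  simp only [balanced, if_pos hx]
  by_cases hxA : x ∈ A <;> by_cases hxs : x + s ∈ A <;> by_cases hxN : x + s ∈ Ico (0 : ℤ) N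
  all_goals first | exact absurd hxs (hs x hxA) | simp only [hxA, hxs, hxN, and_self, and_true,
    and_false, if_true, if_false]
  all_goals nlinarith

theorem IsSpread.autocorrelation_le (h : IsSpread A N) (hA : A ⊆ Ico (0 : ℤ) N) {s : ℕ}
    (hs : ∀ x ∈ A, x + s ∉ A) (hsN : 8 * s ≤ N) :
    autocorrelation A N s ≤ -(#A / N * #A / 2) := by
  have hα : (0 : ℝ) ≤ #A / N := by positivity
  have hlow : 3 / 4 * (#A : ℝ)
      ≤ ∑ x ∈ Ico (0 : ℤ) N, if x ∈ A ∧ x + s ∈ Ico (0 : ℤ) N then 1 else 0 := by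
    refine (h.le_card_filter_notMem (N - s) hsN).trans ?_
    rw [sum_boole]
    refine Nat.cast_le.2 (card_le_card fun x hx => ?_)
    obtain ⟨hxA, hx⟩ := mem_filter.1 hx
    have hxN := mem_Ico.1 (hA hxA)
    rw [mem_Ico] at hx
    exact mem_filter.2 ⟨hA hxA, hxA, mem_Ico.2 (by omega)⟩
  have hhigh : 3 / 4 * (#A : ℝ) ≤ ∑ x ∈ Ico (0 : ℤ) N, if x + s ∈ A then 1 else 0 := by
    refine (h.le_card_filter_notMem 0 hsN).trans ?_
    rw [sum_boole]
    refine Nat.cast_le.2 (card_le_card_of_injOn (· - (s : ℤ)) (fun x hx => ?_)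
      fun x _ y _ => sub_left_injective.eq_iff.1)
    obtain ⟨hxA, hx⟩ := mem_filter.1 hx
    have hxN := mem_Ico.1 (hA hxA)
    rw [mem_Ico] at hx
    exact mem_filter.2 ⟨mem_Ico.2 (by dsimp only; omega), by simpa using hxA⟩
  have hsq : ∑ _x ∈ Ico (0 : ℤ) N, (#A / N : ℝ) ^ 2 = #A / N * #A := by
    rw [sum_const, Int.card_Ico, nsmul_eq_mul, sub_zero, Int.toNat_natCast]
    rcases eq_or_ne (N : ℝ) 0 with hN | hN
    · simp [hN]
    · field_simp
  refine (sum_le_sum fun x hx => balanced_mul_balanced_add_le hs hx).trans ?_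
  rw [sum_sub_distrib, sum_sub_distrib, ← mul_sum, ← mul_sum, hsq]
  nlinarith [mul_le_mul_of_nonneg_left hlow hα, mul_le_mul_of_nonneg_left hhigh hα]

end Spread

section Correlation

variable {A : Finset ℤ} {N : ℕ}

theorem norm_balancedFourier_sq_mul_expi (A : Finset ℤ) (N s k : ℕ) :
    (‖balancedFourier A N k‖ ^ 2 : ℂ) * expi (k * s / (2 * N : ℕ))
      = ∑ x ∈ Ico (0 : ℤ) N, ∑ y ∈ Ico (0 : ℤ) N, ((balanced A N x * balanced A N y : ℝ) : ℂ) *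
          expi ((x - y + s : ℤ) * k / (2 * N : ℕ)) := by
  rw [← Complex.mul_conj', balancedFourier, map_sum, sum_mul_sum, sum_mul]
  refine sum_congr rfl fun x _ => ?_
  rw [sum_mul]
  refine sum_congr rfl fun y _ => ?_
  have hexpi : expi ((x - y + s : ℤ) * k / (2 * N : ℕ))
      = expi (x * k / (2 * N : ℕ)) * expi (-(y * k / (2 * N : ℕ))) *
        expi (k * s / (2 * N : ℕ)) := by
    rw [← expi_add, ← expi_add]
    push_cast
    ring_nf
  rw [map_mul, ← expi_neg, Complex.conj_ofReal, hexpi]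
  push_cast
  ring

theorem sum_norm_balancedFourier_sq_mul_expi (hN : 0 < N) (hA : A ⊆ Ico (0 : ℤ) N) {s : ℕ}
    (hs : s ≤ N) :
    ∑ k ∈ range (2 * N), (‖balancedFourier A N k‖ ^ 2 : ℂ) * expi (k * s / (2 * N : ℕ))
      = ((2 * N * autocorrelation A N s : ℝ) : ℂ) := by
  simp_rw [norm_balancedFourier_sq_mul_expi, autocorrelation]
  rw [sum_comm, mul_sum, Complex.ofReal_sum]
  refine sum_congr rfl fun x hx => ?_
  rw [sum_comm]
  have horth : ∀ y ∈ Ico (0 : ℤ) N, ∑ k ∈ range (2 * N),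
      ((balanced A N x * balanced A N y : ℝ) : ℂ) * expi ((x - y + s : ℤ) * k / (2 * N : ℕ))
      = if y = x + s then ((2 * N * (balanced A N x * balanced A N y) : ℝ) : ℂ) else 0 := by
    intro y hy
    have hdvd : ((2 * N : ℕ) : ℤ) ∣ x - y + s ↔ y = x + s := by
      rw [mem_Ico] at hx hy
      refine ⟨fun h => ?_, fun h => by simp [h]⟩
      have := Int.eq_zero_of_abs_lt_dvd h (by rw [abs_lt]; push_cast; omega)
      omega
    rw [← mul_sum, sum_expi_int_mul_div (by omega)]
    simp only [hdvd]
    split_ifs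
    · push_cast
      ring
    · rw [mul_zero]
  rw [sum_congr rfl horth, sum_ite_eq']
  split_ifs with hxs
  · rfl
  · simp [balanced_eq_zero hA hxs]

theorem autocorrelation_zero_le (hA : A ⊆ Ico (0 : ℤ) N) : autocorrelation A N 0 ≤ #A := by
  have hterm : ∀ x ∈ Ico (0 : ℤ) N, balanced A N x * balanced A N (x + (0 : ℕ))
      = (1 - 2 * (#A / N)) * (if x ∈ A then 1 else 0) + (#A / N : ℝ) ^ 2 := by
    intro x hx
    simp only [balanced, Nat.cast_zero, add_zero, if_pos hx]
    split_ifs <;> ring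
  rw [autocorrelation, sum_congr rfl hterm, sum_add_distrib, ← mul_sum, sum_Ico_mem hA, sum_const,
    Int.card_Ico, nsmul_eq_mul, sub_zero, Int.toNat_natCast]
  rcases eq_or_ne (N : ℝ) 0 with hN | hN
  · simp [hN]
  · have hsq : (N : ℝ) * (#A / N) ^ 2 = #A / N * #A := by field_simp
    have : (0 : ℝ) ≤ #A / N * #A := by positivity
    linarith

theorem sum_norm_balancedFourier_sq_le (hN : 0 < N) (hA : A ⊆ Ico (0 : ℤ) N) :
    ∑ k ∈ range (2 * N), ‖balancedFourier A N k‖ ^ 2 ≤ 2 * N * #A := by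
  have hparseval := sum_norm_balancedFourier_sq_mul_expi hN hA (s := 0) (Nat.zero_le _)
  simp only [Nat.cast_zero, mul_zero, zero_div, expi_zero, mul_one] at hparseval
  have hreal : ∑ k ∈ range (2 * N), ‖balancedFourier A N k‖ ^ 2
      = 2 * N * autocorrelation A N 0 := by exact_mod_cast hparseval
  rw [hreal]
  exact mul_le_mul_of_nonneg_left (autocorrelation_zero_le hA) (by positivity)

theorem sum_norm_balancedFourier_sq_mul_squareSum (hN : 0 < N) (hA : A ⊆ Ico (0 : ℤ) N) {H : ℕ}
    (hH : H ^ 2 ≤ N) :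
    ∑ k ∈ range (2 * N), (‖balancedFourier A N k‖ ^ 2 : ℂ) * squareSum H (k / (2 * N : ℕ))
      = ((∑ n ∈ range H, 2 * N * autocorrelation A N ((n + 1) ^ 2) : ℝ) : ℂ) := by
  simp_rw [squareSum, mul_sum (range H)]
  rw [sum_comm, Complex.ofReal_sum]
  refine sum_congr rfl fun n hn => ?_
  have hnN : (n + 1) ^ 2 ≤ N := (Nat.pow_le_pow_left (mem_range.1 hn) 2).trans hH
  rw [← sum_norm_balancedFourier_sq_mul_expi hN hA hnN]
  refine sum_congr rfl fun k _ => ?_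
  congr 2
  push_cast
  ring

theorem le_sum_norm_balancedFourier_sq_mul_norm_squareSum (hN : 0 < N) (hA : A ⊆ Ico (0 : ℤ) N)
    (hfree : SquareDifferenceFree A) (hspread : IsSpread A N) {H : ℕ} (hH : 8 * H ^ 2 ≤ N) :
    H * #A ^ 2
      ≤ ∑ k ∈ range (2 * N), ‖balancedFourier A N k‖ ^ 2 * ‖squareSum H (k / (2 * N : ℕ))‖ := by
  have hterm : ∀ n ∈ range H, 2 * N * autocorrelation A N ((n + 1) ^ 2) ≤ -(#A ^ 2 : ℝ) := by
    intro n hn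
    have hnH : (n + 1) ^ 2 ≤ H ^ 2 := Nat.pow_le_pow_left (mem_range.1 hn) 2
    have hle := hspread.autocorrelation_le hA (s := (n + 1) ^ 2)
      (fun x hx => by exact_mod_cast hfree x hx (n + 1) n.succ_pos) (by omega)
    refine (mul_le_mul_of_nonneg_left hle (by positivity)).trans_eq ?_
    field_simp
  have hcorr := sum_le_sum hterm
  rw [sum_const, card_range, nsmul_eq_mul] at hcorr
  calc (H * #A ^ 2 : ℝ)
      ≤ ‖((∑ n ∈ range H, 2 * N * autocorrelation A N ((n + 1) ^ 2) : ℝ) : ℂ)‖ := by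
        rw [Complex.norm_real, Real.norm_eq_abs]
        exact le_trans (by linarith) (neg_le_abs _)
    _ ≤ ∑ k ∈ range (2 * N),
          ‖(‖balancedFourier A N k‖ ^ 2 : ℂ) * squareSum H (k / (2 * N : ℕ))‖ := by
        rw [← sum_norm_balancedFourier_sq_mul_squareSum hN hA (by omega)]
        exact norm_sum_le _ _
    _ = _ := by simp

theorem le_sum_filter_norm_balancedFourier_sq_mul_norm_squareSum (hN : 0 < N)
    (hA : A ⊆ Ico (0 : ℤ) N) (hfree : SquareDifferenceFree A) (hspread : IsSpread A N) {H : ℕ}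
    (hH : 8 * H ^ 2 ≤ N) :
    H * #A ^ 2 / 2
      ≤ ∑ k ∈ range (2 * N) with #A / N / 4 * H < ‖squareSum H ((k : ℕ) / (2 * N : ℕ))‖,
          ‖balancedFourier A N k‖ ^ 2 * ‖squareSum H (k / (2 * N : ℕ))‖ := by
  let S (k : ℕ) : ℝ := ‖squareSum H (k / (2 * N : ℕ))‖
  set δ : ℝ := #A / N / 4 * H
  have hδ : 0 ≤ δ := by positivity
  have hminor : ∑ k ∈ range (2 * N) with ¬ δ < S k, ‖balancedFourier A N k‖ ^ 2 * S k
      ≤ 2 * N * #A * δ := by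
    calc ∑ k ∈ range (2 * N) with ¬ δ < S k, ‖balancedFourier A N k‖ ^ 2 * S k
        ≤ ∑ k ∈ range (2 * N) with ¬ δ < S k, ‖balancedFourier A N k‖ ^ 2 * δ := by
          gcongr with k hk
          exact not_lt.1 (mem_filter.1 hk).2
      _ ≤ ∑ k ∈ range (2 * N), ‖balancedFourier A N k‖ ^ 2 * δ :=
          sum_le_sum_of_subset_of_nonneg (filter_subset _ _) fun _ _ _ => by positivity
      _ ≤ 2 * N * #A * δ := by
          rw [← sum_mul]
          gcongr
          exact sum_norm_balancedFourier_sq_le hN hA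
  have hall := le_sum_norm_balancedFourier_sq_mul_norm_squareSum hN hA hfree hspread hH
  rw [← sum_filter_add_sum_filter_not (range (2 * N)) (δ < S ·)] at hall
  have hδ' : 2 * N * #A * δ = H * #A ^ 2 / 2 := by simp only [δ]; field_simp; ring
  linarith

end Correlation

/-! ### Major arcs -/

theorem one_add_log_le_two_mul_sqrt {y : ℝ} (hy : 0 < y) : 1 + Real.log y ≤ 2 * √y := by
  have hsqrt := Real.log_le_sub_one_of_pos (Real.sqrt_pos.2 hy)
  rw [Real.log_sqrt hy.le] at hsqrt
  linarith

section MajorArc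

variable {H : ℕ} {δ θ : ℝ} {ρ : ℚ}

theorem exists_norm_squareSum_sq_le_arcBound (hH : 0 < H) (hδ : 0 ≤ δ)
    (hδH : 256 * (1 + Real.log H) ≤ δ ^ 2 * H) (hθ : δ * H < ‖squareSum H θ‖) :
    ∃ ρ : ℚ, ‖squareSum H θ‖ ^ 2 ≤ 16 * arcBound H θ ρ := by
  obtain ⟨ρ, hρ⟩ := exists_rat_norm_squareSum_sq_le θ hH
  have hlarge : (δ * H) ^ 2 ≤ ‖squareSum H θ‖ ^ 2 := by gcongr
  have herror : 128 * H * (1 + Real.log H) ≤ (δ * H) ^ 2 / 2 := by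
    linarith [mul_le_mul_of_nonneg_right hδH (Nat.cast_nonneg (α := ℝ) H)]
  exact ⟨ρ, by linarith⟩

theorem sq_mul_den_mul_arcScale_le (hδ : 0 < δ) (hθ : δ * H < ‖squareSum H θ‖)
    (hρ : ‖squareSum H θ‖ ^ 2 ≤ 16 * arcBound H θ ρ) :
    δ ^ 2 * (ρ.den * arcScale H θ ρ) ≤ 16 * (1 + Real.log (arcScale H θ ρ)) := by
  have hH : (0 : ℝ) < H := by
    refine (Nat.cast_nonneg H).lt_of_ne' fun h => ?_
    simp [squareSum, Nat.cast_eq_zero.1 h] at hθ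
  have hscale := one_pos.trans_le (one_le_arcScale H θ ρ)
  have hlarge : (δ * H) ^ 2 ≤ 16 * arcBound H θ ρ := le_trans (by gcongr) hρ
  refine le_of_mul_le_mul_right ?_ (by positivity : 0 < (H : ℝ) ^ 2)
  calc δ ^ 2 * (ρ.den * arcScale H θ ρ) * H ^ 2 = (δ * H) ^ 2 * (ρ.den * arcScale H θ ρ) := by ring
    _ ≤ 16 * arcBound H θ ρ * (ρ.den * arcScale H θ ρ) := by gcongr
    _ = 16 * (1 + Real.log (arcScale H θ ρ)) * H ^ 2 := by
      rw [arcBound]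
      field_simp

theorem sq_mul_den_le (hδ : 0 < δ) (hθ : δ * H < ‖squareSum H θ‖)
    (hρ : ‖squareSum H θ‖ ^ 2 ≤ 16 * arcBound H θ ρ) : δ ^ 2 * ρ.den ≤ 16 := by
  have hscale := one_pos.trans_le (one_le_arcScale H θ ρ)
  refine le_of_mul_le_mul_right ?_ hscale
  linarith [sq_mul_den_mul_arcScale_le hδ hθ hρ, Real.log_le_sub_one_of_pos hscale]

theorem pow_four_mul_arcScale_le (hδ : 0 < δ) (hθ : δ * H < ‖squareSum H θ‖)
    (hρ : ‖squareSum H θ‖ ^ 2 ≤ 16 * arcBound H θ ρ) : δ ^ 4 * arcScale H θ ρ ≤ 1024 := by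
  have hscale := one_pos.trans_le (one_le_arcScale H θ ρ)
  set y := arcScale H θ ρ
  have hy : √y * √y = y := Real.mul_self_sqrt hscale.le
  have hden : (1 : ℝ) ≤ ρ.den := by exact_mod_cast ρ.den_pos
  have hsqrt : δ ^ 2 * √y ≤ 32 := by
    refine le_of_mul_le_mul_right ?_ (Real.sqrt_pos.2 hscale)
    calc δ ^ 2 * √y * √y = δ ^ 2 * (1 * y) := by rw [mul_assoc, hy, one_mul]
      _ ≤ δ ^ 2 * (ρ.den * y) := by gcongr
      _ ≤ 16 * (1 + Real.log y) := sq_mul_den_mul_arcScale_le hδ hθ hρ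
      _ ≤ 32 * √y := by linarith [one_add_log_le_two_mul_sqrt hscale]
  calc δ ^ 4 * y = (δ ^ 2 * √y) ^ 2 := by rw [mul_pow, Real.sq_sqrt hscale.le]; ring
    _ ≤ 32 ^ 2 := by gcongr
    _ = 1024 := by norm_num

theorem mul_one_add_log_le_sq_mul {R : ℝ} (hδ : 1 ≤ 4 * R * δ) (hH₀ : 0 < H)
    (hH : 2 ^ 26 * R ^ 4 ≤ H) : 256 * (1 + Real.log H) ≤ δ ^ 2 * H := by
  have hsqrt : 2 ^ 13 * R ^ 2 ≤ √H := Real.le_sqrt_of_sq_le (by linarith)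
  calc 256 * (1 + Real.log H) ≤ 512 * 1 ^ 2 * √H := by
        linarith [one_add_log_le_two_mul_sqrt (y := H) (by exact_mod_cast hH₀)]
    _ ≤ 512 * (4 * R * δ) ^ 2 * √H := by gcongr
    _ = δ ^ 2 * (2 ^ 13 * R ^ 2 * √H) := by ring
    _ ≤ δ ^ 2 * (√H * √H) := by gcongr
    _ = δ ^ 2 * H := by rw [Real.mul_self_sqrt (Nat.cast_nonneg H)]

theorem exists_majorArc {R : ℕ} (hR : 0 < R) (hδ : 1 ≤ 4 * R * δ) (hH : 2 ^ 26 * R ^ 4 ≤ H)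
    (hθ : δ * H < ‖squareSum H θ‖) :
    ∃ ρ : ℚ, ‖squareSum H θ‖ ^ 2 ≤ 16 * arcBound H θ ρ ∧ ρ.den ≤ 2 ^ 8 * R ^ 2 ∧
      arcScale H θ ρ ≤ (2 ^ 18 * R ^ 4 : ℕ) := by
  have hδ₀ : 0 < δ := pos_of_mul_pos_right (one_pos.trans_le hδ) (by positivity)
  have hH₀ : 0 < H := lt_of_lt_of_le (by positivity) hH
  obtain ⟨ρ, hρ⟩ := exists_norm_squareSum_sq_le_arcBound hH₀ hδ₀.le
    (mul_one_add_log_le_sq_mul hδ hH₀ (by exact_mod_cast hH)) hθ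
  have hden : (ρ.den : ℝ) ≤ 2 ^ 8 * R ^ 2 :=
    calc (ρ.den : ℝ) ≤ (4 * R * δ) ^ 2 * ρ.den :=
          le_mul_of_one_le_left (Nat.cast_nonneg _) (one_le_pow₀ hδ)
      _ = 16 * R ^ 2 * (δ ^ 2 * ρ.den) := by ring
      _ ≤ 16 * R ^ 2 * 16 := by
          gcongr
          exact sq_mul_den_le hδ₀ hθ hρ
      _ = 2 ^ 8 * R ^ 2 := by ring
  refine ⟨ρ, hρ, by exact_mod_cast hden, ?_⟩
  calc arcScale H θ ρ ≤ (4 * R * δ) ^ 4 * arcScale H θ ρ :=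
        le_mul_of_one_le_left (zero_le_one.trans (one_le_arcScale _ _ _)) (one_le_pow₀ hδ)
    _ = 256 * R ^ 4 * (δ ^ 4 * arcScale H θ ρ) := by ring
    _ ≤ 256 * R ^ 4 * 1024 := by
        gcongr
        exact pow_four_mul_arcScale_le hδ₀ hθ hρ
    _ = (2 ^ 18 * R ^ 4 : ℕ) := by push_cast; ring

theorem abs_sub_mul_le_arcScale {N : ℕ} (hH : N ≤ 16 * H ^ 2) (θ : ℝ) (ρ : ℚ) :
    |θ - ρ| * N ≤ 4 * arcScale H θ ρ := by
  have hHR : (N : ℝ) ≤ 16 * H ^ 2 := by exact_mod_cast hH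
  rw [arcScale]
  linarith [mul_le_mul_of_nonneg_left hHR (abs_nonneg (θ - ρ))]

end MajorArc

/-- The frequencies `k / (2 * N)`, `k ∈ Γ`, lie on major arcs: `ρ k` is the centre of the arc
containing the frequency `k / (2 * N)`, the centres have denominators at most `Q`, and the rescaled
distances to the centres are at most `Y`. -/
structure IsMajorArcSystem (Γ : Finset ℕ) (N H Q Y : ℕ) (ρ : ℕ → ℚ) : Prop where
  lt : ∀ k ∈ Γ, k < 2 * N
  norm_sq_le : ∀ k ∈ Γ,
    ‖squareSum H (k / (2 * N : ℕ))‖ ^ 2 ≤ 16 * arcBound H (k / (2 * N : ℕ)) (ρ k)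
  den_le : ∀ k ∈ Γ, (ρ k).den ≤ Q
  arcScale_le : ∀ k ∈ Γ, arcScale H (k / (2 * N : ℕ)) (ρ k) ≤ Y

theorem exists_isMajorArcSystem {N H R : ℕ} {δ : ℝ} (hR : 0 < R) (hδ : 1 ≤ 4 * R * δ)
    (hH : 2 ^ 26 * R ^ 4 ≤ H) :
    ∃ ρ : ℕ → ℚ,
      IsMajorArcSystem {k ∈ range (2 * N) | δ * H < ‖squareSum H ((k : ℕ) / (2 * N : ℕ))‖}
        N H (2 ^ 8 * R ^ 2) (2 ^ 18 * R ^ 4) ρ := by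
  have harc (k : ℕ) := exists_majorArc (θ := k / (2 * N : ℕ)) hR hδ hH
  choose! ρ hnorm hden hscale using harc
  exact ⟨ρ, fun k hk => mem_range.1 (mem_filter.1 hk).1, fun k hk => hnorm k (mem_filter.1 hk).2,
    fun k hk => hden k (mem_filter.1 hk).2, fun k hk => hscale k (mem_filter.1 hk).2⟩

namespace IsMajorArcSystem

variable {A : Finset ℤ} {Γ Γ' : Finset ℕ} {N H Q Y m j : ℕ} {ρ : ℕ → ℚ}

theorem mono (h : IsMajorArcSystem Γ N H Q Y ρ) (hΓ : Γ' ⊆ Γ) : IsMajorArcSystem Γ' N H Q Y ρ :=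
  ⟨fun k hk => h.lt k (hΓ hk), fun k hk => h.norm_sq_le k (hΓ hk), fun k hk => h.den_le k (hΓ hk),
    fun k hk => h.arcScale_le k (hΓ hk)⟩

theorem sum_norm_balancedFourier_sq_le {ν : ℝ} {ℓ q : ℕ} (h : IsMajorArcSystem Γ N H Q Y ρ)
    (hN : 0 < N) (hA : A ⊆ Ico (0 : ℤ) N) (hH : N ≤ 16 * H ^ 2) (hY : 0 < Y) (hℓ : 0 < ℓ)
    (hq : q ≤ Q) (hℓN : 32 * Y * Q ^ 2 * ℓ ≤ N) (hℓν : 4 * (Q ^ 2 * ℓ : ℝ) ≤ ν * #A)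
    (hinc : HasNoIncrement A N ν (q ^ 2) ℓ) :
    ∑ k ∈ Γ with (ρ k).den = q, ‖balancedFourier A N k‖ ^ 2
      ≤ 16 * ν * #A ^ 2 := by
  have hlength : q ^ 2 * ℓ ≤ N := by
    calc q ^ 2 * ℓ ≤ 32 * Y * Q ^ 2 * ℓ :=
          Nat.mul_le_mul_right ℓ ((Nat.pow_le_pow_left hq 2).trans
            (Nat.le_mul_of_pos_left _ (by positivity)))
      _ ≤ N := hℓN
  have hedge : 4 * ((q ^ 2 : ℕ) * ℓ : ℝ) ≤ ν * #A := by
    push_cast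
    exact le_trans (by gcongr) hℓν
  refine sum_balancedFourier_sq_le_of_hasNoIncrement hN hA hℓ hlength hedge hinc
    (fun k hk => mem_range.2 (h.lt k (mem_filter.1 hk).1)) fun k hkq => ?_
  obtain ⟨hk, rfl⟩ := mem_filter.1 hkq
  refine half_le_norm_sum_expi_of_approx (ρ k) (le_of_mul_le_mul_right ?_
    (by exact_mod_cast hN : (0 : ℝ) < N))
  set t := |(k : ℝ) / (2 * N : ℕ) - ρ k|
  have ht : t * N ≤ 4 * Y :=
    (abs_sub_mul_le_arcScale hH _ _).trans (by linarith [h.arcScale_le k hk])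
  have hqR : ((ρ k).den : ℝ) ≤ Q := by exact_mod_cast hq
  have hℓNR : (32 * Y * Q ^ 2 * ℓ : ℝ) ≤ N := by exact_mod_cast hℓN
  calc t * (ρ k).den ^ 2 * ℓ * (N : ℝ) = t * N * (ρ k).den ^ 2 * ℓ := by ring
    _ ≤ 4 * (Y : ℝ) * Q ^ 2 * ℓ := by gcongr
    _ ≤ 1 / 8 * (N : ℝ) := by linarith

theorem abs_sub_mul_le (hN : 0 < N) (hH : N ≤ 16 * H ^ 2) {k : ℕ}
    (hupp : arcScale H (k / (2 * N : ℕ)) (ρ k) ≤ 2 ^ (j + 1)) :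
    |(k : ℝ) - (2 * N : ℕ) * ρ k| ≤ (2 ^ (j + 4) : ℕ) := by
  have hM : (0 : ℝ) < (2 * N : ℕ) := by positivity
  calc |(k : ℝ) - (2 * N : ℕ) * ρ k| = 2 * (|(k : ℝ) / (2 * N : ℕ) - ρ k| * N) := by
        have hscale : (k : ℝ) - (2 * N : ℕ) * ρ k = (2 * N : ℕ) * (k / (2 * N : ℕ) - ρ k) := by
          rw [mul_sub, mul_div_cancel₀ _ hM.ne']
        rw [hscale, abs_mul, abs_of_pos hM]
        push_cast
        ring
    _ ≤ 2 * (4 * 2 ^ (j + 1)) :=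
        mul_le_mul_of_nonneg_left ((abs_sub_mul_le_arcScale hH _ _).trans (by gcongr)) two_pos.le
    _ = (2 ^ (j + 4) : ℕ) := by push_cast; ring

theorem den_mul_norm_squareSum_sq_le (h : IsMajorArcSystem Γ N H Q Y ρ) {k : ℕ} (hk : k ∈ Γ)
    (hlow : 2 ^ j ≤ arcScale H (k / (2 * N : ℕ)) (ρ k)) {Λ : ℝ} (hΛ : 1 + Real.log Y ≤ Λ) :
    (ρ k).den * 2 ^ j * ‖squareSum H (k / (2 * N : ℕ))‖ ^ 2 ≤ 16 * H ^ 2 * Λ := by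
  have hscale := one_pos.trans_le (one_le_arcScale H (k / (2 * N : ℕ)) (ρ k))
  have hlog := (Real.log_le_log hscale (h.arcScale_le k hk)).trans (le_sub_iff_add_le'.2 hΛ)
  have harc := h.norm_sq_le k hk
  rw [arcBound] at harc
  set y := arcScale H (k / (2 * N : ℕ)) (ρ k)
  calc (ρ k).den * 2 ^ j * ‖squareSum H (k / (2 * N : ℕ))‖ ^ 2
      ≤ (ρ k).den * y * (16 * (H ^ 2 / (ρ k).den * (1 + Real.log y) / y)) := by gcongr
    _ = 16 * H ^ 2 * (1 + Real.log y) := by field_simp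
    _ ≤ 16 * H ^ 2 * Λ := by
        gcongr
        linarith

theorem isRationalApprox (h : IsMajorArcSystem Γ N H Q Y ρ) (hN : 0 < N) (hH : N ≤ 16 * H ^ 2)
    (hupp : ∀ k ∈ Γ, arcScale H (k / (2 * N : ℕ)) (ρ k) ≤ 2 ^ (j + 1)) :
    IsRationalApprox Γ (2 * N) (2 ^ (j + 4)) Q ρ :=
  ⟨h.lt, h.den_le, fun k hk => abs_sub_mul_le hN hH (hupp k hk)⟩

theorem sum_norm_pow_le (h : IsMajorArcSystem Γ N H Q Y ρ) (hN : 0 < N) (hH : N ≤ 16 * H ^ 2)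
    (hm : 1 ≤ m) (hQ : 1 ≤ Q) (hM : 2 * m * 2 ^ (j + 4) * Q ^ (2 * m) < 2 * N)
    (hlow : ∀ k ∈ Γ, 2 ^ j ≤ arcScale H (k / (2 * N : ℕ)) (ρ k))
    (hupp : ∀ k ∈ Γ, arcScale H (k / (2 * N : ℕ)) (ρ k) ≤ 2 ^ (j + 1))
    {Λ V : ℝ} (hΛ₀ : 0 ≤ Λ) (hΛ : 1 + Real.log Y ≤ Λ) (f : ℕ → ℂ)
    (hV : ∀ q ∈ Icc 1 Q, ∑ k ∈ Γ with (ρ k).den = q, ‖f k‖ ^ 2 ≤ V) :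
    ∑ x ∈ range (2 * N),
        ‖∑ k ∈ Γ, (‖squareSum H (k / (2 * N : ℕ))‖ * f k) * expi (k * x / (2 * N : ℕ))‖ ^ (2 * m)
      ≤ (2 * N : ℕ) * ((4 * m + 1) * (2 ^ 10 * H ^ 2 * Λ * V) ^ m *
        (1 + 2 * m * Real.log Q) ^ 2 ^ (2 * m)) := by
  have hT : 2 * 2 ^ (j + 4) + 2 < 2 ^ (j + 6) := by
    have := Nat.one_le_two_pow (n := j)
    rw [pow_add, pow_add]
    omega
  refine (h.isRationalApprox hN hH hupp).sum_norm_pow_le hm hQ hM hT _ fun q hq => ?_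
  have hterm (k : ℕ) (hkq : k ∈ Γ.filter fun k => (ρ k).den = q) :
      (q * (2 ^ (j + 6) : ℕ) : ℝ) * ‖(‖squareSum H (k / (2 * N : ℕ))‖ : ℂ) * f k‖ ^ 2
        ≤ 2 ^ 10 * H ^ 2 * Λ * ‖f k‖ ^ 2 := by
    obtain ⟨hk, rfl⟩ := mem_filter.1 hkq
    rw [norm_mul, Complex.norm_real, norm_norm, mul_pow, ← mul_assoc]
    refine mul_le_mul_of_nonneg_right ?_ (by positivity)
    have := h.den_mul_norm_squareSum_sq_le hk (hlow k hk) hΛ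
    rw [Nat.cast_pow, Nat.cast_ofNat, pow_add]
    linarith
  calc (q * (2 ^ (j + 6) : ℕ) : ℝ) * ∑ k ∈ Γ with (ρ k).den = q,
        ‖(‖squareSum H (k / (2 * N : ℕ))‖ : ℂ) * f k‖ ^ 2
      ≤ ∑ k ∈ Γ with (ρ k).den = q, 2 ^ 10 * H ^ 2 * Λ * ‖f k‖ ^ 2 := by
        rw [mul_sum]
        exact sum_le_sum hterm
    _ = 2 ^ 10 * H ^ 2 * Λ * ∑ k ∈ Γ with (ρ k).den = q, ‖f k‖ ^ 2 := (mul_sum ..).symm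
    _ ≤ 2 ^ 10 * H ^ 2 * Λ * V := by
        gcongr
        exact hV q hq

end IsMajorArcSystem

theorem sum_mul_pow_le {κ : Type*} (s : Finset κ) {w z : κ → ℝ} (hw : ∀ i ∈ s, 0 ≤ w i)
    (hz : ∀ i ∈ s, 0 ≤ z i) (n : ℕ) :
    (∑ i ∈ s, w i * z i) ^ (n + 1) ≤ (∑ i ∈ s, w i) ^ n * ∑ i ∈ s, w i * z i ^ (n + 1) := by
  rcases (sum_nonneg hw).eq_or_lt with hzero | hpos
  · have hw₀ := (sum_eq_zero_iff_of_nonneg hw).1 hzero.symm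
    have hsum (f : κ → ℝ) : ∑ i ∈ s, w i * f i = 0 :=
      sum_eq_zero fun i hi => by rw [hw₀ i hi, zero_mul]
    simp [hsum]
  · set W := ∑ i ∈ s, w i
    have hmean := Real.pow_arith_mean_le_arith_mean_pow s (fun i => w i / W) z
      (fun i hi => div_nonneg (hw i hi) hpos.le) (by rw [← sum_div, div_self hpos.ne']) hz (n + 1)
    simp_rw [div_mul_eq_mul_div] at hmean
    rw [← sum_div, ← sum_div, div_pow, div_le_div_iff₀ (by positivity) hpos] at hmean
    refine le_of_mul_le_mul_right (hmean.trans_eq ?_) hpos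
    ring

section Duality

variable {A : Finset ℤ} {N : ℕ}

theorem density_le_one (hA : A ⊆ Ico (0 : ℤ) N) : (#A / N : ℝ) ≤ 1 := by
  refine div_le_one_of_le₀ ?_ (Nat.cast_nonneg N)
  exact_mod_cast (card_le_card hA).trans_eq (by simp)

theorem sum_abs_balanced_le (hN : 0 < N) (hA : A ⊆ Ico (0 : ℤ) N) :
    ∑ x ∈ Ico (0 : ℤ) N, |balanced A N x| ≤ 2 * #A := by
  calc ∑ x ∈ Ico (0 : ℤ) N, |balanced A N x|
      ≤ ∑ x ∈ Ico (0 : ℤ) N, ((if x ∈ A then 1 else 0) + (#A / N : ℝ)) := by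
        refine sum_le_sum fun x hx => (abs_sub _ _).trans_eq ?_
        rw [if_pos hx, mul_one, abs_of_nonneg (by positivity : (0 : ℝ) ≤ #A / N)]
        split_ifs <;> simp
    _ = 2 * #A := by
        rw [sum_add_distrib, sum_Ico_mem hA]
        simp only [sum_const, Int.card_Ico, nsmul_eq_mul, sub_zero, Int.toNat_natCast]
        field_simp
        ring

theorem abs_balanced_le_one (hA : A ⊆ Ico (0 : ℤ) N) (x : ℤ) : |balanced A N x| ≤ 1 := by
  have hdensity := density_le_one hA
  have hnonneg : (0 : ℝ) ≤ #A / N := by positivity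
  rw [balanced, abs_le]
  split_ifs <;> constructor <;> linarith

theorem sum_norm_balancedFourier_sq_mul_eq (A : Finset ℤ) (N : ℕ) (Γ : Finset ℕ) (S : ℕ → ℝ) :
    ((∑ k ∈ Γ, ‖balancedFourier A N k‖ ^ 2 * S k : ℝ) : ℂ)
      = ∑ x ∈ Ico (0 : ℤ) N, (balanced A N x : ℂ) *
        ∑ k ∈ Γ, (S k * conj (balancedFourier A N k)) * expi (k * x / (2 * N : ℕ)) := by
  simp only [mul_sum]
  rw [sum_comm, Complex.ofReal_sum]
  refine sum_congr rfl fun k _ => ?_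
  calc ((‖balancedFourier A N k‖ ^ 2 * S k : ℝ) : ℂ)
      = balancedFourier A N k * (S k * conj (balancedFourier A N k)) := by
        rw [Complex.ofReal_mul, ← Complex.normSq_eq_norm_sq, ← Complex.mul_conj]
        ring
    _ = ∑ x ∈ Ico (0 : ℤ) N, balanced A N x *
          (S k * conj (balancedFourier A N k) * expi (k * x / (2 * N : ℕ))) := by
        conv_lhs => enter [1]; rw [balancedFourier]
        rw [sum_mul]
        refine sum_congr rfl fun x _ => ?_
        rw [mul_comm (x : ℝ) (k : ℝ)]
        ring

theorem sum_Ico_le_sum_range_two_mul (N : ℕ) {f : ℤ → ℝ} (hf : ∀ x, 0 ≤ f x) :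
    ∑ x ∈ Ico (0 : ℤ) N, f x ≤ ∑ x ∈ range (2 * N), f (x : ℕ) := by
  have hIco : Ico (0 : ℤ) N = (range N).image fun x : ℕ => (x : ℤ) := by
    ext x
    simp only [mem_Ico, mem_image, mem_range]
    constructor
    · exact fun hx => ⟨x.toNat, by omega, by omega⟩
    · rintro ⟨y, hy, rfl⟩
      omega
  rw [hIco, sum_image fun x _ y _ h => Int.ofNat_inj.1 h]
  exact sum_le_sum_of_subset_of_nonneg (range_subset_range.2 (by omega)) fun _ _ _ => hf _

theorem sum_norm_balancedFourier_sq_mul_pow_le (hN : 0 < N) (hA : A ⊆ Ico (0 : ℤ) N)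
    (Γ : Finset ℕ) {S : ℕ → ℝ} (hS : ∀ k, 0 ≤ S k) (n : ℕ) :
    (∑ k ∈ Γ, ‖balancedFourier A N k‖ ^ 2 * S k) ^ (n + 1)
      ≤ (2 * #A) ^ n * ∑ x ∈ range (2 * N),
        ‖∑ k ∈ Γ, (S k * conj (balancedFourier A N k)) * expi (k * x / (2 * N : ℕ))‖ ^ (n + 1) := by
  set G : ℤ → ℂ := fun x =>
    ∑ k ∈ Γ, (S k * conj (balancedFourier A N k)) * expi (k * x / (2 * N : ℕ)) with hG
  have hnonneg : 0 ≤ ∑ k ∈ Γ, ‖balancedFourier A N k‖ ^ 2 * S k :=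
    sum_nonneg fun k _ => mul_nonneg (by positivity) (hS k)
  have hdual : ∑ k ∈ Γ, ‖balancedFourier A N k‖ ^ 2 * S k
      ≤ ∑ x ∈ Ico (0 : ℤ) N, |balanced A N x| * ‖G x‖ := by
    rw [← abs_of_nonneg hnonneg, ← Real.norm_eq_abs, ← Complex.norm_real,
      sum_norm_balancedFourier_sq_mul_eq]
    refine (norm_sum_le _ _).trans_eq (sum_congr rfl fun x _ => ?_)
    rw [norm_mul, Complex.norm_real, Real.norm_eq_abs]
  calc (∑ k ∈ Γ, ‖balancedFourier A N k‖ ^ 2 * S k) ^ (n + 1)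
      ≤ (∑ x ∈ Ico (0 : ℤ) N, |balanced A N x| * ‖G x‖) ^ (n + 1) := by gcongr
    _ ≤ (∑ x ∈ Ico (0 : ℤ) N, |balanced A N x|) ^ n *
          ∑ x ∈ Ico (0 : ℤ) N, |balanced A N x| * ‖G x‖ ^ (n + 1) :=
        sum_mul_pow_le _ (fun _ _ => abs_nonneg _) (fun _ _ => norm_nonneg _) n
    _ ≤ (2 * #A) ^ n * ∑ x ∈ Ico (0 : ℤ) N, ‖G x‖ ^ (n + 1) := by
        gcongr with x
        · exact sum_abs_balanced_le hN hA
        · exact mul_le_of_le_one_left (by positivity) (abs_balanced_le_one hA x)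
    _ ≤ (2 * #A) ^ n * ∑ x ∈ range (2 * N), ‖G (x : ℤ)‖ ^ (n + 1) := by
        gcongr
        exact sum_Ico_le_sum_range_two_mul N fun x => by positivity
    _ = _ := by simp only [hG, Int.cast_natCast]

end Duality

theorem div_le_of_moment_le {N H J a B E : ℝ} {m : ℕ} (hm : 1 ≤ m) (hN : 0 < N) (hH : 0 < H)
    (hJ : 0 < J) (ha : 0 < a)
    (h : (H * a ^ 2 / 2 / J) ^ (2 * m)
      ≤ (2 * a) ^ (2 * m - 1) * (2 * N * ((2 ^ 14 * H ^ 2 * a ^ 2 * B) ^ m * E))) :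
    a / N ≤ (2 ^ 18 * J ^ 2 * B) ^ m * E := by
  have hleft : (H * a ^ 2 / 2 / J) ^ (2 * m) * (2 * J) ^ (2 * m) = (H ^ 2 * a ^ 4) ^ m := by
    rw [← mul_pow, pow_mul]
    congr 1
    field_simp
  have hpow : (2 * a) ^ (2 * m - 1) * (2 * a) = ((2 * a) ^ 2) ^ m := by
    rw [← pow_succ, Nat.sub_add_cancel (by omega), pow_mul]
  have hright : ((2 * a) ^ 2) ^ m * (2 * J) ^ (2 * m) * (2 ^ 14 * H ^ 2 * a ^ 2 * B) ^ m
      = (2 ^ 18 * J ^ 2 * B) ^ m * (H ^ 2 * a ^ 4) ^ m := by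
    rw [pow_mul, ← mul_pow, ← mul_pow, ← mul_pow]
    ring
  rw [div_le_iff₀ hN]
  refine le_of_mul_le_mul_right ?_ (by positivity : 0 < 2 * (H ^ 2 * a ^ 4) ^ m)
  calc a * (2 * (H ^ 2 * a ^ 4) ^ m)
      = (H * a ^ 2 / 2 / J) ^ (2 * m) * ((2 * J) ^ (2 * m) * (2 * a)) := by
        rw [← hleft]
        ring
    _ ≤ (2 * a) ^ (2 * m - 1) * (2 * N * ((2 ^ 14 * H ^ 2 * a ^ 2 * B) ^ m * E))
          * ((2 * J) ^ (2 * m) * (2 * a)) := by gcongr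
    _ = 2 * N * E * (((2 * a) ^ (2 * m - 1) * (2 * a)) * (2 * J) ^ (2 * m)
          * (2 ^ 14 * H ^ 2 * a ^ 2 * B) ^ m) := by ring
    _ = (2 ^ 18 * J ^ 2 * B) ^ m * E * N * (2 * (H ^ 2 * a ^ 4) ^ m) := by
        rw [hpow, hright]
        ring

theorem two_pow_log_floor_le {y : ℝ} (hy : 1 ≤ y) :
    2 ^ Nat.log 2 ⌊y⌋₊ ≤ y ∧ y ≤ 2 ^ (Nat.log 2 ⌊y⌋₊ + 1) := by
  constructor
  · calc (2 : ℝ) ^ Nat.log 2 ⌊y⌋₊ ≤ ⌊y⌋₊ := by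
          exact_mod_cast Nat.pow_log_le_self 2 (Nat.floor_pos.2 hy).ne'
      _ ≤ y := Nat.floor_le (by linarith)
  · calc y ≤ (⌊y⌋₊ + 1 : ℕ) := by exact_mod_cast (Nat.lt_floor_add_one y).le
      _ ≤ 2 ^ (Nat.log 2 ⌊y⌋₊ + 1) := by exact_mod_cast Nat.lt_pow_succ_log_self one_lt_two ⌊y⌋₊

theorem exists_dyadic_class {κ : Type*} (s : Finset κ) (w y : κ → ℝ) {Y : ℕ}
    (hy : ∀ k ∈ s, 1 ≤ y k) (hyY : ∀ k ∈ s, y k ≤ Y) :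
    ∃ j ≤ Nat.log 2 Y, ∃ u ⊆ s, (∑ k ∈ s, w k) / (Nat.log 2 Y + 1 : ℕ) ≤ ∑ k ∈ u, w k ∧
      ∀ k ∈ u, (2 : ℝ) ^ j ≤ y k ∧ y k ≤ 2 ^ (j + 1) := by
  set J := Nat.log 2 Y + 1
  have hJ : (0 : ℝ) < J := by positivity
  have hmaps : ∀ k ∈ s, Nat.log 2 ⌊y k⌋₊ ∈ range J := fun k hk =>
    mem_range.2 (Nat.lt_succ_of_le (Nat.log_mono_right (Nat.floor_le_of_le (hyY k hk))))
  have haverage : ∑ _j ∈ range J, (∑ k ∈ s, w k) / J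
      ≤ ∑ j ∈ range J, ∑ k ∈ s with Nat.log 2 ⌊y k⌋₊ = j, w k := by
    rw [sum_fiberwise_of_maps_to hmaps w, sum_const, card_range, nsmul_eq_mul,
      mul_div_cancel₀ _ hJ.ne']
  obtain ⟨j, hj, hsum⟩ :=
    exists_le_of_sum_le (nonempty_range_iff.2 (Nat.succ_ne_zero _)) haverage
  refine ⟨j, Nat.lt_succ_iff.1 (mem_range.1 hj), _, filter_subset _ s, hsum, fun k hkj => ?_⟩
  obtain ⟨hk, rfl⟩ := mem_filter.1 hkj
  exact two_pow_log_floor_le (hy k hk)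

theorem IsMajorArcSystem.density_le {A : Finset ℤ} {Γ : Finset ℕ} {N H Q Y m : ℕ} {ρ : ℕ → ℚ}
    {Λ ν : ℝ} (h : IsMajorArcSystem Γ N H Q Y ρ) (hN : 0 < N) (hA : A ⊆ Ico (0 : ℤ) N)
    (hA₀ : A.Nonempty) (hH : N ≤ 16 * H ^ 2) (hm : 1 ≤ m) (hQ : 1 ≤ Q) (hY : 0 < Y)
    (hM : 2 * m * (16 * Y) * Q ^ (2 * m) < 2 * N) (hΛ : 1 + Real.log Y ≤ Λ)
    (hν : ∀ q ∈ Icc 1 Q, ∑ k ∈ Γ with (ρ k).den = q, ‖balancedFourier A N k‖ ^ 2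
      ≤ 16 * ν * #A ^ 2)
    (hΓ : H * #A ^ 2 / 2
      ≤ ∑ k ∈ Γ, ‖balancedFourier A N k‖ ^ 2 * ‖squareSum H (k / (2 * N : ℕ))‖) :
    (#A / N : ℝ) ≤ (2 ^ 18 * (Nat.log 2 Y + 1 : ℕ) ^ 2 * (Λ * ν)) ^ m *
      ((4 * m + 1) * (1 + 2 * m * Real.log Q) ^ 2 ^ (2 * m)) := by
  obtain ⟨j, hj, u, hu, hsum, hscale⟩ := exists_dyadic_class Γ
    (fun k => ‖balancedFourier A N k‖ ^ 2 * ‖squareSum H (k / (2 * N : ℕ))‖)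
    (fun k => arcScale H (k / (2 * N : ℕ)) (ρ k)) (fun k _ => one_le_arcScale _ _ _) h.arcScale_le
  have hjY : 2 ^ (j + 4) ≤ 16 * Y := by
    have := (Nat.pow_le_pow_right two_pos hj).trans (Nat.pow_log_le_self 2 hY.ne')
    rw [pow_add]
    omega
  have hΛ₀ : 0 ≤ Λ := by linarith [Real.log_natCast_nonneg Y]
  have hmoment := (h.mono hu).sum_norm_pow_le hN hH hm hQ (lt_of_le_of_lt (by gcongr) hM)
    (fun k hk => (hscale k hk).1) (fun k hk => (hscale k hk).2) hΛ₀ hΛ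
    (fun k => conj (balancedFourier A N k)) (V := 16 * ν * #A ^ 2) fun q hq => by
      simp only [RCLike.norm_conj]
      exact (sum_le_sum_of_subset_of_nonneg (filter_subset_filter _ hu)
        fun _ _ _ => by positivity).trans (hν q hq)
  have hpower := sum_norm_balancedFourier_sq_mul_pow_le hN hA u
    (S := fun k => ‖squareSum H (k / (2 * N : ℕ))‖) (fun k => norm_nonneg _) (2 * m - 1)
  rw [Nat.sub_add_cancel (by omega : 1 ≤ 2 * m)] at hpower
  have hNR : (0 : ℝ) < N := by exact_mod_cast hN
  have hHR : (0 : ℝ) < H := by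
    have : H ≠ 0 := by rintro rfl; omega
    exact_mod_cast this.pos
  have hclass := le_trans (div_le_div_of_nonneg_right hΓ (Nat.cast_nonneg _)) hsum
  have hmean := (pow_le_pow_left₀ (by positivity) hclass (2 * m)).trans
    (hpower.trans (mul_le_mul_of_nonneg_left hmoment (by positivity)))
  refine div_le_of_moment_le hm hNR hHR (by positivity) (by exact_mod_cast hA₀.card_pos)
    (hmean.trans_eq ?_)
  push_cast
  rw [show (2 ^ 10 * H ^ 2 * Λ * (16 * ν * #A ^ 2) : ℝ)
    = 2 ^ 14 * H ^ 2 * #A ^ 2 * (Λ * ν) by ring]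
  ring

/-! ### One step of the density increment -/

section Parameters

variable {R m N ℓ : ℕ} {ν : ℝ}

theorem twenty_eight_le_log (hR : 2 ^ 41 ≤ R) : 28 ≤ Real.log R := by
  have hlog : Real.log (2 ^ 41) ≤ Real.log R :=
    Real.log_le_log (by positivity) (by exact_mod_cast hR)
  rw [Real.log_pow] at hlog
  push_cast at hlog
  linarith [Real.log_two_gt_d9]

theorem log_two_pow_mul_pow_le (hR : 2 ^ 41 ≤ R) (a b : ℕ) :
    Real.log (2 ^ a * R ^ b : ℕ) ≤ (a / 40 + b) * Real.log R := by
  have hlog := twenty_eight_le_log hR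
  have hR₀ : (R : ℝ) ^ b ≠ 0 := pow_ne_zero _ fun h => by
    norm_num [h] at hlog
  push_cast
  rw [Real.log_mul (by positivity) hR₀, Real.log_pow, Real.log_pow, add_mul,
    div_mul_eq_mul_div, mul_div_assoc]
  gcongr
  linarith [Real.log_two_lt_d9]

theorem natLog_two_pow_mul_pow_add_one_le (hR : 2 ^ 41 ≤ R) :
    ((Nat.log 2 (2 ^ 18 * R ^ 4) + 1 : ℕ) : ℝ) ≤ 8 * Real.log R := by
  have hlog := log_two_pow_mul_pow_le hR 18 4
  have hpow : ((2 ^ Nat.log 2 (2 ^ 18 * R ^ 4) : ℕ) : ℝ) ≤ (2 ^ 18 * R ^ 4 : ℕ) := by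
    exact_mod_cast Nat.pow_log_le_self 2 (by positivity)
  have hle := Real.log_le_log (by positivity) hpow
  rw [Nat.cast_pow, Real.log_pow, Nat.cast_ofNat] at hle
  have htwo := mul_le_mul_of_nonneg_left Real.log_two_gt_d9.le
    (Nat.cast_nonneg (α := ℝ) (Nat.log 2 (2 ^ 18 * R ^ 4)))
  push_cast at hlog hle ⊢
  linarith [twenty_eight_le_log hR]

/-- The bound for the density obtained by comparing the `2 * m`-th moment of the major arcs with
the `L²` mass of the balanced Fourier transform, for a set of density at least `1 / R` without
density increment by a factor `1 + ν`. -/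
noncomputable def momentFactor (R m : ℕ) (ν : ℝ) : ℝ :=
  (4 * m + 1) * (2 ^ 28 * Real.log R ^ 3 * ν) ^ m * (1 + 6 * m * Real.log R) ^ 2 ^ (2 * m)

/-- The parameters `R` (bounding the inverse density), `m` (half the order of the moment) and `ν`
(the relative gain of density) for which one step of the density increment works. -/
structure IsAdmissible (R m : ℕ) (ν : ℝ) : Prop where
  two_pow_le : 2 ^ 41 ≤ R
  pos : 0 < ν
  le_half : ν ≤ 1 / 2
  one_le_mul : 1 ≤ ν * R
  one_le : 1 ≤ m
  le : m ≤ R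
  mul_momentFactor_lt_one : R * momentFactor R m ν < 1

theorem le_momentFactor (hR : 2 ^ 41 ≤ R) (hν : 0 ≤ ν) :
    (2 ^ 18 * (Nat.log 2 (2 ^ 18 * R ^ 4) + 1 : ℕ) ^ 2 * (6 * Real.log R * ν)) ^ m *
      ((4 * m + 1) * (1 + 2 * m * Real.log (2 ^ 8 * R ^ 2 : ℕ)) ^ 2 ^ (2 * m))
      ≤ momentFactor R m ν := by
  have hlog : 0 ≤ Real.log R := Real.log_natCast_nonneg R
  have hbase : 2 ^ 18 * ((Nat.log 2 (2 ^ 18 * R ^ 4) + 1 : ℕ) : ℝ) ^ 2 * (6 * Real.log R * ν)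
      ≤ 2 ^ 28 * Real.log R ^ 3 * ν := by
    calc 2 ^ 18 * ((Nat.log 2 (2 ^ 18 * R ^ 4) + 1 : ℕ) : ℝ) ^ 2 * (6 * Real.log R * ν)
        ≤ 2 ^ 18 * (8 * Real.log R) ^ 2 * (6 * Real.log R * ν) := by
          gcongr
          exact natLog_two_pow_mul_pow_add_one_le hR
      _ = 2 ^ 18 * 8 ^ 2 * 6 * (Real.log R ^ 3 * ν) := by ring
      _ ≤ 2 ^ 28 * (Real.log R ^ 3 * ν) := by
          gcongr
          norm_num
      _ = 2 ^ 28 * Real.log R ^ 3 * ν := by ring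
  have hdivisor : 1 + 2 * m * Real.log (2 ^ 8 * R ^ 2 : ℕ) ≤ 1 + 6 * m * Real.log R := by
    have := mul_le_mul_of_nonneg_left (log_two_pow_mul_pow_le hR 8 2)
      (Nat.cast_nonneg (α := ℝ) m)
    push_cast at this ⊢
    nlinarith [mul_nonneg (Nat.cast_nonneg (α := ℝ) m) hlog]
  have := Real.log_natCast_nonneg (2 ^ 8 * R ^ 2)
  rw [momentFactor, mul_left_comm, ← mul_assoc]
  gcongr

theorem two_pow_mul_pow_four_le_sqrt (hR : 2 ^ 41 ≤ R) (hN : R ^ 16 ≤ N) :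
    2 ^ 26 * R ^ 4 ≤ Nat.sqrt (N / 8) := by
  refine Nat.le_sqrt'.2 ((Nat.le_div_iff_mul_le (by norm_num)).2 (le_trans ?_ hN))
  calc (2 ^ 26 * R ^ 4) ^ 2 * 8 = 2 ^ 55 * R ^ 8 := by ring
    _ ≤ (2 ^ 41) ^ 8 * R ^ 8 := Nat.mul_le_mul_right _ (by norm_num)
    _ ≤ R ^ 8 * R ^ 8 := Nat.mul_le_mul_right _ (Nat.pow_le_pow_left hR 8)
    _ = R ^ 16 := by ring

theorem le_sixteen_mul_sqrt_sq (hN : 3 ≤ Nat.sqrt (N / 8)) : N ≤ 16 * Nat.sqrt (N / 8) ^ 2 := by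
  have hlt : N < 8 * (Nat.sqrt (N / 8) + 1) ^ 2 := by
    have := Nat.lt_succ_sqrt' (N / 8)
    rw [Nat.succ_eq_add_one] at this
    omega
  nlinarith

theorem two_mul_mul_mul_pow_lt (hR : 2 ^ 41 ≤ R) (hm : m ≤ R) (hN : R ^ (6 * m + 10) ≤ N) :
    2 * m * (16 * (2 ^ 18 * R ^ 4)) * (2 ^ 8 * R ^ 2) ^ (2 * m) < 2 * N := by
  have hpow : (2 ^ 8 * R ^ 2) ^ (2 * m) ≤ R ^ (5 * m) := by
    rw [pow_mul, pow_mul]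
    refine Nat.pow_le_pow_left ?_ m
    calc (2 ^ 8 * R ^ 2) ^ 2 = 2 ^ 16 * R ^ 4 := by ring
      _ ≤ R * R ^ 4 := Nat.mul_le_mul_right _ (le_trans (by norm_num) hR)
      _ = R ^ 5 := by ring
  have hscale : 16 * (2 ^ 18 * R ^ 4) ≤ R ^ 5 := by
    calc 16 * (2 ^ 18 * R ^ 4) = 2 ^ 22 * R ^ 4 := by ring
      _ ≤ R * R ^ 4 := Nat.mul_le_mul_right _ (le_trans (by norm_num) hR)
      _ = R ^ 5 := by ring
  calc 2 * m * (16 * (2 ^ 18 * R ^ 4)) * (2 ^ 8 * R ^ 2) ^ (2 * m)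
      ≤ 2 * R * R ^ 5 * R ^ (5 * m) := by gcongr
    _ = 2 * R ^ (5 * m + 6) := by ring
    _ < 2 * R ^ (6 * m + 10) :=
        Nat.mul_lt_mul_of_pos_left
          (Nat.pow_lt_pow_right (lt_of_lt_of_le (by norm_num) hR) (by omega)) two_pos
    _ ≤ 2 * N := Nat.mul_le_mul_left 2 hN

theorem two_pow_mul_pow_mul_le (hR : 2 ^ 41 ≤ R) (hℓ : ℓ * R ^ 9 ≤ N) {a b : ℕ} (ha : a ≤ 41)
    (hb : b ≤ 8) : 2 ^ a * R ^ b * ℓ ≤ N := by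
  have hR₁ : 1 ≤ R := le_trans (by norm_num) hR
  calc 2 ^ a * R ^ b * ℓ ≤ R * R ^ 8 * ℓ := by
        gcongr
        exact (Nat.pow_le_pow_right two_pos ha).trans hR
    _ = ℓ * R ^ 9 := by ring
    _ ≤ N := hℓ

theorem four_mul_sq_mul_le {a : ℕ} (hR : 2 ^ 41 ≤ R) (hν : 1 ≤ ν * R) (hN : N ≤ R * a)
    (hℓ : ℓ * R ^ 9 ≤ N) : 4 * (((2 ^ 8 * R ^ 2 : ℕ) : ℝ) ^ 2 * ℓ) ≤ ν * a := by
  have hR₀ : 0 < R := lt_of_lt_of_le (by positivity) hR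
  have hle : R * (2 ^ 18 * R ^ 5 * ℓ) ≤ R * a :=
    (le_of_eq (by ring)).trans ((two_pow_mul_pow_mul_le hR hℓ (a := 18) (b := 6) (by norm_num)
      (by norm_num)).trans hN)
  have ha : ((2 ^ 18 * R ^ 5 * ℓ : ℕ) : ℝ) ≤ a := by
    exact_mod_cast le_of_mul_le_mul_left hle hR₀
  refine le_of_mul_le_mul_left ?_ (Nat.cast_pos.2 hR₀ : (0 : ℝ) < R)
  calc (R : ℝ) * (4 * (((2 ^ 8 * R ^ 2 : ℕ) : ℝ) ^ 2 * ℓ)) = (2 ^ 18 * R ^ 5 * ℓ : ℕ) := by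
        push_cast
        ring
    _ ≤ (a : ℝ) := ha
    _ ≤ ν * R * a := le_mul_of_one_le_left (Nat.cast_nonneg a) hν
    _ = R * (ν * a) := by ring

end Parameters

section Increment

variable {A : Finset ℤ} {N R m ℓ : ℕ} {ν : ℝ}

theorem IsMajorArcSystem.density_le_momentFactor {Γ : Finset ℕ} {H : ℕ} {ρ : ℕ → ℚ}
    (h : IsMajorArcSystem Γ N H (2 ^ 8 * R ^ 2) (2 ^ 18 * R ^ 4) ρ) (hR : IsAdmissible R m ν)
    (hA : A ⊆ Ico (0 : ℤ) N) (hA₀ : A.Nonempty) (hN : R ^ (6 * m + 10) ≤ N) (hAN : N ≤ R * #A)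
    (hH : N ≤ 16 * H ^ 2) (hℓ : 0 < ℓ) (hℓN : ℓ * R ^ 9 ≤ N)
    (hinc : ∀ q > 0, HasNoIncrement A N ν (q ^ 2) ℓ)
    (hΓ : H * #A ^ 2 / 2
      ≤ ∑ k ∈ Γ, ‖balancedFourier A N k‖ ^ 2 * ‖squareSum H (k / (2 * N : ℕ))‖) :
    (#A / N : ℝ) ≤ momentFactor R m ν := by
  have hR₀ : 0 < R := lt_of_lt_of_le (by positivity) hR.two_pow_le
  have hN₀ : 0 < N := lt_of_lt_of_le (by positivity) hN
  have hlogY := log_two_pow_mul_pow_le hR.two_pow_le 18 4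
  refine (h.density_le (Λ := 6 * Real.log R) (ν := ν) hN₀ hA hA₀ hH hR.one_le
    (Nat.succ_le_of_lt (by positivity)) (by positivity)
    (two_mul_mul_mul_pow_lt hR.two_pow_le hR.le hN) ?_ (fun q hq => ?_) hΓ).trans
    (le_momentFactor hR.two_pow_le hR.pos.le)
  · push_cast at hlogY ⊢
    linarith [twenty_eight_le_log hR.two_pow_le]
  · obtain ⟨hq₀, hqQ⟩ := mem_Icc.1 hq
    refine h.sum_norm_balancedFourier_sq_le hN₀ hA hH (by positivity) hℓ hqQ ?_
      (four_mul_sq_mul_le hR.two_pow_le hR.one_le_mul hAN hℓN) (hinc q hq₀)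
    refine le_trans (le_of_eq ?_)
      (two_pow_mul_pow_mul_le hR.two_pow_le hℓN (a := 39) (b := 8) (by norm_num) le_rfl)
    ring

theorem density_le_momentFactor (hA : A ⊆ Ico (0 : ℤ) N) (hfree : SquareDifferenceFree A)
    (hR : IsAdmissible R m ν) (hN : R ^ (6 * m + 10) ≤ N) (hAN : N ≤ R * #A) (hℓ : 0 < ℓ)
    (hℓN : ℓ * R ^ 9 ≤ N) (hinc : ∀ q > 0, HasNoIncrement A N ν (q ^ 2) ℓ) :
    (#A / N : ℝ) ≤ momentFactor R m ν := by
  have hR₀ : 0 < R := lt_of_lt_of_le (by positivity) hR.two_pow_le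
  have hN₀ : 0 < N := lt_of_lt_of_le (by positivity) hN
  have hA₀ : A.Nonempty := card_pos.1 (Nat.pos_of_mul_pos_left (hN₀.trans_le hAN))
  have hspread : IsSpread A N := by
    refine HasNoIncrement.isSpread (by simpa using hinc 1 one_pos) hR.le_half hℓ ?_
    exact (Nat.mul_le_mul_right ℓ (by norm_num)).trans
      (two_pow_mul_pow_mul_le hR.two_pow_le hℓN (a := 7) (b := 0) (by norm_num) (by norm_num))
  have hH := two_pow_mul_pow_four_le_sqrt hR.two_pow_le
    ((Nat.pow_le_pow_right hR₀ (by linarith [hR.one_le])).trans hN)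
  have hH₃ : 3 ≤ Nat.sqrt (N / 8) := le_trans (by linarith [Nat.pow_pos (n := 4) hR₀]) hH
  have hδ : 1 ≤ 4 * R * (#A / N / 4 : ℝ) := by
    have : (N : ℝ) ≤ R * #A := by exact_mod_cast hAN
    rw [show 4 * R * (#A / N / 4 : ℝ) = R * #A / N by ring]
    exact (one_le_div (by exact_mod_cast hN₀)).2 this
  obtain ⟨ρ, hρ⟩ := exists_isMajorArcSystem hR₀ hδ hH
  refine hρ.density_le_momentFactor hR hA hA₀ hN hAN (le_sixteen_mul_sqrt_sq hH₃) hℓ hℓN hinc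
    (le_sum_filter_norm_balancedFourier_sq_mul_norm_squareSum hN₀ hA hfree hspread ?_)
  have := Nat.sqrt_le' (N / 8)
  omega

theorem exists_lt_progressionCount (hA : A ⊆ Ico (0 : ℤ) N) (hfree : SquareDifferenceFree A)
    (hR : IsAdmissible R m ν) (hN : R ^ (6 * m + 10) ≤ N) (hAN : N ≤ R * #A) (hℓ : 0 < ℓ)
    (hℓN : ℓ * R ^ 9 ≤ N) :
    ∃ q > 0, ∃ y, (1 + ν) * (#A / N) * ℓ < progressionCount A (q ^ 2) ℓ y := by
  by_contra! hinc
  have hdensity := density_le_momentFactor hA hfree hR hN hAN hℓ hℓN hinc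
  have hN₀ : (0 : ℝ) < N := by
    have := hR.two_pow_le
    exact_mod_cast lt_of_lt_of_le (by positivity) hN
  have hone : 1 ≤ R * (#A / N : ℝ) := by
    rw [← mul_div_assoc, one_le_div hN₀]
    exact_mod_cast hAN
  exact (hone.trans (mul_le_mul_of_nonneg_left hdensity (Nat.cast_nonneg R))).not_gt
    hR.mul_momentFactor_lt_one

end Increment

/-! ### The iteration -/

/-- The set `A ∩ {y, y + d, …, y + (ℓ - 1) * d}`, rescaled to a subset of `{0, …, ℓ - 1}`. -/
noncomputable def progressionSlice (A : Finset ℤ) (d ℓ : ℕ) (y : ℤ) : Finset ℤ :=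
  {x ∈ Ico (0 : ℤ) ℓ | y + d * x ∈ A}

section Iteration

variable {A : Finset ℤ} {N R m ℓ s : ℕ} {ν : ℝ}

theorem card_progressionSlice (A : Finset ℤ) (d ℓ : ℕ) (y : ℤ) :
    #(progressionSlice A d ℓ y) = progressionCount A d ℓ y := by
  have himage : progressionSlice A d ℓ y
      = {t ∈ range ℓ | y + d * (t : ℕ) ∈ A}.image fun t : ℕ => (t : ℤ) := by
    ext x
    simp only [progressionSlice, mem_filter, mem_Ico, mem_image, mem_range]
    constructor
    · rintro ⟨⟨hx₀, hx⟩, hxA⟩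
      lift x to ℕ using hx₀
      exact ⟨x, ⟨by exact_mod_cast hx, hxA⟩, rfl⟩
    · rintro ⟨t, ⟨ht, htA⟩, rfl⟩
      exact ⟨⟨by positivity, by exact_mod_cast ht⟩, htA⟩
  rw [himage, card_image_of_injective _ Nat.cast_injective, progressionCount]

theorem SquareDifferenceFree.progressionSlice (hfree : SquareDifferenceFree A) {q : ℕ} (hq : 0 < q)
    (ℓ : ℕ) (y : ℤ) : SquareDifferenceFree (progressionSlice A (q ^ 2) ℓ y) := by
  intro x hx n hn hxn
  refine hfree _ (mem_filter.1 hx).2 (q * n) (by positivity) ?_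
  convert (mem_filter.1 hxn).2 using 1
  push_cast
  ring

theorem exists_density_increment (hA : A ⊆ Ico (0 : ℤ) N) (hfree : SquareDifferenceFree A)
    (hR : IsAdmissible R m ν) (hN : R ^ (6 * m + 10) ≤ N) (hAN : N ≤ R * #A) (hℓ : 0 < ℓ)
    (hℓN : ℓ * R ^ 9 ≤ N) :
    ∃ B ⊆ Ico (0 : ℤ) ℓ, SquareDifferenceFree B ∧ (1 + ν) * (#A / N) * ℓ ≤ #B := by
  obtain ⟨q, hq, y, hy⟩ := exists_lt_progressionCount hA hfree hR hN hAN hℓ hℓN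
  refine ⟨progressionSlice A (q ^ 2) ℓ y, filter_subset _ _, hfree.progressionSlice hq ℓ y, ?_⟩
  rw [card_progressionSlice]
  exact hy.le

theorem one_add_pow_mul_card_le (hR : IsAdmissible R m ν) (hA : A ⊆ Ico (0 : ℤ) N)
    (hfree : SquareDifferenceFree A) (hN : R ^ (6 * m + 10) * (R ^ 9) ^ s ≤ N)
    (hAN : N ≤ R * #A) : (1 + ν) ^ s * #A ≤ N := by
  have hR₀ : 0 < R := lt_of_lt_of_le (by positivity) hR.two_pow_le
  have hν := hR.pos
  induction s generalizing N A with
  | zero =>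
    rw [pow_zero, one_mul]
    exact_mod_cast (card_le_card hA).trans_eq (by simp)
  | succ s ih =>
    set ℓ := N / R ^ 9
    have hℓ : R ^ (6 * m + 10) * (R ^ 9) ^ s ≤ ℓ := by
      rw [Nat.le_div_iff_mul_le (by positivity), mul_assoc, ← pow_succ]
      exact hN
    have hℓ₀ : 0 < ℓ := lt_of_lt_of_le (by positivity) hℓ
    have hNR : (0 : ℝ) < N := by exact_mod_cast lt_of_lt_of_le (by positivity) hN
    obtain ⟨B, hB, hBfree, hcard⟩ := exists_density_increment hA hfree hR
      (le_trans (Nat.le_mul_of_pos_right _ (by positivity)) hN) hAN hℓ₀ (Nat.div_mul_le_self N _)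
    have hBℓ : (ℓ : ℝ) ≤ R * #B := by
      have hdensity : (1 : ℝ) ≤ R * #A / N := (one_le_div hNR).2 (by exact_mod_cast hAN)
      calc (ℓ : ℝ) = 1 * 1 * ℓ := by ring
        _ ≤ (1 + ν) * (R * #A / N) * ℓ := by
            gcongr
            linarith
        _ = R * ((1 + ν) * (#A / N) * ℓ) := by ring
        _ ≤ R * #B := by gcongr
    have hℓR : (0 : ℝ) < ℓ := by exact_mod_cast hℓ₀
    refine (div_le_one hNR).1 (le_of_mul_le_mul_right ?_ hℓR)
    calc (1 + ν) ^ (s + 1) * #A / N * ℓ = (1 + ν) ^ s * ((1 + ν) * (#A / N) * ℓ) := by ring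
      _ ≤ (1 + ν) ^ s * #B := by gcongr
      _ ≤ ℓ := ih hB hBfree hℓ (by exact_mod_cast hBℓ)
      _ = 1 * ℓ := (one_mul _).symm

theorem mul_card_lt_of_lt_one_add_pow (hR : IsAdmissible R m ν) (hs : R < (1 + ν) ^ s)
    (hA : A ⊆ Ico (0 : ℤ) N) (hfree : SquareDifferenceFree A)
    (hN : R ^ (6 * m + 10) * (R ^ 9) ^ s ≤ N) : R * #A < N := by
  by_contra! hAN
  have hR₀ : 0 < R := lt_of_lt_of_le (by positivity) hR.two_pow_le
  have hN₀ : 0 < N := lt_of_lt_of_le (by positivity) hN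
  have hA₀ : (0 : ℝ) < #A := by exact_mod_cast Nat.pos_of_mul_pos_left (hN₀.trans_le hAN)
  have hupper := one_add_pow_mul_card_le hR hA hfree hN hAN
  have hlower : (N : ℝ) ≤ R * #A := by exact_mod_cast hAN
  exact ((mul_lt_mul_of_pos_right hs hA₀).trans_le hupper).not_ge hlower

end Iteration

/-! ### Choice of parameters -/

theorem two_pow_le_exp (n : ℕ) : (2 : ℝ) ^ n ≤ Real.exp n := by
  rw [← mul_one (n : ℝ), Real.exp_nat_mul]
  exact pow_le_pow_left₀ zero_le_two (by linarith [Real.add_one_le_exp (1 : ℝ)]) n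

theorem exp_natCast_mul_log {l : ℝ} (hl : 0 < l) (n : ℕ) : Real.exp (n * Real.log l) = l ^ n := by
  rw [Real.exp_nat_mul, Real.exp_log hl]

section MomentFactor

variable {l : ℝ} {R m : ℕ}

theorem pow_log_cube_mul_exp_le (hl : 0 < l) (hR : Real.log R ≤ l ^ 2) (m : ℕ) :
    (2 ^ 28 * Real.log R ^ 3 * Real.exp (-l / 2)) ^ m
      ≤ Real.exp (m * (28 + 6 * Real.log l - l / 2)) := by
  rw [Real.exp_nat_mul]
  refine pow_le_pow_left₀ (by positivity) ?_ m
  calc 2 ^ 28 * Real.log R ^ 3 * Real.exp (-l / 2)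
      ≤ Real.exp (28 : ℕ) * (l ^ 2) ^ 3 * Real.exp (-l / 2) := by
        gcongr
        exact two_pow_le_exp 28
    _ = Real.exp (28 : ℕ) * Real.exp ((6 : ℕ) * Real.log l) * Real.exp (-l / 2) := by
        rw [exp_natCast_mul_log hl, ← pow_mul]
    _ = Real.exp (28 + 6 * Real.log l - l / 2) := by
        rw [← Real.exp_add, ← Real.exp_add]
        push_cast
        ring_nf

theorem one_add_six_mul_pow_two_pow_le (hl : 3 ≤ l) (hR : Real.log R ≤ l ^ 2)
    (hm : m ≤ Real.log l / 4) :
    (1 + 6 * m * Real.log R) ^ 2 ^ (2 * m) ≤ Real.exp (√l * (4 * Real.log l)) := by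
  have hl₀ : 0 < l := by linarith
  have hlog : 0 ≤ Real.log l := Real.log_nonneg (by linarith)
  have hexponent : ((2 ^ (2 * m) : ℕ) : ℝ) ≤ √l := by
    calc ((2 ^ (2 * m) : ℕ) : ℝ) ≤ Real.exp (2 * m : ℕ) := by
          exact_mod_cast two_pow_le_exp (2 * m)
      _ ≤ Real.exp (Real.log l / 2) := by
          gcongr
          push_cast
          linarith
      _ = √l := by rw [Real.exp_half, Real.exp_log hl₀]
  have hbase : 1 + 6 * m * Real.log R ≤ Real.exp (4 * Real.log l) := by
    calc 1 + 6 * m * Real.log R ≤ 1 + 6 * (l / 4) * l ^ 2 := by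
          gcongr
          linarith [Real.log_le_sub_one_of_pos hl₀]
      _ ≤ l ^ 4 := by nlinarith [pow_pos hl₀ 3]
      _ = Real.exp (4 * Real.log l) := (exp_natCast_mul_log hl₀ 4).symm
  calc (1 + 6 * m * Real.log R) ^ 2 ^ (2 * m)
      ≤ Real.exp (4 * Real.log l) ^ 2 ^ (2 * m) := pow_le_pow_left₀ (by positivity) hbase _
    _ = Real.exp ((2 ^ (2 * m) : ℕ) * (4 * Real.log l)) := (Real.exp_nat_mul _ _).symm
    _ ≤ Real.exp (√l * (4 * Real.log l)) := by gcongr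

theorem momentFactor_exp_le (hl : 3 ≤ l) (hR : Real.log R ≤ l ^ 2) (hm : m ≤ Real.log l / 4) :
    momentFactor R m (Real.exp (-l / 2)) ≤ Real.exp (Real.log l
      + m * (28 + 6 * Real.log l - l / 2) + √l * (4 * Real.log l)) := by
  rw [momentFactor, Real.exp_add, Real.exp_add]
  gcongr
  · linarith [Real.add_one_le_exp (Real.log l)]
  · exact pow_log_cube_mul_exp_le (by linarith) hR m
  · exact one_add_six_mul_pow_two_pow_le hl hR hm

theorem log_le_of_le_exp {x : ℝ} (hR₁ : 1 ≤ R) (hR : R ≤ Real.exp x) : Real.log R ≤ x :=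
  (Real.log_le_iff_le_exp (by exact_mod_cast hR₁)).2 hR

theorem log_le_sq_of_le_exp (hl : 0 < l) (hR₁ : 1 ≤ R)
    (hR : R ≤ Real.exp (l * Real.log l / 32)) : Real.log R ≤ l ^ 2 := by
  have hlog := mul_le_mul_of_nonneg_left (Real.log_le_self hl.le) hl.le
  nlinarith [log_le_of_le_exp hR₁ hR]

theorem mul_momentFactor_exp_lt_one (hl : 10 ^ 6 ≤ l) (hR₁ : 1 ≤ R)
    (hR : R ≤ Real.exp (l * Real.log l / 32)) (hm : m ≤ Real.log l / 4)
    (hm' : Real.log l / 8 ≤ m) : R * momentFactor R m (Real.exp (-l / 2)) < 1 := by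
  have hl₀ : 0 < l := by linarith
  have hlog : 0 < Real.log l := Real.log_pos (by linarith)
  have hsqrt : 1000 ≤ √l := Real.le_sqrt_of_sq_le (by linarith)
  have hdominates : 8 + 3 / 2 * Real.log l + 4 * √l < l / 32 := by
    nlinarith [one_add_log_le_two_mul_sqrt hl₀, Real.mul_self_sqrt hl₀.le]
  calc R * momentFactor R m (Real.exp (-l / 2))
      ≤ Real.exp (l * Real.log l / 32) * Real.exp (Real.log l
          + m * (28 + 6 * Real.log l - l / 2) + √l * (4 * Real.log l)) :=
        (mul_le_mul_of_nonneg_left (momentFactor_exp_le (by linarith)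
          (log_le_sq_of_le_exp hl₀ hR₁ hR) hm) (Nat.cast_nonneg R)).trans
          (mul_le_mul_of_nonneg_right hR (Real.exp_pos _).le)
    _ = Real.exp (l * Real.log l / 32 + Real.log l + m * (28 + 6 * Real.log l) - m * (l / 2)
          + √l * (4 * Real.log l)) := by
        rw [← Real.exp_add]
        ring_nf
    _ ≤ Real.exp (l * Real.log l / 32 + Real.log l + Real.log l / 4 * (28 + 6 * Real.log l)
          - Real.log l / 8 * (l / 2) + √l * (4 * Real.log l)) := by gcongr
    _ = Real.exp (Real.log l * (8 + 3 / 2 * Real.log l + 4 * √l - l / 32)) := by ring_nf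
    _ < 1 := Real.exp_lt_one_iff.2 (mul_neg_of_pos_of_neg hlog (by linarith))

theorem isAdmissible_exp (hl : 10 ^ 6 ≤ l) (hlog : 32 ≤ Real.log l)
    (hR : Real.exp (l * Real.log l / 64) ≤ R) (hR' : R ≤ Real.exp (l * Real.log l / 32))
    (hm : m ≤ Real.log l / 4) (hm' : Real.log l / 8 ≤ m) :
    IsAdmissible R m (Real.exp (-l / 2)) := by
  have hhalf : Real.exp (l / 2) ≤ R := (Real.exp_le_exp.2 (by nlinarith)).trans hR
  have hinv : Real.exp (-l / 2) * Real.exp (l / 2) = 1 := by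
    rw [← Real.exp_add, neg_div, neg_add_cancel, Real.exp_zero]
  have hlR : l / 2 + 1 ≤ R := (Real.add_one_le_exp _).trans hhalf
  refine ⟨?_, Real.exp_pos _, ?_, ?_, ?_, ?_, mul_momentFactor_exp_lt_one hl ?_ hR' hm hm'⟩
  · have : (2 : ℝ) ^ 41 ≤ R :=
      (two_pow_le_exp 41).trans ((Real.exp_le_exp.2 (by push_cast; linarith)).trans hhalf)
    exact_mod_cast this
  · nlinarith [Real.add_one_le_exp (l / 2), Real.exp_pos (-l / 2)]
  · rw [← hinv]
    gcongr
  · have : (0 : ℝ) < m := by linarith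
    exact_mod_cast this
  · have : (m : ℝ) ≤ R := by linarith [Real.log_le_self (by linarith : 0 ≤ l)]
    exact_mod_cast this
  · have : (1 : ℝ) ≤ R := by linarith
    exact_mod_cast this

end MomentFactor

theorem natCeil_exp_le {x : ℝ} (hx : 1 ≤ x) : ⌈Real.exp x⌉₊ ≤ Real.exp (2 * x) := by
  have hceil := Nat.ceil_lt_add_one (Real.exp_pos x).le
  rw [two_mul, Real.exp_add]
  nlinarith [Real.add_one_le_exp x]

theorem pow_mul_pow_le_of_log_le {N R a b : ℕ} (hN : 0 < N) (hR : 0 < R)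
    (h : (a + 9 * b) * Real.log R ≤ Real.log N) : R ^ a * (R ^ 9) ^ b ≤ N := by
  have hcast : ((R ^ a * (R ^ 9) ^ b : ℕ) : ℝ) ≤ N := by
    rw [← Real.log_le_log_iff (by positivity) (by positivity), ← pow_mul, ← pow_add,
      Nat.cast_pow, Real.log_pow]
    exact_mod_cast h
  exact_mod_cast hcast

theorem lt_one_add_pow {x ν : ℝ} {s : ℕ} (hx : 0 < x) (hν₀ : 0 < ν) (hν : ν ≤ 1)
    (hs : 2 * Real.log x / ν < s) : x < (1 + ν) ^ s := by
  have hlog : ν / 2 ≤ Real.log (1 + ν) := by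
    refine le_trans ?_ (Real.one_sub_inv_le_log_of_pos (by linarith))
    calc ν / 2 ≤ ν / (1 + ν) := by
          gcongr
          linarith
      _ = 1 - (1 + ν)⁻¹ := by
          field_simp
          ring
  rw [← Real.log_lt_log_iff hx (by positivity), Real.log_pow]
  rw [div_lt_iff₀ hν₀] at hs
  nlinarith [Nat.cast_nonneg (α := ℝ) s]

theorem two_hundred_mul_pow_four_le_exp {l : ℝ} (hl : 10 ^ 6 ≤ l) :
    200 * l ^ 4 ≤ Real.exp (l / 2) := by
  calc 200 * l ^ 4 ≤ l / 3840 * l ^ 4 := by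
        gcongr
        linarith
    _ = (l / 2) ^ 5 / Nat.factorial 5 := by
        norm_num [Nat.factorial]
        ring
    _ ≤ Real.exp (l / 2) := Real.pow_div_factorial_le_exp _ (by linarith) 5

theorem exponent_mul_le_exp {l L m s : ℝ} (hl : 10 ^ 6 ≤ l) (hL₀ : 0 ≤ L) (hL : L ≤ l ^ 2)
    (hm : m ≤ l) (hs : s ≤ 2 * L * Real.exp (l / 2) + 1) :
    (6 * m + 10 + 9 * s) * L ≤ Real.exp l := by
  have hone : 1 ≤ Real.exp (l / 2) := Real.one_le_exp (by linarith)
  have hexponent : 6 * m + 10 + 9 * s ≤ 200 * l ^ 2 * Real.exp (l / 2) := by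
    have hsq : l ≤ l ^ 2 := le_self_pow₀ (by linarith) two_ne_zero
    have hsq_exp : l ^ 2 ≤ l ^ 2 * Real.exp (l / 2) := le_mul_of_one_le_right (by positivity) hone
    have hmain : 2 * L * Real.exp (l / 2) ≤ 2 * l ^ 2 * Real.exp (l / 2) := by gcongr
    linarith
  calc (6 * m + 10 + 9 * s) * L ≤ 200 * l ^ 2 * Real.exp (l / 2) * l ^ 2 := by gcongr
    _ = 200 * l ^ 4 * Real.exp (l / 2) := by ring
    _ ≤ Real.exp (l / 2) * Real.exp (l / 2) := by
        gcongr
        exact two_hundred_mul_pow_four_le_exp hl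
    _ = Real.exp l := by rw [← Real.exp_add, add_halves]

theorem SquareDifferenceFree.card_le_div_exp {N : ℕ} {A : Finset ℤ} {l : ℝ}
    (hfree : SquareDifferenceFree A) (hA : A ⊆ Ico (0 : ℤ) N) (hl : 10 ^ 6 ≤ l)
    (hlog : 32 ≤ Real.log l) (hN : Real.log N = Real.exp l) :
    (#A : ℝ) ≤ N / Real.exp (l * Real.log l / 64) := by
  set R := ⌈Real.exp (l * Real.log l / 64)⌉₊
  set m := ⌊Real.log l / 4⌋₊
  set ν := Real.exp (-l / 2) with hν
  set s := ⌊2 * Real.log R / ν⌋₊ + 1 with hs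
  have hER : Real.exp (l * Real.log l / 64) ≤ R := Nat.le_ceil _
  have hRE : R ≤ Real.exp (l * Real.log l / 32) :=
    (natCeil_exp_le (by nlinarith)).trans_eq (by ring_nf)
  have hm : (m : ℝ) ≤ Real.log l / 4 := Nat.floor_le (by linarith)
  have hm' : Real.log l / 8 ≤ m := by linarith [Nat.lt_floor_add_one (Real.log l / 4)]
  have hR := isAdmissible_exp hl hlog hER hRE hm hm'
  have hR₀ : 0 < R := lt_of_lt_of_le (by positivity) hR.two_pow_le
  have hN₀ : 0 < N := Nat.pos_of_ne_zero fun h => by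
    simp [h, (Real.exp_pos l).ne] at hN
  have hslow : 2 * Real.log R / ν < s := by
    rw [hs, Nat.cast_succ]
    exact Nat.lt_floor_add_one _
  have hsup : (s : ℝ) ≤ 2 * Real.log R * Real.exp (l / 2) + 1 := by
    rw [hs, Nat.cast_succ]
    gcongr
    refine (Nat.floor_le (by positivity)).trans_eq ?_
    rw [div_eq_mul_inv, hν, ← Real.exp_neg, neg_div, neg_neg]
  have hsize : (((6 * m + 10 : ℕ) : ℝ) + 9 * s) * Real.log R ≤ Real.log N := by
    rw [hN]
    push_cast
    exact exponent_mul_le_exp hl (Real.log_natCast_nonneg R)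
      (log_le_sq_of_le_exp (by linarith) hR₀ hRE)
      (by linarith [Real.log_le_self (by linarith : 0 ≤ l)]) hsup
  have hlt := mul_card_lt_of_lt_one_add_pow hR
    (lt_one_add_pow (by positivity) hR.pos (by linarith [hR.le_half]) hslow) hA hfree
    (pow_mul_pow_le_of_log_le hN₀ hR₀ hsize)
  have hle : (R : ℝ) * #A ≤ N := by exact_mod_cast hlt.le
  rw [le_div_iff₀ (Real.exp_pos _), mul_comm]
  exact (mul_le_mul_of_nonneg_right hER (Nat.cast_nonneg _)).trans hle

theorem NoSquareDiff.squareDifferenceFree_image {A : Finset ℕ} (hA : NoSquareDiff A) :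
    SquareDifferenceFree (A.image fun a : ℕ => (a : ℤ) - 1) := by
  intro x hx n hn hxn
  obtain ⟨b, hb, rfl⟩ := mem_image.1 hx
  obtain ⟨a, ha, hab⟩ := mem_image.1 hxn
  refine hA a ha b hb n hn ?_
  zify
  linarith

theorem NoSquareDiff.card_le_div_exp {N : ℕ} {A : Finset ℕ} {l : ℝ} (hfree : NoSquareDiff A)
    (hA : A ⊆ Icc 1 N) (hl : 10 ^ 6 ≤ l) (hlog : 32 ≤ Real.log l)
    (hN : Real.log N = Real.exp l) : (#A : ℝ) ≤ N / Real.exp (l * Real.log l / 64) := by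
  have hinj : Function.Injective fun a : ℕ => (a : ℤ) - 1 := fun a b hab => by
    simpa using hab
  rw [← card_image_of_injective A hinj]
  refine hfree.squareDifferenceFree_image.card_le_div_exp (fun x hx => ?_) hl hlog hN
  obtain ⟨a, ha, rfl⟩ := mem_image.1 hx
  have := mem_Icc.1 (hA ha)
  exact mem_Ico.2 ⟨by omega, by omega⟩

theorem statement_0 :
    ∃ c > (0 : ℝ), ∃ C > (0 : ℝ), ∃ N₀ : ℕ, ∀ N : ℕ, N₀ ≤ N →
      ∀ A : Finset ℕ, A ⊆ Finset.Icc 1 N → NoSquareDiff A →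
        (A.card : ℝ) ≤ C * N / (Real.log N) ^ (c * Real.log (Real.log (Real.log N))) := by
  have hlog : Filter.Tendsto (fun N : ℕ => Real.log (Real.log N)) Filter.atTop Filter.atTop :=
    Real.tendsto_log_atTop.comp (Real.tendsto_log_atTop.comp tendsto_natCast_atTop_atTop)
  obtain ⟨N₀, hN₀⟩ := Filter.eventually_atTop.1 ((hlog.eventually_ge_atTop (10 ^ 6)).and
    ((Real.tendsto_log_atTop.comp hlog).eventually_ge_atTop 32))
  refine ⟨1 / 64, by norm_num, 1, one_pos, N₀, fun N hN A hA hfree => ?_⟩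
  obtain ⟨hl, hv⟩ := hN₀ N hN
  have hpos : 0 < Real.log N := (Real.log_natCast_nonneg N).lt_of_ne fun h => by
    norm_num [← h] at hl
  refine (hfree.card_le_div_exp hA hl hv (Real.exp_log hpos).symm).trans_eq ?_
  rw [one_mul, Real.rpow_def_of_pos hpos]
  ring_nf
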